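/- arXiv:2106.13313 — 3 statements merged into one kernel-verified Lean document; each statement's English description precedes it below -/
import Mathlib

section
/- Fix λ > 0. The infimum inf{ ½ ‖ρ‖²_{L²([0,2λ]×ℝ)} : ρ ∈ L²([0,2λ]×ℝ), Z(ρ; 2λ, 0) ≥ (4πλ)^{-1/2} e^λ } is attained: there exists ρ ∈ L²([0,2λ]×ℝ) with Z(ρ; 2λ, 0) ≥ (4πλ)^{-1/2} e^λ and ½ ‖ρ‖²_{L²([0,2λ]×ℝ)} equal to the infimum. In other words, the set K_λ of minimizers is non-empty. -/
/-!
A minimizer is produced by the direct method of the calculus of variations in the Hilbert space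
`L²(ℝ × ℝ)`.

*Reduction to nonnegative potentials.* An admissible `σ` is only known to have an integrable square,
so `σ` itself need not be measurable. Replacing `σ` on the strip by a measurable version `f` of `|σ|`
and by `0` elsewhere keeps the norm and does not decrease `Zsol` (`exists_measurable_modulus`,
`Zsol_le_of_modulus`). For nonnegative measurable `f` the Duhamel terms are nonnegative Lebesgue
integrals over space-time, the iterates `duh`; the time ordering is automatic since the heat kernel
vanishes at nonpositive times.

*Uniform bounds.* The square of the heat kernel satisfies
`∫ p(r,z)² p(t-r,y-z)² dz ≤ p(t,y)² (r^{-1/2} + (t-r)^{-1/2})`. Weighting by `e^{μ r}` and integrating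
in `r` gives a factor of order `μ^{-1/2}` (`lintegral_step`), so by Cauchy-Schwarz, for `μ` large in
terms of `‖f‖²`, the `n`-th iterate is at most `2^{-n} e^{μ t / 2} p(t,y)` (`duh_le`). In particular the
Duhamel series converges, uniformly over bounded sets of potentials.

*Weak continuity.* Let `f_j` converge weakly to `g`. By induction each iterate converges pointwise:
the `(n+1)`-st iterate is the `L²` pairing of `f_j` with `duh f_j n (q) p(w - q)`, and the latter
converges strongly in `L²` by dominated convergence (`tendsto_duh`). Dominated convergence for series
then gives convergence of `Zsol`.

*Conclusion.* The admissible set is nonempty (`exists_feasible`). A minimizing sequence has a weakly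
convergent subsequence by the sequential Banach-Alaoglu theorem (`exists_weak_limit_nonneg`), the
constraint passes to the limit, and the norm is weakly lower semicontinuous.
-/

open MeasureTheory Real Filter

/-- Heat kernel `p(t,x) = (2πt)^{-1/2} exp(-x²/(2t))`. -/
noncomputable def heatK (t x : ℝ) : ℝ :=
  (Real.sqrt (2 * Real.pi * t))⁻¹ * Real.exp (-(x ^ 2) / (2 * t))

/-- The `n`-th term of the Duhamel series defining the kernel `P(ρ; (s,x) → (t,y))`. -/
noncomputable def kernelTerm (ρ : ℝ → ℝ → ℝ) (s x : ℝ) : ℕ → ℝ → ℝ → ℝ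
  | 0, t, y => heatK (t - s) (x - y)
  | n + 1, t, y =>
      ∫ r in Set.Ioo s t, ∫ z : ℝ, kernelTerm ρ s x n r z * ρ r z * heatK (t - r) (y - z)

/-- The kernel `P(ρ; (s,x) → (t,y))`, given by the absolutely convergent Duhamel series. -/
noncomputable def kerP (ρ : ℝ → ℝ → ℝ) (s x t y : ℝ) : ℝ := ∑' n : ℕ, kernelTerm ρ s x n t y

/-- `Z(ρ; t, x) := P(ρ; (0,0) → (t,x))`, the solution of `∂_t Z = ½ ∂_{xx} Z + ρ Z`
with Dirac-delta initial data. -/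
noncomputable def Zsol (ρ : ℝ → ℝ → ℝ) (t x : ℝ) : ℝ := kerP ρ 0 0 t x

/-- `ρ ∈ L²([a,b] × ℝ)`. -/
def InL2 (ρ : ℝ → ℝ → ℝ) (a b : ℝ) : Prop :=
  MeasureTheory.Integrable (fun q : ℝ × ℝ => (ρ q.1 q.2) ^ 2)
    (MeasureTheory.volume.restrict (Set.Icc a b ×ˢ Set.univ))

/-- The squared `L²` norm `‖ρ‖²_{L²([a,b] × ℝ)}`. -/
noncomputable def l2sq (ρ : ℝ → ℝ → ℝ) (a b : ℝ) : ℝ :=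
  ∫ q in Set.Icc a b ×ˢ (Set.univ : Set ℝ), (ρ q.1 q.2) ^ 2

/-! ### Heat kernel estimates -/

lemma heatK_nonneg (t x : ℝ) : 0 ≤ heatK t x := by
  unfold heatK; positivity

lemma heatK_of_nonpos {t : ℝ} (ht : t ≤ 0) (x : ℝ) : heatK t x = 0 := by
  have : Real.sqrt (2 * Real.pi * t) = 0 :=
    Real.sqrt_eq_zero_of_nonpos (mul_nonpos_of_nonneg_of_nonpos (by positivity) ht)
  simp [heatK, this]

lemma heatK_pos {t : ℝ} (ht : 0 < t) (x : ℝ) : 0 < heatK t x := by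
  unfold heatK; positivity

lemma heatK_neg (t x : ℝ) : heatK t (-x) = heatK t x := by
  simp [heatK]

lemma heatK_sq {t : ℝ} (ht : 0 < t) (x : ℝ) :
    heatK t x ^ 2 = (2 * π * t)⁻¹ * exp (-(x ^ 2) / t) := by
  unfold heatK
  rw [mul_pow, inv_pow, Real.sq_sqrt (by positivity), ← Real.exp_nat_mul]
  congr 2
  push_cast
  field_simp

/-- The heat kernel as an extended nonnegative function on space-time. It vanishes at
nonpositive times. -/
noncomputable def eheat (q : ℝ × ℝ) : ENNReal := ENNReal.ofReal (heatK q.1 q.2)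

lemma measurable_eheat : Measurable eheat := by
  unfold eheat heatK; fun_prop

lemma eheat_of_nonpos {q : ℝ × ℝ} (hq : q.1 ≤ 0) : eheat q = 0 := by
  simp [eheat, heatK_of_nonpos hq]

lemma lintegral_gauss_shift {b : ℝ} (hb : 0 < b) (c : ℝ) :
    ∫⁻ z : ℝ, ENNReal.ofReal (exp (-b * (z - c) ^ 2)) = ENNReal.ofReal (√(π / b)) := by
  rw [lintegral_sub_right_eq_self (fun z => ENNReal.ofReal (exp (-b * z ^ 2))) c,
    ← integral_gaussian, ofReal_integral_eq_lintegral_ofReal (integrable_exp_neg_mul_sq hb)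
      (ae_of_all _ fun _ => (exp_pos _).le)]

/-- The product of two squared heat kernels, with the square completed in the intermediate
point `z`. -/
lemma heatK_sq_mul {r t : ℝ} (hr : 0 < r) (hrt : r < t) (y z : ℝ) :
    heatK r z ^ 2 * heatK (t - r) (y - z) ^ 2 =
      ((2 * π * r)⁻¹ * (2 * π * (t - r))⁻¹ * exp (-(y ^ 2) / t)) *
        exp (-(t / (r * (t - r))) * (z - r * y / t) ^ 2) := by
  have ht : 0 < t := hr.trans hrt
  have h2 : 0 < t - r := sub_pos.2 hrt
  rw [heatK_sq hr, heatK_sq h2, mul_assoc (_ * _) (exp _) (exp _), ← Real.exp_add,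
    mul_mul_mul_comm, ← Real.exp_add]
  congr 2
  field_simp
  ring

/-- Chapman-Kolmogorov type bound for squared heat kernels. -/
lemma lintegral_eheat_sq_mul {r t : ℝ} (hr : 0 < r) (hrt : r < t) (y : ℝ) :
    ∫⁻ z : ℝ, eheat (r, z) ^ 2 * eheat (t - r, y - z) ^ 2 ≤
      eheat (t, y) ^ 2 * ENNReal.ofReal ((√r)⁻¹ + (√(t - r))⁻¹) := by
  have ht : 0 < t := hr.trans hrt
  have h2 : 0 < t - r := sub_pos.2 hrt
  have e : ∀ z : ℝ, eheat (r, z) ^ 2 * eheat (t - r, y - z) ^ 2 =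
      ENNReal.ofReal ((2 * π * r)⁻¹ * (2 * π * (t - r))⁻¹ * exp (-(y ^ 2) / t)) *
        ENNReal.ofReal (exp (-(t / (r * (t - r))) * (z - r * y / t) ^ 2)) := by
    intro z
    rw [← ENNReal.ofReal_mul (by positivity), ← heatK_sq_mul hr hrt,
      ENNReal.ofReal_mul (by positivity), ENNReal.ofReal_pow (heatK_nonneg _ _),
      ENNReal.ofReal_pow (heatK_nonneg _ _)]
    rfl
  simp_rw [e]
  rw [lintegral_const_mul _ (by fun_prop), lintegral_gauss_shift (by positivity),
    ← ENNReal.ofReal_mul (by positivity)]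
  unfold eheat
  rw [← ENNReal.ofReal_pow (heatK_nonneg _ _), ← ENNReal.ofReal_mul (by positivity)]
  apply ENNReal.ofReal_le_ofReal
  rw [heatK_sq ht]
  have ha : 0 < √r := Real.sqrt_pos.2 hr
  have hb : 0 < √(t - r) := Real.sqrt_pos.2 h2
  have hra : r = √r ^ 2 := (Real.sq_sqrt hr.le).symm
  have hrb : t - r = √(t - r) ^ 2 := (Real.sq_sqrt h2.le).symm
  have hpi : 1 ≤ √π := by
    rw [Real.one_le_sqrt]; linarith [Real.pi_gt_three]
  have hpp : π = √π ^ 2 := (Real.sq_sqrt Real.pi_pos.le).symm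
  have hd : √(π / (t / (r * (t - r)))) = √π * (√r * √(t - r)) / √t := by
    rw [show π / (t / (r * (t - r))) = π * (r * (t - r)) / t by field_simp,
      Real.sqrt_div (by positivity), Real.sqrt_mul (by positivity), Real.sqrt_mul hr.le]
  rw [hd]
  have hts : √t ≤ √r + √(t - r) := by
    rw [Real.sqrt_le_left (by positivity)]
    nlinarith [mul_pos ha hb]
  have htt : t = √t ^ 2 := (Real.sq_sqrt ht.le).symm
  have htp : 0 < √t := Real.sqrt_pos.2 ht
  have hpp0 : 0 < √π := by linarith
  have key : (2 * π * r)⁻¹ * (2 * π * (t - r))⁻¹ * (√π * (√r * √(t - r)) / √t) ≤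
      (2 * π * t)⁻¹ * ((√r)⁻¹ + (√(t - r))⁻¹) := by
    generalize √r = a at *
    generalize √(t - r) = b at *
    generalize √t = c at *
    generalize √π = d at *
    rw [hrb, hpp, htt, hra]
    have : (2 * d ^ 2 * a ^ 2)⁻¹ * (2 * d ^ 2 * b ^ 2)⁻¹ * (d * (a * b) / c) =
        (2 * d ^ 2 * c ^ 2)⁻¹ * (c / (a * b)) * (2 * d)⁻¹ := by
      field_simp
    rw [this]
    have h3 : a⁻¹ + b⁻¹ = (a + b) / (a * b) := by field_simp; ring
    rw [h3]
    calc _ ≤ (2 * d ^ 2 * c ^ 2)⁻¹ * (c / (a * b)) * 1 := by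
          gcongr
          apply inv_le_one_of_one_le₀; linarith
      _ ≤ _ := by rw [mul_one]; gcongr
  calc _ = (2 * π * r)⁻¹ * (2 * π * (t - r))⁻¹ * (√π * (√r * √(t - r)) / √t) *
        exp (-(y ^ 2) / t) := by ring
    _ ≤ (2 * π * t)⁻¹ * ((√r)⁻¹ + (√(t - r))⁻¹) * exp (-(y ^ 2) / t) := by gcongr
    _ = _ := by ring

/-- The integrable singular weight `s ↦ s^{-1/2} e^{-μ s}` on `(0, ∞)`, extended by zero. -/
noncomputable def sing (μ s : ℝ) : ENNReal := ENNReal.ofReal ((√s)⁻¹ * exp (-(μ * s)))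

lemma sing_of_nonpos (μ : ℝ) {s : ℝ} (hs : s ≤ 0) : sing μ s = 0 := by
  simp [sing, Real.sqrt_eq_zero_of_nonpos hs]

lemma measurable_sing (μ : ℝ) : Measurable (sing μ) := by
  unfold sing; fun_prop

lemma lintegral_sing {μ : ℝ} (hμ : 0 < μ) : ∫⁻ s, sing μ s = ENNReal.ofReal (√(π / μ)) := by
  have h0 : ∫⁻ s, sing μ s = ∫⁻ s in Set.Ioi (0 : ℝ), sing μ s := by
    rw [← lintegral_indicator measurableSet_Ioi]
    congr 1; ext s
    by_cases hs : s ∈ Set.Ioi (0 : ℝ)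
    · rw [Set.indicator_of_mem hs]
    · rw [Set.indicator_of_notMem hs, sing_of_nonpos _ (not_lt.1 hs)]
  have h1 := Real.integral_rpow_mul_exp_neg_mul_Ioi (a := 1 / 2) (r := μ) (by norm_num) hμ
  have hpos : 0 < √(π / μ) := Real.sqrt_pos.2 (div_pos Real.pi_pos hμ)
  have h2 : ∫ s in Set.Ioi (0 : ℝ), s ^ ((1 : ℝ) / 2 - 1) * exp (-(μ * s)) = √(π / μ) := by
    rw [h1, Real.Gamma_one_half_eq, ← Real.sqrt_eq_rpow, ← Real.sqrt_mul (by positivity)]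
    congr 1; field_simp
  have hint : Integrable (fun s : ℝ => s ^ ((1 : ℝ) / 2 - 1) * exp (-(μ * s)))
      (volume.restrict (Set.Ioi 0)) := by
    by_contra hc
    rw [integral_undef hc] at h2
    exact hpos.ne h2
  rw [h0, ← h2, ofReal_integral_eq_lintegral_ofReal hint]
  · apply setLIntegral_congr_fun measurableSet_Ioi
    intro s hs
    have hs : 0 < s := hs
    simp only [sing]
    rw [show (1 : ℝ) / 2 - 1 = -(1 / 2) by norm_num, Real.rpow_neg hs.le, ← Real.sqrt_eq_rpow]
  · filter_upwards [ae_restrict_mem measurableSet_Ioi] with s hs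
    have hs : 0 < s := hs
    positivity

lemma exp_mul_inv_sqrt_le {μ : ℝ} (hμ : 0 ≤ μ) {r t : ℝ} (hr : 0 < r) (hrt : r < t) :
    exp (μ * r) * ((√r)⁻¹ + (√(t - r))⁻¹) ≤
      exp (μ * t) * (2 * ((√(t - r))⁻¹ * exp (-(μ * (t - r)))) + (√r)⁻¹ * exp (-(μ * r))) := by
  have h2 : 0 < t - r := sub_pos.2 hrt
  have e1 : exp (μ * r) = exp (μ * t) * exp (-(μ * (t - r))) := by
    rw [← Real.exp_add]; congr 1; ring
  rw [e1, mul_assoc]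
  refine mul_le_mul_of_nonneg_left ?_ (exp_pos _).le
  have : exp (-(μ * (t - r))) * (√r)⁻¹ ≤
      (√(t - r))⁻¹ * exp (-(μ * (t - r))) + (√r)⁻¹ * exp (-(μ * r)) := by
    rcases le_total (t - r) r with h | h
    · have h3 : (√r)⁻¹ ≤ (√(t - r))⁻¹ := by gcongr
      have h4 := mul_le_mul_of_nonneg_left h3 (exp_pos (-(μ * (t - r)))).le
      have h5 : 0 ≤ (√r)⁻¹ * exp (-(μ * r)) := by positivity
      linarith
    · have h3 : exp (-(μ * (t - r))) ≤ exp (-(μ * r)) := by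
        gcongr
      have h4 := mul_le_mul_of_nonneg_right h3 (inv_nonneg.2 (Real.sqrt_nonneg r))
      have h5 : 0 ≤ (√(t - r))⁻¹ * exp (-(μ * (t - r))) := by positivity
      linarith
  linarith

/-- The one-step smoothing estimate: convolving the squared heat kernel, weighted by `e^{μ r}`,
with itself gains a factor of order `μ^{-1/2}`. -/
lemma lintegral_step {μ : ℝ} (hμ : 0 < μ) (w : ℝ × ℝ) :
    ∫⁻ q : ℝ × ℝ, ENNReal.ofReal (exp (μ * q.1)) * (eheat q ^ 2 * eheat (w - q) ^ 2) ≤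
      ENNReal.ofReal (3 * √(π / μ)) * (ENNReal.ofReal (exp (μ * w.1)) * eheat w ^ 2) := by
  obtain ⟨t, y⟩ := w
  have hm := measurable_eheat
  rw [Measure.volume_eq_prod, lintegral_prod _ (by fun_prop)]
  have hp : ∀ r : ℝ, ∫⁻ z : ℝ, ENNReal.ofReal (exp (μ * r)) *
      (eheat (r, z) ^ 2 * eheat ((t, y) - (r, z)) ^ 2) ≤
      (ENNReal.ofReal (exp (μ * t)) * eheat (t, y) ^ 2) *
        (2 * sing μ (t - r) + sing μ r) := by
    intro r
    rcases le_or_gt r 0 with hr | hr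
    · have : ∀ z : ℝ, eheat (r, z) = 0 := fun z => eheat_of_nonpos hr
      simp [this]
    rcases le_or_gt t r with ht | ht
    · have : ∀ z : ℝ, eheat ((t, y) - (r, z)) = 0 := fun z => eheat_of_nonpos (by simpa using ht)
      simp only [this]
      simp
    rw [lintegral_const_mul _ (by fun_prop)]
    refine (mul_le_mul_right (lintegral_eheat_sq_mul hr ht y) _).trans ?_
    have := ENNReal.ofReal_le_ofReal (exp_mul_inv_sqrt_le hμ.le hr ht)
    rw [ENNReal.ofReal_mul (exp_pos _).le, ENNReal.ofReal_mul (exp_pos _).le,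
      ENNReal.ofReal_add (p := 2 * _) (by positivity) (by positivity), ENNReal.ofReal_mul (by norm_num),
      ENNReal.ofReal_ofNat] at this
    calc _ = ENNReal.ofReal (exp (μ * r)) * ENNReal.ofReal ((√r)⁻¹ + (√(t - r))⁻¹) *
          eheat (t, y) ^ 2 := by ring
      _ ≤ ENNReal.ofReal (exp (μ * t)) * (2 * sing μ (t - r) + sing μ r) *
          eheat (t, y) ^ 2 := mul_le_mul_left this _
      _ = _ := by ring
  refine (lintegral_mono hp).trans ?_
  have hs := measurable_sing μ
  rw [lintegral_const_mul _ (by fun_prop), lintegral_add_left (by fun_prop),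
    lintegral_const_mul _ (by fun_prop), lintegral_sub_left_eq_self (sing μ) t,
    lintegral_sing hμ, mul_comm]
  apply le_of_eq
  congr 1
  rw [ENNReal.ofReal_mul (by norm_num), ENNReal.ofReal_ofNat]
  ring

/-! ### The Duhamel iterates as nonnegative integrals -/

/-- The Duhamel iterates of a nonnegative potential `F` started from a Dirac mass at the space-time
origin, with values in `[0, ∞]`. No time ordering has to be imposed on the integration variables,
because the heat kernel `eheat` vanishes at nonpositive times. -/
noncomputable def duh (F : ℝ × ℝ → ENNReal) : ℕ → ℝ × ℝ → ENNReal
  | 0 => eheat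
  | n + 1 => fun w => ∫⁻ q, F q * (duh F n q * eheat (w - q))

lemma measurable_duh {F : ℝ × ℝ → ENNReal} (hF : Measurable F) (n : ℕ) : Measurable (duh F n) := by
  induction n with
  | zero => exact measurable_eheat
  | succ n ih =>
    have hm := measurable_eheat
    have : Measurable (fun p : (ℝ × ℝ) × (ℝ × ℝ) => F p.2 * (duh F n p.2 * eheat (p.1 - p.2))) := by
      fun_prop
    exact this.lintegral_prod_right'

lemma duh_of_nonpos (F : ℝ × ℝ → ENNReal) (n : ℕ) {w : ℝ × ℝ} (hw : w.1 ≤ 0) : duh F n w = 0 := by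
  induction n generalizing w with
  | zero => exact eheat_of_nonpos hw
  | succ n ih =>
    have : ∀ q, F q * (duh F n q * eheat (w - q)) = 0 := by
      intro q
      rcases le_or_gt q.1 0 with h | h
      · simp [ih h]
      · simp [eheat_of_nonpos (q := w - q) (by simp; linarith)]
    simp [duh, this]

lemma lintegral_mul_sq_le {F G : ℝ × ℝ → ENNReal} (hF : Measurable F) (hG : Measurable G) :
    (∫⁻ q, F q * G q) ^ 2 ≤ (∫⁻ q, F q ^ 2) * ∫⁻ q, G q ^ 2 := by
  have h := ENNReal.lintegral_mul_le_Lp_mul_Lq volume Real.HolderConjugate.two_two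
    hF.aemeasurable hG.aemeasurable
  have h2 := pow_le_pow_left' h 2
  rw [mul_pow, ← ENNReal.rpow_natCast, ← ENNReal.rpow_natCast, ← ENNReal.rpow_natCast,
    ← ENNReal.rpow_mul, ← ENNReal.rpow_mul] at h2
  norm_num at h2
  exact h2

/-- Iterating the one-step estimate: if `μ` is large in terms of the `L²` bound `M`, the squared
iterates decay geometrically relative to `e^{μ t} p(t,x)²`. -/
lemma duh_sq_le {F : ℝ × ℝ → ENNReal} (hF : Measurable F) {M μ : ℝ} (hM0 : 0 ≤ M)
    (hM : ∫⁻ q, F q ^ 2 ≤ ENNReal.ofReal M) (hμ : 0 < μ) (hθ : M * (3 * √(π / μ)) ≤ 1 / 4)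
    (n : ℕ) (w : ℝ × ℝ) :
    duh F n w ^ 2 ≤
      ENNReal.ofReal ((1 / 4) ^ n) * (ENNReal.ofReal (exp (μ * w.1)) * eheat w ^ 2) := by
  induction n generalizing w with
  | zero =>
    rcases le_or_gt w.1 0 with h | h
    · simp [duh_of_nonpos F 0 h]
    · simp only [pow_zero, ENNReal.ofReal_one, one_mul, duh]
      refine le_mul_of_one_le_left' ?_
      rw [ENNReal.one_le_ofReal]
      exact Real.one_le_exp (by positivity)
  | succ n ih =>
    have hm := measurable_eheat
    have hd := measurable_duh hF n
    calc duh F (n + 1) w ^ 2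
        ≤ (∫⁻ q, F q ^ 2) * ∫⁻ q, (duh F n q * eheat (w - q)) ^ 2 :=
          lintegral_mul_sq_le hF (by fun_prop)
      _ ≤ ENNReal.ofReal M * ∫⁻ q, ENNReal.ofReal ((1 / 4) ^ n) *
            (ENNReal.ofReal (exp (μ * q.1)) * (eheat q ^ 2 * eheat (w - q) ^ 2)) := by
          gcongr with q
          rw [mul_pow]
          calc _ ≤ _ := mul_le_mul_left (ih q) _
            _ = _ := by ring
      _ ≤ ENNReal.ofReal M * (ENNReal.ofReal ((1 / 4) ^ n) * (ENNReal.ofReal (3 * √(π / μ)) *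
            (ENNReal.ofReal (exp (μ * w.1)) * eheat w ^ 2))) := by
          rw [lintegral_const_mul _ (by fun_prop)]
          gcongr
          exact lintegral_step hμ w
      _ = ENNReal.ofReal (M * (3 * √(π / μ))) * (ENNReal.ofReal ((1 / 4) ^ n) *
            (ENNReal.ofReal (exp (μ * w.1)) * eheat w ^ 2)) := by
          rw [ENNReal.ofReal_mul hM0]; ring
      _ ≤ ENNReal.ofReal (1 / 4) * (ENNReal.ofReal ((1 / 4) ^ n) *
            (ENNReal.ofReal (exp (μ * w.1)) * eheat w ^ 2)) := by gcongr
      _ = _ := by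
          rw [pow_succ (1 / 4 : ℝ), ENNReal.ofReal_mul (by positivity)]; ring

/-- The pointwise majorant `e^{μ t / 2} p(t,x)` of the iterates. -/
noncomputable def majo (μ : ℝ) (w : ℝ × ℝ) : ℝ := exp (μ * w.1 / 2) * heatK w.1 w.2

lemma majo_nonneg (μ : ℝ) (w : ℝ × ℝ) : 0 ≤ majo μ w :=
  mul_nonneg (exp_pos _).le (heatK_nonneg _ _)

lemma measurable_majo (μ : ℝ) : Measurable (majo μ) := by
  unfold majo heatK; fun_prop

lemma ofReal_majo_sq (μ : ℝ) (w : ℝ × ℝ) :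
    ENNReal.ofReal (majo μ w) ^ 2 = ENNReal.ofReal (exp (μ * w.1)) * eheat w ^ 2 := by
  rw [majo, ENNReal.ofReal_mul (exp_pos _).le, mul_pow, ← ENNReal.ofReal_pow (exp_pos _).le,
    ← Real.exp_nat_mul, eheat]
  congr 3
  push_cast; ring

lemma duh_le {F : ℝ × ℝ → ENNReal} (hF : Measurable F) {M μ : ℝ} (hM0 : 0 ≤ M)
    (hM : ∫⁻ q, F q ^ 2 ≤ ENNReal.ofReal M) (hμ : 0 < μ) (hθ : M * (3 * √(π / μ)) ≤ 1 / 4)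
    (n : ℕ) (w : ℝ × ℝ) :
    duh F n w ≤ ENNReal.ofReal ((1 / 2) ^ n * majo μ w) := by
  have h := duh_sq_le hF hM0 hM hμ hθ n w
  rw [← ofReal_majo_sq, show ((1 : ℝ) / 4) ^ n = ((1 / 2) ^ n) ^ 2 by
    rw [← pow_mul, mul_comm, pow_mul]; norm_num, ENNReal.ofReal_pow (by positivity), ← mul_pow,
    ← ENNReal.ofReal_mul (by positivity)] at h
  by_contra hc
  exact absurd h (not_le.2 (ENNReal.pow_lt_pow_left two_ne_zero (not_le.1 hc)))

/-- A growth rate that makes the geometric bound `duh_sq_le` available. -/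
lemma exists_rate (M : ℝ) (hM0 : 0 ≤ M) : ∃ μ : ℝ, 0 < μ ∧ M * (3 * √(π / μ)) ≤ 1 / 4 := by
  refine ⟨π * (12 * (M + 1)) ^ 2, by positivity, ?_⟩
  have : √(π / (π * (12 * (M + 1)) ^ 2)) = (12 * (M + 1))⁻¹ := by
    rw [show π / (π * (12 * (M + 1)) ^ 2) = ((12 * (M + 1))⁻¹) ^ 2 by field_simp]
    exact Real.sqrt_sq (by positivity)
  rw [this]
  have : M * (3 * (12 * (M + 1))⁻¹) = (M / (M + 1)) * (1 / 4) := by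
    field_simp; ring
  rw [this]
  have : M / (M + 1) ≤ 1 := by rw [div_le_one (by positivity)]; linarith
  linarith

/-! ### Comparison with the kernel terms -/

lemma duh_succ_eq {F : ℝ × ℝ → ENNReal} (hF : Measurable F) (n : ℕ) (t y : ℝ) :
    duh F (n + 1) (t, y) = ∫⁻ r in Set.Ioo 0 t, ∫⁻ z : ℝ,
      F (r, z) * (duh F n (r, z) * eheat (t - r, y - z)) := by
  have hm := measurable_eheat
  have hd := measurable_duh hF n
  have : duh F (n + 1) (t, y) = ∫⁻ q, F q * (duh F n q * eheat ((t, y) - q)) := rfl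
  rw [this, Measure.volume_eq_prod, lintegral_prod _ (by fun_prop),
    ← lintegral_indicator measurableSet_Ioo]
  congr 1; ext r
  by_cases hr : r ∈ Set.Ioo 0 t
  · rw [Set.indicator_of_mem hr]; rfl
  · rw [Set.indicator_of_notMem hr]
    have : ∀ z, F (r, z) * (duh F n (r, z) * eheat ((t, y) - (r, z))) = 0 := by
      intro z
      rcases le_or_gt r 0 with h | h
      · rw [duh_of_nonpos F n (w := (r, z)) h]; simp
      · rw [eheat_of_nonpos (q := (t, y) - (r, z))]
        · simp
        · have : t ≤ r := by by_contra hc; exact hr ⟨h, not_le.1 hc⟩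
          simpa using this
    simp only [this]; simp

lemma toReal_eheat (q : ℝ × ℝ) : (eheat q).toReal = heatK q.1 q.2 :=
  ENNReal.toReal_ofReal (heatK_nonneg _ _)

/-- For a nonnegative measurable potential with finite iterates, the Bochner integrals defining
`kernelTerm` agree with the nonnegative integrals `duh`. -/
lemma kernelTerm_eq {f : ℝ × ℝ → ℝ} (hf : Measurable f) (hf0 : ∀ q, 0 ≤ f q)
    (hfin : ∀ n w, duh (fun q => ENNReal.ofReal (f q)) n w ≠ ⊤) (n : ℕ) (t y : ℝ) :
    kernelTerm (fun r z => f (r, z)) 0 0 n t y =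
      (duh (fun q => ENNReal.ofReal (f q)) n (t, y)).toReal := by
  induction n generalizing t y with
  | zero => simp [kernelTerm, duh, toReal_eheat, heatK_neg]
  | succ n ih =>
    set F : ℝ × ℝ → ENNReal := fun q => ENNReal.ofReal (f q) with hFdef
    have hF : Measurable F := by fun_prop
    have hm := measurable_eheat
    have hd := measurable_duh hF n
    have hS := duh_succ_eq hF n t y
    have hmeas : Measurable (fun p : ℝ × ℝ => F p * (duh F n p * eheat (t - p.1, y - p.2))) := by
      fun_prop
    have hin : ∀ r, ∫ z : ℝ, kernelTerm (fun r z => f (r, z)) 0 0 n r z * f (r, z) *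
        heatK (t - r) (y - z) =
        (∫⁻ z : ℝ, F (r, z) * (duh F n (r, z) * eheat (t - r, y - z))).toReal := by
      intro r
      rw [← integral_toReal]
      · congr 1; ext z
        rw [ih, ENNReal.toReal_mul, ENNReal.toReal_mul, toReal_eheat, hFdef]
        simp only
        rw [ENNReal.toReal_ofReal (hf0 _)]
        ring
      · exact (hmeas.comp measurable_prodMk_left).aemeasurable
      · refine ae_of_all _ fun z => ?_
        exact ENNReal.mul_lt_top ENNReal.ofReal_lt_top
          (ENNReal.mul_lt_top (hfin n _).lt_top ENNReal.ofReal_lt_top)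
    simp only [kernelTerm]
    simp only [hin]
    rw [hS, integral_toReal]
    · exact hmeas.lintegral_prod_right'.aemeasurable
    · refine ae_lt_top hmeas.lintegral_prod_right' ?_
      rw [← hS]
      exact hfin _ _

/-- A potential, measurable or not, is dominated by any measurable version of its modulus: the
upper bound of a Bochner integral by the nonnegative integral of the norm needs no
measurability. -/
lemma enorm_kernelTerm_le {σ : ℝ → ℝ → ℝ} {F : ℝ × ℝ → ENNReal} (hF : Measurable F) {T : ℝ}
    (hσ : ∀ᵐ q : ℝ × ℝ ∂(volume.restrict (Set.Icc 0 T ×ˢ Set.univ)), ‖σ q.1 q.2‖ₑ = F q)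
    (n : ℕ) {t : ℝ} (ht : t ≤ T) (y : ℝ) :
    ‖kernelTerm σ 0 0 n t y‖ₑ ≤ duh F n (t, y) := by
  induction n generalizing t y with
  | zero =>
    simp only [kernelTerm, duh, eheat, zero_sub, sub_zero, heatK_neg]
    rw [Real.enorm_of_nonneg (heatK_nonneg _ _)]
  | succ n ih =>
    rw [duh_succ_eq hF]
    simp only [kernelTerm]
    have hsl : ∀ᵐ r ∂(volume.restrict (Set.Icc 0 T)), ∀ᵐ z : ℝ, ‖σ r z‖ₑ = F (r, z) := by
      rw [Measure.volume_eq_prod, ← Measure.prod_restrict, Measure.restrict_univ] at hσ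
      exact Measure.ae_ae_of_ae_prod hσ
    have hsub : Set.Ioo 0 t ⊆ Set.Icc 0 T := fun r hr => ⟨hr.1.le, hr.2.le.trans ht⟩
    refine (enorm_integral_le_lintegral_enorm _).trans (lintegral_mono_ae ?_)
    filter_upwards [ae_restrict_of_ae_restrict_of_subset hsub hsl,
      ae_restrict_mem measurableSet_Ioo] with r hr hrt
    refine (enorm_integral_le_lintegral_enorm _).trans (lintegral_mono_ae ?_)
    filter_upwards [hr] with z hz
    rw [enorm_mul, enorm_mul, hz, Real.enorm_of_nonneg (heatK_nonneg _ _)]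
    calc _ ≤ duh F n (r, z) * F (r, z) * ENNReal.ofReal (heatK (t - r) (y - z)) := by
          gcongr
          exact ih (hrt.2.le.trans ht) z
      _ = _ := by rw [eheat]; ring

/-! ### Weak compactness in `L²` -/

lemma lintegral_ofReal_sq {f : ℝ × ℝ → ℝ} (hf : MemLp f 2 volume) (hf0 : ∀ q, 0 ≤ f q) :
    ∫⁻ q, ENNReal.ofReal (f q) ^ 2 = ENNReal.ofReal (∫ q, f q ^ 2) := by
  rw [ofReal_integral_eq_lintegral_ofReal hf.integrable_sq (ae_of_all _ fun q => sq_nonneg _)]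
  simp_rw [ENNReal.ofReal_pow (hf0 _)]

lemma memLp_of_lintegral {f : ℝ × ℝ → ℝ} (hf : Measurable f) (hf0 : ∀ q, 0 ≤ f q)
    (h : ∫⁻ q, ENNReal.ofReal (f q) ^ 2 ≠ ⊤) : MemLp f 2 volume := by
  rw [memLp_two_iff_integrable_sq hf.aestronglyMeasurable]
  refine ⟨(hf.pow_const 2).aestronglyMeasurable, ?_⟩
  rw [hasFiniteIntegral_iff_ofReal (ae_of_all _ fun q => sq_nonneg _)]
  simp_rw [ENNReal.ofReal_pow (hf0 _)]
  exact h.lt_top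

lemma integral_mul_sq_le {f g : ℝ × ℝ → ℝ} (hf : MemLp f 2 volume) (hg : MemLp g 2 volume) :
    (∫ q, f q * g q) ^ 2 ≤ (∫ q, f q ^ 2) * ∫ q, g q ^ 2 := by
  have key : ∀ {u v : ℝ × ℝ → ℝ} (hu : MemLp u 2 volume) (hv : MemLp v 2 volume),
      inner ℝ (hv.toLp v) (hu.toLp u) = ∫ q, u q * v q := by
    intro u v hu hv
    rw [L2.inner_def]
    apply integral_congr_ae
    filter_upwards [hu.coeFn_toLp, hv.coeFn_toLp] with q h1 h2
    simp [h1, h2]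
  have h := abs_real_inner_le_norm (hg.toLp g) (hf.toLp f)
  have h2 := pow_le_pow_left₀ (abs_nonneg _) h 2
  rw [sq_abs, mul_pow, ← real_inner_self_eq_norm_sq, ← real_inner_self_eq_norm_sq, key hf hg,
    key hf hf, key hg hg] at h2
  simp only [pow_two (f _), pow_two (g _)]
  linarith

/-- Sequential weak compactness of bounded sets of `L²`, for representatives. -/
lemma exists_weak_limit {f : ℕ → ℝ × ℝ → ℝ} (hf : ∀ j, MemLp (f j) 2 volume) {M : ℝ}
    (hM : ∀ j, ∫ q, f j q ^ 2 ≤ M) :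
    ∃ g : ℝ × ℝ → ℝ, Measurable g ∧ MemLp g 2 volume ∧ ∃ φ : ℕ → ℕ, StrictMono φ ∧
      ∀ h : ℝ × ℝ → ℝ, MemLp h 2 volume →
        Tendsto (fun j => ∫ q, f (φ j) q * h q) atTop (nhds (∫ q, g q * h q)) := by
  have key : ∀ {u : Lp ℝ 2 (volume : Measure (ℝ × ℝ))} {v : ℝ × ℝ → ℝ} (hv : MemLp v 2 volume),
      inner ℝ u (hv.toLp v) = ∫ q, u q * v q := by
    intro u v hv
    rw [L2.inner_def]
    apply integral_congr_ae
    filter_upwards [hv.coeFn_toLp] with q h2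
    simp [h2, mul_comm]
  let E := Lp ℝ 2 (volume : Measure (ℝ × ℝ))
  let u : ℕ → WeakDual ℝ E := fun j =>
    StrongDual.toWeakDual (InnerProductSpace.toDual ℝ E ((hf j).toLp (f j)))
  have hfact : Fact ((2 : ENNReal) ≠ ⊤) := ⟨by norm_num⟩
  have hc := WeakDual.isSeqCompact_closedBall ℝ E 0 (√M)
  have hu : ∀ j, u j ∈ WeakDual.toStrongDual ⁻¹' Metric.closedBall (0 : StrongDual ℝ E) (√M) := by
    intro j
    have : ‖(hf j).toLp (f j)‖ ≤ √M := by
      apply Real.le_sqrt_of_sq_le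
      rw [← real_inner_self_eq_norm_sq, key (hf j)]
      refine le_trans (le_of_eq ?_) (hM j)
      apply integral_congr_ae
      filter_upwards [(hf j).coeFn_toLp] with q h1
      rw [h1, pow_two]
    simpa [u, -Lp.norm_toLp] using this
  obtain ⟨a, -, φ, hφ, hlim⟩ := hc hu
  let v : E := (InnerProductSpace.toDual ℝ E).symm (WeakDual.toStrongDual a)
  have hvm : MemLp (v : ℝ × ℝ → ℝ) 2 volume := Lp.memLp v
  refine ⟨v, (Lp.stronglyMeasurable v).measurable, hvm, φ, hφ, ?_⟩
  intro h hh
  have h1 : Tendsto (fun j => (u (φ j)) (hh.toLp h)) atTop (nhds (a (hh.toLp h))) :=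
    ((WeakDual.eval_continuous (hh.toLp h)).tendsto a).comp hlim
  have h2 : a (hh.toLp h) = ∫ q, v q * h q := by
    rw [← key hh, InnerProductSpace.toDual_symm_apply]
    rfl
  have h3 : ∀ j, (u (φ j)) (hh.toLp h) = ∫ q, f (φ j) q * h q := by
    intro j
    have : (u (φ j)) (hh.toLp h) = inner ℝ ((hf (φ j)).toLp (f (φ j))) (hh.toLp h) := by
      simp [u]
    rw [this, key hh]
    apply integral_congr_ae
    filter_upwards [(hf (φ j)).coeFn_toLp] with q h1
    rw [h1]
  simp only [h2, h3] at h1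
  exact h1

/-- Weak limits of nonnegative functions are nonnegative: test against the negative part. -/
lemma exists_weak_limit_nonneg {f : ℕ → ℝ × ℝ → ℝ} (hf : ∀ j, MemLp (f j) 2 volume)
    (hf0 : ∀ j q, 0 ≤ f j q) {M : ℝ} (hM : ∀ j, ∫ q, f j q ^ 2 ≤ M) :
    ∃ g : ℝ × ℝ → ℝ, Measurable g ∧ (∀ q, 0 ≤ g q) ∧ MemLp g 2 volume ∧
      ∃ φ : ℕ → ℕ, StrictMono φ ∧ ∀ h : ℝ × ℝ → ℝ, MemLp h 2 volume →
        Tendsto (fun j => ∫ q, f (φ j) q * h q) atTop (nhds (∫ q, g q * h q)) := by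
  obtain ⟨g, hgm, hg, φ, hφ, hlim⟩ := exists_weak_limit hf hM
  have hneg : MemLp (fun q => max (-(g q)) 0) 2 volume := hg.neg_part
  have hpos : MemLp (fun q => max (g q) 0) 2 volume := hg.pos_part
  have h1 : 0 ≤ ∫ q, g q * max (-(g q)) 0 :=
    ge_of_tendsto' (hlim _ hneg) fun j =>
      integral_nonneg fun q => mul_nonneg (hf0 _ _) (le_max_right _ _)
  have h2 : ∀ q, g q * max (-(g q)) 0 = -(max (-(g q)) 0 ^ 2) := by
    intro q
    rcases le_total (g q) 0 with h | h
    · rw [max_eq_left (by linarith)]; ring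
    · rw [max_eq_right (by linarith)]; ring
  simp only [h2, integral_neg] at h1
  have h3 : ∫ q, max (-(g q)) 0 ^ 2 = 0 :=
    le_antisymm (by linarith) (integral_nonneg fun q => sq_nonneg _)
  rw [integral_eq_zero_iff_of_nonneg (fun q => sq_nonneg _) hneg.integrable_sq] at h3
  have h4 : (fun q => max (g q) 0) =ᵐ[volume] g := by
    filter_upwards [h3] with q hq
    have hq' : max (-(g q)) 0 = 0 := by simpa using hq
    have : -(g q) ≤ 0 := hq' ▸ le_max_left _ _
    exact max_eq_left (by linarith)
  refine ⟨fun q => max (g q) 0, hgm.max measurable_const, fun q => le_max_right _ _, hpos, φ, hφ,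
    fun h hh => ?_⟩
  have : ∫ q, max (g q) 0 * h q = ∫ q, g q * h q := by
    apply integral_congr_ae
    filter_upwards [h4] with q hq
    rw [hq]
  rw [this]
  exact hlim h hh

/-! ### Weak continuity of the iterates -/

/-- `e^{μ q.1 / 2} p(q) p(w - q)` is square integrable in `q`. -/
lemma memLp_majo_mul {μ : ℝ} (hμ : 0 < μ) (w : ℝ × ℝ) :
    MemLp (fun q : ℝ × ℝ => majo μ q * heatK (w - q).1 (w - q).2) 2 volume := by
  refine memLp_of_lintegral ?_ (fun q => mul_nonneg (majo_nonneg _ _) (heatK_nonneg _ _)) ?_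
  · have := measurable_majo μ
    unfold heatK; fun_prop
  · have h := lintegral_step hμ w
    refine ne_top_of_le_ne_top ?_ (le_trans (le_of_eq ?_) h)
    · unfold eheat
      rw [← ENNReal.ofReal_pow (heatK_nonneg _ _)]
      exact ENNReal.mul_ne_top ENNReal.ofReal_ne_top
        (ENNReal.mul_ne_top ENNReal.ofReal_ne_top ENNReal.ofReal_ne_top)
    · congr 1; ext q
      rw [ENNReal.ofReal_mul (majo_nonneg _ _), mul_pow, ofReal_majo_sq, mul_assoc]
      rfl

lemma duh_toReal_le {f : ℝ × ℝ → ℝ} (hf : Measurable f) {M μ : ℝ} (hM0 : 0 ≤ M)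
    (hM : ∫⁻ q, ENNReal.ofReal (f q) ^ 2 ≤ ENNReal.ofReal M) (hμ : 0 < μ)
    (hθ : M * (3 * √(π / μ)) ≤ 1 / 4) (n : ℕ) (w : ℝ × ℝ) :
    (duh (fun q => ENNReal.ofReal (f q)) n w).toReal ≤ (1 / 2) ^ n * majo μ w :=
  ENNReal.toReal_le_of_le_ofReal (mul_nonneg (by positivity) (majo_nonneg _ _))
    (duh_le hf.ennreal_ofReal hM0 hM hμ hθ n w)

lemma duh_ne_top {f : ℝ × ℝ → ℝ} (hf : Measurable f) {M μ : ℝ} (hM0 : 0 ≤ M)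
    (hM : ∫⁻ q, ENNReal.ofReal (f q) ^ 2 ≤ ENNReal.ofReal M) (hμ : 0 < μ)
    (hθ : M * (3 * √(π / μ)) ≤ 1 / 4) (n : ℕ) (w : ℝ × ℝ) :
    duh (fun q => ENNReal.ofReal (f q)) n w ≠ ⊤ :=
  ne_top_of_le_ne_top ENNReal.ofReal_ne_top (duh_le hf.ennreal_ofReal hM0 hM hμ hθ n w)

lemma duh_succ_toReal {f : ℝ × ℝ → ℝ} (hf : Measurable f) (hf0 : ∀ q, 0 ≤ f q)
    (hfin : ∀ n w, duh (fun q => ENNReal.ofReal (f q)) n w ≠ ⊤) (n : ℕ) (w : ℝ × ℝ) :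
    (duh (fun q => ENNReal.ofReal (f q)) (n + 1) w).toReal =
      ∫ q, f q * ((duh (fun q => ENNReal.ofReal (f q)) n q).toReal *
        heatK (w - q).1 (w - q).2) := by
  have hm := measurable_eheat
  have hd := measurable_duh hf.ennreal_ofReal n
  simp only [duh]
  rw [← integral_toReal]
  · congr 1; ext q
    rw [ENNReal.toReal_mul, ENNReal.toReal_mul, toReal_eheat, ENNReal.toReal_ofReal (hf0 _)]
  · fun_prop
  · exact ae_of_all _ fun q => ENNReal.mul_lt_top ENNReal.ofReal_lt_top
      (ENNReal.mul_lt_top (hfin n q).lt_top ENNReal.ofReal_lt_top)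

/-- Each iterate is weakly continuous on bounded sets of `L²`. Inductively the integrands
`duh F_j n q * p(w - q)` converge pointwise under an `L²` majorant, hence strongly in `L²`, and a
strongly convergent sequence may be paired with the weakly convergent one. -/
lemma tendsto_duh {f : ℕ → ℝ × ℝ → ℝ} {g : ℝ × ℝ → ℝ} (hf : ∀ j, Measurable (f j))
    (hg : Measurable g) (hf0 : ∀ j q, 0 ≤ f j q) (hg0 : ∀ q, 0 ≤ g q) {M μ : ℝ} (hM0 : 0 ≤ M)
    (hfM : ∀ j, ∫⁻ q, ENNReal.ofReal (f j q) ^ 2 ≤ ENNReal.ofReal M)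
    (hgM : ∫⁻ q, ENNReal.ofReal (g q) ^ 2 ≤ ENNReal.ofReal M) (hμ : 0 < μ)
    (hθ : M * (3 * √(π / μ)) ≤ 1 / 4)
    (hlim : ∀ h : ℝ × ℝ → ℝ, MemLp h 2 volume →
        Tendsto (fun j => ∫ q, f j q * h q) atTop (nhds (∫ q, g q * h q))) (n : ℕ) (w : ℝ × ℝ) :
    Tendsto (fun j => (duh (fun q => ENNReal.ofReal (f j q)) n w).toReal) atTop
      (nhds (duh (fun q => ENNReal.ofReal (g q)) n w).toReal) := by
  induction n generalizing w with
  | zero => exact tendsto_const_nhds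
  | succ n ih =>
    simp_rw [duh_succ_toReal (hf _) (hf0 _) (duh_ne_top (hf _) hM0 (hfM _) hμ hθ),
      duh_succ_toReal hg hg0 (duh_ne_top hg hM0 hgM hμ hθ)]
    set H : ℝ × ℝ → ℝ := fun q => majo μ q * heatK (w - q).1 (w - q).2 with hH
    set hj : ℕ → ℝ × ℝ → ℝ := fun j q => (duh (fun q => ENNReal.ofReal (f j q)) n q).toReal *
        heatK (w - q).1 (w - q).2 with hhj
    set h : ℝ × ℝ → ℝ := fun q => (duh (fun q => ENNReal.ofReal (g q)) n q).toReal *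
        heatK (w - q).1 (w - q).2 with hh
    have hHm : MemLp H 2 volume := memLp_majo_mul hμ w
    have hheat : Measurable fun q : ℝ × ℝ => heatK (w - q).1 (w - q).2 := by
      unfold heatK; fun_prop
    have hle : ∀ q : ℝ × ℝ, (1 / 2) ^ n * majo μ q ≤ majo μ q := fun q =>
      mul_le_of_le_one_left (majo_nonneg _ _) (pow_le_one₀ (by norm_num) (by norm_num))
    have hj0 : ∀ j q, 0 ≤ hj j q := fun j q => mul_nonneg ENNReal.toReal_nonneg (heatK_nonneg _ _)
    have h0 : ∀ q, 0 ≤ h q := fun q => mul_nonneg ENNReal.toReal_nonneg (heatK_nonneg _ _)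
    have hjH : ∀ j q, hj j q ≤ H q := fun j q => mul_le_mul_of_nonneg_right
      ((duh_toReal_le (hf j) hM0 (hfM j) hμ hθ n q).trans (hle q)) (heatK_nonneg _ _)
    have hhH : ∀ q, h q ≤ H q := fun q => mul_le_mul_of_nonneg_right
      ((duh_toReal_le hg hM0 hgM hμ hθ n q).trans (hle q)) (heatK_nonneg _ _)
    have hjmeas : ∀ j, Measurable (hj j) := fun j =>
      (measurable_duh (hf j).ennreal_ofReal n).ennreal_toReal.mul hheat
    have hmeas : Measurable h := (measurable_duh hg.ennreal_ofReal n).ennreal_toReal.mul hheat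
    have hjm : ∀ j, MemLp (hj j) 2 volume := fun j =>
      hHm.mono (hjmeas j).aestronglyMeasurable (ae_of_all _ fun q => by
        rw [Real.norm_of_nonneg (hj0 j q)]
        exact (hjH j q).trans (le_abs_self _))
    have hm : MemLp h 2 volume :=
      hHm.mono hmeas.aestronglyMeasurable (ae_of_all _ fun q => by
        rw [Real.norm_of_nonneg (h0 q)]
        exact (hhH q).trans (le_abs_self _))
    have hfm : ∀ j, MemLp (f j) 2 volume := fun j =>
      memLp_of_lintegral (hf j) (hf0 j) (ne_top_of_le_ne_top ENNReal.ofReal_ne_top (hfM j))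
    have hstrong : Tendsto (fun j => ∫ q, (hj j q - h q) ^ 2) atTop (nhds 0) := by
      have := tendsto_integral_of_dominated_convergence (F := fun j q => (hj j q - h q) ^ 2)
        (f := fun _ => (0 : ℝ)) (μ := (volume : Measure (ℝ × ℝ))) (fun q => H q ^ 2)
        (fun j => (((hjmeas j).sub hmeas).pow_const 2).aestronglyMeasurable) hHm.integrable_sq
        (fun j => ae_of_all _ fun q => by
          rw [Real.norm_of_nonneg (sq_nonneg _)]
          exact sq_le_sq' (by linarith [hj0 j q, hhH q]) (by linarith [h0 q, hjH j q]))
        (ae_of_all _ fun q => by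
          have h1 := (((ih q).mul_const (heatK (w - q).1 (w - q).2)).sub_const (h q)).pow 2
          simpa [hh, hhj] using h1)
      simpa using this
    have hsq : ∀ j, |∫ q, f j q * (hj j q - h q)| ≤ √(M * ∫ q, (hj j q - h q) ^ 2) := by
      intro j
      apply Real.abs_le_sqrt
      refine (integral_mul_sq_le (hfm j) ((hjm j).sub hm)).trans ?_
      have : ∫ q, f j q ^ 2 ≤ M := by
        have := hfM j
        rw [lintegral_ofReal_sq (hfm j) (hf0 j)] at this
        exact (ENNReal.ofReal_le_ofReal_iff hM0).1 this
      exact mul_le_mul_of_nonneg_right this (integral_nonneg fun q => sq_nonneg _)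
    have hdiff : Tendsto (fun j => ∫ q, f j q * (hj j q - h q)) atTop (nhds 0) := by
      refine squeeze_zero_norm hsq ?_
      have := (hstrong.const_mul M).sqrt
      simpa using this
    have := hdiff.add (hlim h hm)
    rw [zero_add] at this
    refine this.congr fun j => ?_
    have i1 : Integrable (fun q => f j q * (hj j q - h q)) volume :=
      (hfm j).integrable_mul ((hjm j).sub hm)
    have i2 : Integrable (fun q => f j q * h q) volume := (hfm j).integrable_mul hm
    rw [← integral_add i1 i2]
    congr 1; ext q; ring

/-! ### The partition function and the direct method -/

lemma summable_geom_mul (c : ℝ) : Summable fun n : ℕ => ((1 : ℝ) / 2) ^ n * c :=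
  (summable_geometric_of_lt_one (by norm_num) (by norm_num)).mul_right c

lemma summable_duh {f : ℝ × ℝ → ℝ} (hf : Measurable f) {M μ : ℝ} (hM0 : 0 ≤ M)
    (hM : ∫⁻ q, ENNReal.ofReal (f q) ^ 2 ≤ ENNReal.ofReal M) (hμ : 0 < μ)
    (hθ : M * (3 * √(π / μ)) ≤ 1 / 4) (w : ℝ × ℝ) :
    Summable fun n => (duh (fun q => ENNReal.ofReal (f q)) n w).toReal :=
  Summable.of_nonneg_of_le (fun _ => ENNReal.toReal_nonneg)
    (fun n => duh_toReal_le hf hM0 hM hμ hθ n w) (summable_geom_mul _)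

lemma Zsol_eq {f : ℝ × ℝ → ℝ} (hf : Measurable f) (hf0 : ∀ q, 0 ≤ f q) {M μ : ℝ} (hM0 : 0 ≤ M)
    (hM : ∫⁻ q, ENNReal.ofReal (f q) ^ 2 ≤ ENNReal.ofReal M) (hμ : 0 < μ)
    (hθ : M * (3 * √(π / μ)) ≤ 1 / 4) (t x : ℝ) :
    Zsol (fun r z => f (r, z)) t x =
      ∑' n, (duh (fun q => ENNReal.ofReal (f q)) n (t, x)).toReal := by
  unfold Zsol kerP
  simp_rw [kernelTerm_eq hf hf0 (duh_ne_top hf hM0 hM hμ hθ)]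

/-- Any admissible potential may be replaced by a measurable nonnegative one on all of space-time,
with the same norm on the strip. -/
lemma exists_measurable_modulus {σ : ℝ → ℝ → ℝ} {T : ℝ} (hσ : InL2 σ 0 T) :
    ∃ f : ℝ × ℝ → ℝ, Measurable f ∧ (∀ q, 0 ≤ f q) ∧
      ∫⁻ q, ENNReal.ofReal (f q) ^ 2 = ENNReal.ofReal (l2sq σ 0 T) ∧
      ∀ᵐ q : ℝ × ℝ ∂(volume.restrict (Set.Icc 0 T ×ˢ Set.univ)),
        ‖σ q.1 q.2‖ₑ = ENNReal.ofReal (f q) := by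
  set S : Set (ℝ × ℝ) := Set.Icc 0 T ×ˢ Set.univ with hS
  have hSm : MeasurableSet S := measurableSet_Icc.prod MeasurableSet.univ
  have hae := hσ.aestronglyMeasurable.ae_eq_mk
  have hgm := hσ.aestronglyMeasurable.stronglyMeasurable_mk.measurable
  set g := hσ.aestronglyMeasurable.mk _ with hg
  have hfm : Measurable (S.indicator fun q => √(g q)) := (hgm.sqrt).indicator hSm
  have hae2 : ∀ᵐ q : ℝ × ℝ ∂(volume.restrict S), S.indicator (fun q => √(g q)) q =
      |σ q.1 q.2| := by
    filter_upwards [hae, ae_restrict_mem hSm] with q hq hqS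
    rw [Set.indicator_of_mem hqS, ← hq, Real.sqrt_sq_eq_abs]
  refine ⟨S.indicator fun q => √(g q), hfm,
    Set.indicator_nonneg fun q _ => Real.sqrt_nonneg _, ?_, ?_⟩
  · have h1 : ∫⁻ q, ENNReal.ofReal (S.indicator (fun q => √(g q)) q) ^ 2 =
        ∫⁻ q in S, ENNReal.ofReal (S.indicator (fun q => √(g q)) q) ^ 2 := by
      rw [← lintegral_indicator hSm]
      congr 1; ext q
      by_cases hq : q ∈ S
      · simp [hq]
      · simp [hq]
    rw [h1, l2sq, ofReal_integral_eq_lintegral_ofReal hσ (ae_of_all _ fun q => sq_nonneg _)]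
    apply lintegral_congr_ae
    filter_upwards [hae2] with q hq
    rw [hq, ← ENNReal.ofReal_pow (abs_nonneg _), sq_abs]
  · filter_upwards [hae2] with q hq
    rw [hq, ← Real.norm_eq_abs, ofReal_norm]

lemma Zsol_le_of_modulus {σ : ℝ → ℝ → ℝ} {f : ℝ × ℝ → ℝ} {T : ℝ} (hf : Measurable f)
    (hf0 : ∀ q, 0 ≤ f q) {M μ : ℝ} (hM0 : 0 ≤ M)
    (hM : ∫⁻ q, ENNReal.ofReal (f q) ^ 2 ≤ ENNReal.ofReal M) (hμ : 0 < μ)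
    (hθ : M * (3 * √(π / μ)) ≤ 1 / 4)
    (hσ : ∀ᵐ q : ℝ × ℝ ∂(volume.restrict (Set.Icc 0 T ×ˢ Set.univ)),
        ‖σ q.1 q.2‖ₑ = ENNReal.ofReal (f q)) (x : ℝ) :
    Zsol σ T x ≤ Zsol (fun r z => f (r, z)) T x := by
  rw [Zsol_eq hf hf0 hM0 hM hμ hθ]
  have hs := summable_duh hf hM0 hM hμ hθ (T, x)
  have hb : ∀ n, ‖kernelTerm σ 0 0 n T x‖ ≤
      (duh (fun q => ENNReal.ofReal (f q)) n (T, x)).toReal := by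
    intro n
    have := enorm_kernelTerm_le hf.ennreal_ofReal hσ n le_rfl x
    rw [← toReal_enorm]
    exact ENNReal.toReal_mono (duh_ne_top hf hM0 hM hμ hθ n _) this
  exact Summable.tsum_le_tsum (fun n => (le_abs_self _).trans (hb n))
    (Summable.of_norm_bounded hs hb) hs

/-- The constraint is feasible: on a large multiple of the indicator of a box the first Duhamel
iterate alone exceeds any prescribed level. -/
lemma exists_feasible {T : ℝ} (hT : 0 < T) (c : ℝ) (hc : 0 ≤ c) :
    ∃ σ : ℝ → ℝ → ℝ, InL2 σ 0 T ∧ Zsol σ T 0 ≥ c := by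
  set S : Set (ℝ × ℝ) := Set.Ioo 0 T ×ˢ Set.Icc (-1) 1 with hS
  have hSm : MeasurableSet S := measurableSet_Ioo.prod measurableSet_Icc
  have hSv : volume S = ENNReal.ofReal (T * 2) := by
    rw [hS, Measure.volume_eq_prod, Measure.prod_prod, Real.volume_Ioo, Real.volume_Icc,
      ← ENNReal.ofReal_mul (by linarith)]
    congr 1; ring
  let f : ℝ → ℝ × ℝ → ℝ := fun a => S.indicator fun _ => a
  have hfm : ∀ a, Measurable (f a) := fun a => measurable_const.indicator hSm
  have hf0 : ∀ a, 0 ≤ a → ∀ q, 0 ≤ f a q := fun a ha q => Set.indicator_nonneg (fun _ _ => ha) q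
  have hfl : ∀ a, 0 ≤ a → ∫⁻ q, ENNReal.ofReal (f a q) ^ 2 = ENNReal.ofReal (a ^ 2 * (T * 2)) := by
    intro a ha
    have : ∀ q, ENNReal.ofReal (f a q) ^ 2 = S.indicator (fun _ => ENNReal.ofReal (a ^ 2)) q := by
      intro q
      by_cases hq : q ∈ S
      · simp [f, hq, ENNReal.ofReal_pow ha]
      · simp [f, hq]
    simp_rw [this]
    rw [lintegral_indicator hSm, setLIntegral_const, hSv, ← ENNReal.ofReal_mul (by positivity)]
  have hpos : ∀ a, 0 ≤ a → (0 : ℝ) ≤ a ^ 2 * (T * 2) := fun a ha => by positivity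
  have hfin : ∀ a, 0 ≤ a → ∀ n w, duh (fun q => ENNReal.ofReal (f a q)) n w ≠ ⊤ := by
    intro a ha n w
    obtain ⟨μ, hμ, hθ⟩ := exists_rate _ (hpos a ha)
    exact duh_ne_top (hfm a) (hpos a ha) (hfl a ha).le hμ hθ n w
  have hme := measurable_eheat
  have hA0 : duh (fun q => ENNReal.ofReal (f 1 q)) 1 (T, 0) ≠ 0 := by
    intro h
    have h' : ∫⁻ q, ENNReal.ofReal (f 1 q) * (eheat q * eheat ((T, 0) - q)) = 0 := h
    have hmf := hfm 1
    rw [lintegral_eq_zero_iff (by fun_prop)] at h'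
    have h2 : volume S = 0 := by
      refine measure_mono_null ?_ (ae_iff.1 h')
      rintro ⟨r, z⟩ hq
      have hr : r ∈ Set.Ioo 0 T := hq.1
      simp only [Set.mem_ofPred_eq, Pi.zero_apply, mul_eq_zero, not_or]
      refine ⟨?_, ?_, ?_⟩
      · simp [f, hq]
      · exact (ENNReal.ofReal_pos.2 (heatK_pos hr.1 _)).ne'
      · exact (ENNReal.ofReal_pos.2 (heatK_pos (by simpa using hr.2) _)).ne'
    rw [hSv] at h2
    exact absurd (ENNReal.ofReal_eq_zero.1 h2) (by linarith)
  set A := (duh (fun q => ENNReal.ofReal (f 1 q)) 1 (T, 0)).toReal with hA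
  have hApos : 0 < A := ENNReal.toReal_pos hA0 (hfin 1 zero_le_one _ _)
  have ha : 0 ≤ c / A := by positivity
  have hscale : (duh (fun q => ENNReal.ofReal (f (c / A) q)) 1 (T, 0)).toReal = c := by
    have e : duh (fun q => ENNReal.ofReal (f (c / A) q)) 1 (T, 0) =
        ENNReal.ofReal (c / A) * duh (fun q => ENNReal.ofReal (f 1 q)) 1 (T, 0) := by
      have hmf := hfm 1
      simp only [duh]
      rw [← lintegral_const_mul _ (by fun_prop)]
      congr 1; ext q
      by_cases hq : q ∈ S
      · simp [f, hq]
      · simp [f, hq]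
    rw [e, ENNReal.toReal_mul, ENNReal.toReal_ofReal ha, ← hA]
    field_simp
  obtain ⟨μ, hμ, hθ⟩ := exists_rate _ (hpos _ ha)
  refine ⟨fun r z => f (c / A) (r, z), ?_, ?_⟩
  · exact (memLp_of_lintegral (hfm _) (hf0 _ ha)
      (by rw [hfl _ ha]; exact ENNReal.ofReal_ne_top)).integrable_sq.restrict
  · rw [Zsol_eq (hfm _) (hf0 _ ha) (hpos _ ha) (hfl _ ha).le hμ hθ]
    have hs := summable_duh (hfm _) (hpos _ ha) (hfl _ ha).le hμ hθ (T, 0)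
    calc _ ≥ (duh (fun q => ENNReal.ofReal (f (c / A) q)) 1 (T, 0)).toReal :=
          hs.le_tsum 1 fun _ _ => ENNReal.toReal_nonneg
      _ = c := hscale

/-- The variational problem defining `K_λ` admits a minimizer. -/
theorem minimizer_exists (l : ℝ) (hl : 0 < l) :
    ∃ ρ : ℝ → ℝ → ℝ, InL2 ρ 0 (2 * l) ∧
      Zsol ρ (2 * l) 0 ≥ (Real.sqrt (4 * Real.pi * l))⁻¹ * Real.exp l ∧
      (1 / 2) * l2sq ρ 0 (2 * l) =
        sInf { c : ℝ | ∃ σ : ℝ → ℝ → ℝ, InL2 σ 0 (2 * l) ∧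
          Zsol σ (2 * l) 0 ≥ (Real.sqrt (4 * Real.pi * l))⁻¹ * Real.exp l ∧
          c = (1 / 2) * l2sq σ 0 (2 * l) } := by
  set c₀ : ℝ := (Real.sqrt (4 * Real.pi * l))⁻¹ * Real.exp l with hc₀
  set T : ℝ := 2 * l with hT
  have hTpos : 0 < T := by positivity
  set K : Set ℝ := { c : ℝ | ∃ σ : ℝ → ℝ → ℝ, InL2 σ 0 T ∧ Zsol σ T 0 ≥ c₀ ∧
    c = (1 / 2) * l2sq σ 0 T } with hK
  have hl2 : ∀ σ, 0 ≤ l2sq σ 0 T := fun σ => integral_nonneg fun q => sq_nonneg _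
  have hKne : K.Nonempty := by
    obtain ⟨σ, h1, h2⟩ := exists_feasible hTpos c₀ (by positivity)
    exact ⟨_, σ, h1, h2, rfl⟩
  have hKb : BddBelow K := by
    refine ⟨0, ?_⟩
    rintro _ ⟨σ, -, -, rfl⟩
    have := hl2 σ
    positivity
  -- a minimizing sequence, replaced by measurable nonnegative potentials
  obtain ⟨u, hu_anti, hu_lim, hu_mem⟩ := exists_seq_tendsto_sInf hKne hKb
  choose σ hσ hσZ hσu using hu_mem
  choose f hf hf0 hfl hfσ using fun j => exists_measurable_modulus (hσ j)
  set M : ℝ := 2 * u 0 with hM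
  have hlu : ∀ j, l2sq (σ j) 0 T = 2 * u j := fun j => by rw [hσu j]; ring
  have hlM : ∀ j, l2sq (σ j) 0 T ≤ M := fun j => by
    rw [hlu j]; have := hu_anti (Nat.zero_le j); linarith
  have hM0 : 0 ≤ M := (hl2 (σ 0)).trans (hlM 0)
  have hfM : ∀ j, ∫⁻ q, ENNReal.ofReal (f j q) ^ 2 ≤ ENNReal.ofReal M := fun j => by
    rw [hfl j]; exact ENNReal.ofReal_le_ofReal (hlM j)
  have hfm : ∀ j, MemLp (f j) 2 volume := fun j =>
    memLp_of_lintegral (hf j) (hf0 j) (ne_top_of_le_ne_top ENNReal.ofReal_ne_top (hfM j))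
  have hfint : ∀ j, ∫ q, f j q ^ 2 = 2 * u j := fun j => by
    have := hfl j
    rw [lintegral_ofReal_sq (hfm j) (hf0 j), hlu j] at this
    exact (ENNReal.ofReal_eq_ofReal_iff (integral_nonneg fun q => sq_nonneg _)
      (by rw [← hlu j]; exact hl2 _)).1 this
  obtain ⟨g, hg, hg0, hgm, φ, hφ, hlim⟩ := exists_weak_limit_nonneg hfm hf0 (M := M)
    fun j => by rw [hfint j, ← hlu j]; exact hlM j
  have huφ := hu_lim.comp hφ.tendsto_atTop
  -- lower semicontinuity of the norm
  have hg2nn : 0 ≤ ∫ q, g q ^ 2 := integral_nonneg fun q => sq_nonneg _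
  have hgle : ∫ q, g q ^ 2 ≤ 2 * sInf K := by
    have h1 : (∫ q, g q ^ 2) ^ 2 ≤ 2 * sInf K * ∫ q, g q ^ 2 := by
      have h2 := (hlim g hgm).pow 2
      simp_rw [← pow_two (g _)] at h2
      refine le_of_tendsto_of_tendsto' h2 ((huφ.const_mul 2).mul_const _) fun j => ?_
      refine (integral_mul_sq_le (hfm (φ j)) hgm).trans (le_of_eq ?_)
      rw [hfint]; rfl
    have h0 : 0 ≤ sInf K := le_csInf hKne fun c ⟨σ, _, _, hc⟩ => by
      rw [hc]; have := hl2 σ; positivity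
    by_contra hcon
    have hcon := not_le.1 hcon
    nlinarith
  have hgM : ∫⁻ q, ENNReal.ofReal (g q) ^ 2 ≤ ENNReal.ofReal M := by
    rw [lintegral_ofReal_sq hgm hg0]
    apply ENNReal.ofReal_le_ofReal
    have : sInf K ≤ u 0 := csInf_le hKb ⟨σ 0, hσ 0, hσZ 0, hσu 0⟩
    linarith
  -- the constraint passes to the weak limit
  obtain ⟨μ, hμ, hθ⟩ := exists_rate M hM0
  have hZlim : Tendsto (fun j => Zsol (fun r z => f (φ j) (r, z)) T 0) atTop
      (nhds (Zsol (fun r z => g (r, z)) T 0)) := by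
    simp_rw [Zsol_eq (hf _) (hf0 _) hM0 (hfM _) hμ hθ]
    rw [Zsol_eq hg hg0 hM0 hgM hμ hθ]
    refine tendsto_tsum_of_dominated_convergence (summable_geom_mul (majo μ (T, 0)))
      (fun n => tendsto_duh (fun j => hf (φ j)) hg (fun j => hf0 (φ j)) hg0 hM0
        (fun j => hfM (φ j)) hgM hμ hθ hlim n (T, 0))
      (Eventually.of_forall fun j n => ?_)
    rw [Real.norm_of_nonneg ENNReal.toReal_nonneg]
    exact duh_toReal_le (hf _) hM0 (hfM _) hμ hθ n _
  have hgZ : Zsol (fun r z => g (r, z)) T 0 ≥ c₀ :=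
    ge_of_tendsto' hZlim fun j => (hσZ (φ j)).le.trans
      (Zsol_le_of_modulus (hf _) (hf0 _) hM0 (hfM _) hμ hθ (hfσ _) 0)
  have hgL : InL2 (fun r z => g (r, z)) 0 T := hgm.integrable_sq.restrict
  refine ⟨fun r z => g (r, z), hgL, hgZ, le_antisymm ?_ ?_⟩
  · have : l2sq (fun r z => g (r, z)) 0 T ≤ ∫ q, g q ^ 2 :=
      setIntegral_le_integral hgm.integrable_sq (ae_of_all _ fun q => sq_nonneg _)
    linarith
  · exact csInf_le hKb ⟨_, hgL, hgZ, rfl⟩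
end

section
/- For every ζ > 0 there exists δ > 0 such that for every symmetric decreasing φ ∈ L²(ℝ) with φ ≠ 0: if F(φ) ≥ ½ (3/4)^{2/3} ‖φ‖_{L²(ℝ)}^{4/3} (1 − δ), then ‖ φ_{‖φ‖_{L²}^{-2/3}} − r⋆ ‖_{L²(ℝ)} < ζ, where φ_α(x) := α² φ(α x) and r⋆(x) := (3/4)^{2/3} sech²( (3/4)^{1/3} x ). -/
/-!
Only evenness of `φ` matters for stability, besides the `L²` bound: it breaks translation invariance.

Cutting a nearly optimal trial function `g` at `0` and keeping the better half reduces the problem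
to the half-line `(0, ∞)` without boundary condition. By scaling, assume `∫₀^∞ φ² = 1/2` and
`∫₀^∞ g² = 1`; put `n(x) = ∫₀ˣ g²` and `c = (3/4)^{1/3}`. Since `n' = g²`, expanding the square
`(g' + c n g)²` and integrating exact derivatives gives the Gagliardo–Nirenberg identity
`∫ g'² = c ∫ g⁴ - c²/3 + ∫ (g' + c n g)²` (`HalfTrial.integral_deriv_sq`). Together with
`∫ φ g² = (1/(2c)) ∫ φ² + (c/2) ∫ g⁴ - (1/(2c)) ∫ (φ - c g²)²` this yields
`∫ (φ g² - ½ g'²) = c²/2 - (1/(2c)) ∫ (φ - c g²)² - ½ ∫ (g' + c n g)²`,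
which is the sharp bound with its exact deficit. If the deficit is at most `t²/2`, then `φ` is
`L²`-close to `c g²`, and `n` solves the Riccati equation `n' = c (1 - n²)`, `n(0) = 0`, up to a
uniform error `2t` (`HalfTrial.abs_riccati_le`). A barrier argument compares `n` with `tanh (c x)`
(`HalfTrial.abs_mass_sub_tanh_le`), so `g² = n'` is close to `c sech² (c x)` and `φ` is close to
`c² sech² (c x) = r⋆` (`HalfTrial.integral_sub_sech_sq_le`).
-/

open MeasureTheory Real Filter

/-- The ground-state energy functional
`F(φ) = sup { ∫ φ g² − ½ (g')² : ‖g‖_{L²} = 1, g, g' ∈ L² }`. -/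
noncomputable def Ffun (φ : ℝ → ℝ) : ℝ :=
  sSup { c : ℝ | ∃ g g' : ℝ → ℝ,
    (∀ x, HasDerivAt g (g' x) x) ∧
    MeasureTheory.Integrable (fun x => g x ^ 2) ∧
    MeasureTheory.Integrable (fun x => g' x ^ 2) ∧
    (∫ x : ℝ, g x ^ 2) = 1 ∧
    c = ∫ x : ℝ, (φ x * g x ^ 2 - (1 / 2) * g' x ^ 2) }

/-- `φ ∈ L²(ℝ)`. -/
def InL2R (φ : ℝ → ℝ) : Prop := MeasureTheory.Integrable (fun x => φ x ^ 2)

/-- `sech x = 2 / (eˣ + e⁻ˣ)`. -/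
noncomputable def sech (x : ℝ) : ℝ := 2 / (Real.exp x + Real.exp (-x))

/-- `f` is symmetric decreasing: `f(x) = g(|x|)` a.e. for some non-increasing
`g : [0,∞) → [0,∞)`. -/
def SymmDecr (f : ℝ → ℝ) : Prop :=
  ∃ g : ℝ → ℝ, AntitoneOn g (Set.Ici 0) ∧ (∀ x ∈ Set.Ici (0 : ℝ), 0 ≤ g x) ∧
    ∀ᵐ x : ℝ ∂MeasureTheory.volume, f x = g |x|

/-- `ρ` is symmetric decreasing in space: `ρ(s,·)` is symmetric decreasing for a.e.
`s ∈ [0,T]`. -/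
def SymmDecrSpace (ρ : ℝ → ℝ → ℝ) (T : ℝ) : Prop :=
  ∀ᵐ s ∂(MeasureTheory.volume.restrict (Set.Icc 0 T)), SymmDecr (ρ s)

/-- `r⋆(x) = (3/4)^{2/3} sech²((3/4)^{1/3} x)`. -/
noncomputable def rstar (x : ℝ) : ℝ :=
  (3 / 4 : ℝ) ^ ((2 : ℝ) / 3) * sech ((3 / 4 : ℝ) ^ ((1 : ℝ) / 3) * x) ^ 2

open Set Topology

/-! ### Normalized trial functions on the half-line -/

/-- `k` is a trial function on the half-line `(0, ∞)`: it is in `H¹(0, ∞)` with derivative `k'` and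
has unit `L²(0, ∞)` norm. No boundary condition is imposed at `0`. For convenience `k` is
differentiable on the whole line, but its values on `(-∞, 0)` play no role. -/
structure HalfTrial (k k' : ℝ → ℝ) : Prop where
  hasDerivAt : ∀ x, HasDerivAt k (k' x) x
  int_sq : IntegrableOn (fun x => k x ^ 2) (Ioi 0)
  int_deriv_sq : IntegrableOn (fun x => k' x ^ 2) (Ioi 0)
  norm_eq : ∫ x in Ioi (0 : ℝ), k x ^ 2 = 1

/-- The accumulated mass `∫₀ˣ k²`. For the soliton `k² = c sech² (c ·)` it is `tanh (c x)`. -/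
noncomputable def mass (k : ℝ → ℝ) (x : ℝ) : ℝ := ∫ t in (0 : ℝ)..x, k t ^ 2

namespace HalfTrial

variable {k k' : ℝ → ℝ}

lemma continuous (H : HalfTrial k k') : Continuous k :=
  continuous_iff_continuousAt.2 fun x => (H.hasDerivAt x).continuousAt

lemma measurable_deriv (H : HalfTrial k k') : Measurable k' := by
  have : k' = deriv k := funext fun x => (H.hasDerivAt x).deriv.symm
  rw [this]
  exact _root_.measurable_deriv k

lemma int_mul (H : HalfTrial k k') : IntegrableOn (fun x => k x * k' x) (Ioi 0) := by
  refine Integrable.mono' (H.int_sq.add H.int_deriv_sq)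
    (H.continuous.measurable.mul H.measurable_deriv).aestronglyMeasurable
    (ae_of_all _ fun x => ?_)
  simp only [Pi.add_apply, Real.norm_eq_abs, abs_mul]
  nlinarith [sq_nonneg (|k x| - |k' x|), sq_abs (k x), sq_abs (k' x), abs_nonneg (k x),
    abs_nonneg (k' x)]

lemma hasDerivAt_sq (H : HalfTrial k k') (x : ℝ) :
    HasDerivAt (fun y => k y ^ 2) (2 * (k x * k' x)) x := by
  have := (H.hasDerivAt x).fun_pow 2
  exact this.congr_deriv (by push_cast; ring)

lemma tendsto_sq (H : HalfTrial k k') : Tendsto (fun x => k x ^ 2) atTop (𝓝 0) :=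
  tendsto_zero_of_hasDerivAt_of_integrableOn_Ioi (a := 0) (fun x _ => H.hasDerivAt_sq x)
    (H.int_mul.const_mul 2) H.int_sq

lemma exists_bound (H : HalfTrial k k') : ∃ B, 0 ≤ B ∧ ∀ x ∈ Ioi (0 : ℝ), k x ^ 2 ≤ B := by
  refine ⟨∫ y in Ioi (0:ℝ), 2 * |k y * k' y|,
    integral_nonneg fun y => by positivity, fun x hx => ?_⟩
  have h1 : ∫ y in Ioi x, 2 * (k y * k' y) = 0 - k x ^ 2 :=
    integral_Ioi_of_hasDerivAt_of_tendsto' (fun y _ => H.hasDerivAt_sq y)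
      ((H.int_mul.mono_set (Ioi_subset_Ioi (le_of_lt hx))).const_mul 2) H.tendsto_sq
  have h2 : k x ^ 2 = -∫ y in Ioi x, 2 * (k y * k' y) := by rw [h1]; ring
  rw [h2, ← integral_neg]
  calc ∫ y in Ioi x, -(2 * (k y * k' y)) ≤ ∫ y in Ioi x, 2 * |k y * k' y| := by
        refine integral_mono
          ((H.int_mul.mono_set (Ioi_subset_Ioi (le_of_lt hx))).const_mul 2).neg
          ((H.int_mul.mono_set (Ioi_subset_Ioi (le_of_lt hx))).abs.const_mul 2) fun y => ?_
        have := neg_abs_le (k y * k' y)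
        simp only
        linarith
    _ ≤ ∫ y in Ioi (0:ℝ), 2 * |k y * k' y| :=
        setIntegral_mono_set (H.int_mul.abs.const_mul 2)
          (ae_of_all _ fun y => by simp only [Pi.zero_apply]; positivity) (Ioi_subset_Ioi (le_of_lt hx)).eventuallyLE

lemma int_fourth (H : HalfTrial k k') : IntegrableOn (fun x => k x ^ 4) (Ioi 0) := by
  obtain ⟨B, hB, hk⟩ := H.exists_bound
  refine Integrable.mono' (H.int_sq.const_mul B)
    (H.continuous.pow 4).aestronglyMeasurable
    ((ae_restrict_mem measurableSet_Ioi).mono fun x hx => ?_)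
  have := hk x hx
  rw [Real.norm_eq_abs, abs_of_nonneg (by positivity)]
  nlinarith [sq_nonneg (k x)]

lemma hasDerivAt_mass (H : HalfTrial k k') (x : ℝ) : HasDerivAt (mass k) (k x ^ 2) x :=
  ((H.continuous.pow 2).integral_hasStrictDerivAt 0 x).hasDerivAt

lemma continuous_mass (H : HalfTrial k k') : Continuous (mass k) :=
  continuous_iff_continuousAt.2 fun x => (H.hasDerivAt_mass x).continuousAt

lemma mass_zero : mass k 0 = 0 := by simp [mass]

lemma tendsto_mass (H : HalfTrial k k') : Tendsto (mass k) atTop (𝓝 1) := by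
  have := intervalIntegral_tendsto_integral_Ioi 0 H.int_sq tendsto_id
  rwa [H.norm_eq] at this

lemma mass_nonneg {x : ℝ} (hx : 0 ≤ x) : 0 ≤ mass k x :=
  intervalIntegral.integral_nonneg hx fun _ _ => sq_nonneg _

lemma mass_le_one (H : HalfTrial k k') {x : ℝ} (hx : 0 ≤ x) : mass k x ≤ 1 := by
  rw [mass, intervalIntegral.integral_of_le hx, ← H.norm_eq]
  exact setIntegral_mono_set H.int_sq (ae_of_all _ fun y => sq_nonneg _)
    Ioc_subset_Ioi_self.eventuallyLE

/-- The function `k' + c (mass k) k` vanishes exactly for the soliton; its squared `L²` norm is the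
deficit in `HalfTrial.integral_deriv_sq`. -/
lemma int_defect (H : HalfTrial k k') (c : ℝ) :
    IntegrableOn (fun x => (k' x + c * mass k x * k x) ^ 2) (Ioi 0) := by
  refine Integrable.mono' ((H.int_deriv_sq.const_mul 2).add (H.int_sq.const_mul (2 * c ^ 2)))
    ((H.measurable_deriv.add ((H.continuous_mass.measurable.const_mul c).mul
      H.continuous.measurable)).pow_const 2).aestronglyMeasurable
    ((ae_restrict_mem measurableSet_Ioi).mono fun x hx => ?_)
  have h0 := mass_nonneg (k := k) (le_of_lt hx)
  have h1 := H.mass_le_one (le_of_lt hx)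
  rw [Real.norm_eq_abs, abs_of_nonneg (by positivity)]
  simp only [Pi.add_apply]
  have h2 : (c * mass k x * k x) ^ 2 ≤ c ^ 2 * k x ^ 2 := by
    have : mass k x ^ 2 ≤ 1 := by nlinarith
    calc (c * mass k x * k x) ^ 2 = mass k x ^ 2 * (c ^ 2 * k x ^ 2) := by ring
      _ ≤ 1 * (c ^ 2 * k x ^ 2) := by gcongr
      _ = _ := one_mul _
  nlinarith [sq_nonneg (k' x - c * mass k x * k x)]

/-- The sharp Gagliardo–Nirenberg inequality on the half-line, as an identity with an explicit
deficit: with `n = mass k`, one has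
`(k' + c n k)² = k'² - c k⁴ + (c n k² + c² n³ / 3)'`, and `n` runs from `0` to `1`. -/
lemma integral_deriv_sq (H : HalfTrial k k') (c : ℝ) :
    ∫ x in Ioi (0 : ℝ), k' x ^ 2 = c * (∫ x in Ioi (0 : ℝ), k x ^ 4) - c ^ 2 / 3
      + ∫ x in Ioi (0 : ℝ), (k' x + c * mass k x * k x) ^ 2 := by
  have hint : IntegrableOn (fun x => (k' x + c * mass k x * k x) ^ 2 - k' x ^ 2 + c * k x ^ 4)
      (Ioi 0) := ((H.int_defect c).sub H.int_deriv_sq).add (H.int_fourth.const_mul c)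
  have hd : ∀ x, HasDerivAt (fun x => c * (mass k x * k x ^ 2) + c ^ 2 / 3 * mass k x ^ 3)
      ((k' x + c * mass k x * k x) ^ 2 - k' x ^ 2 + c * k x ^ 4) x := by
    intro x
    have h1 := (((H.hasDerivAt_mass x).fun_mul (H.hasDerivAt_sq x)).const_mul c).fun_add
      (((H.hasDerivAt_mass x).fun_pow 3).const_mul (c ^ 2 / 3))
    exact h1.congr_deriv (by push_cast; ring)
  have ht : Tendsto (fun x => c * (mass k x * k x ^ 2) + c ^ 2 / 3 * mass k x ^ 3) atTop
      (𝓝 (c * (1 * 0) + c ^ 2 / 3 * 1 ^ 3)) :=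
    ((H.tendsto_mass.mul H.tendsto_sq).const_mul c).add ((H.tendsto_mass.pow 3).const_mul _)
  have h := integral_Ioi_of_hasDerivAt_of_tendsto' (fun x _ => hd x) hint ht
  have h2 := integral_add ((H.int_defect c).sub H.int_deriv_sq) (H.int_fourth.const_mul c)
  simp only [Pi.sub_apply] at h2
  rw [h2, integral_sub (H.int_defect c) H.int_deriv_sq, integral_const_mul, mass_zero] at h
  linarith

/-- If the deficit is small, the mass `n` almost solves the Riccati equation `n' = c (1 - n²)` of
`tanh (c ·)`, uniformly: `n' + c n²` tends to `c` at infinity and has derivative `2 k (k' + c n k)`,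
whose integral is controlled by Cauchy–Schwarz. -/
lemma abs_riccati_le (H : HalfTrial k k') {c t : ℝ} (ht : 0 < t)
    (hD : ∫ x in Ioi (0 : ℝ), (k' x + c * mass k x * k x) ^ 2 ≤ t ^ 2) {x : ℝ} (hx : 0 ≤ x) :
    |k x ^ 2 + c * mass k x ^ 2 - c| ≤ 2 * t := by
  have hd : ∀ y, HasDerivAt (fun y => k y ^ 2 + c * mass k y ^ 2)
      (2 * (k y * (k' y + c * mass k y * k y))) y := by
    intro y
    have h1 := (H.hasDerivAt_sq y).fun_add (((H.hasDerivAt_mass y).fun_pow 2).const_mul c)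
    exact h1.congr_deriv (by push_cast; ring)
  have hl : Tendsto (fun y => k y ^ 2 + c * mass k y ^ 2) atTop (𝓝 (0 + c * 1 ^ 2)) :=
    H.tendsto_sq.add ((H.tendsto_mass.pow 2).const_mul c)
  have hbd : ∀ y, ‖2 * (k y * (k' y + c * mass k y * k y))‖
      ≤ t * k y ^ 2 + t⁻¹ * (k' y + c * mass k y * k y) ^ 2 := by
    intro y
    generalize k' y + c * mass k y * k y = e
    rw [Real.norm_eq_abs, abs_mul, abs_mul, abs_two]
    have : t * k y ^ 2 + t⁻¹ * e ^ 2 - 2 * (|k y| * |e|) = t⁻¹ * (t * |k y| - |e|) ^ 2 := by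
      rw [← sq_abs (k y), ← sq_abs e]; field_simp; ring
    have h2 : 0 ≤ t⁻¹ * (t * |k y| - |e|) ^ 2 := by positivity
    linarith
  have hB : IntegrableOn (fun y => t * k y ^ 2 + t⁻¹ * (k' y + c * mass k y * k y) ^ 2) (Ioi 0) :=
    (H.int_sq.const_mul t).add ((H.int_defect c).const_mul t⁻¹)
  have hi : IntegrableOn (fun y => 2 * (k y * (k' y + c * mass k y * k y))) (Ioi 0) :=
    Integrable.mono' hB ((H.continuous.measurable.mul
      (H.measurable_deriv.add ((H.continuous_mass.measurable.const_mul c).mul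
      H.continuous.measurable))).const_mul 2).aestronglyMeasurable (ae_of_all _ hbd)
  have h := integral_Ioi_of_hasDerivAt_of_tendsto' (fun y (_ : y ∈ Ici x) => hd y)
    (hi.mono_set (Ioi_subset_Ioi hx)) hl
  have h3 : k x ^ 2 + c * mass k x ^ 2 - c
      = -∫ y in Ioi x, 2 * (k y * (k' y + c * mass k y * k y)) := by rw [h]; ring
  rw [h3, abs_neg]
  calc |∫ y in Ioi x, 2 * (k y * (k' y + c * mass k y * k y))|
      ≤ ∫ y in Ioi x, (t * k y ^ 2 + t⁻¹ * (k' y + c * mass k y * k y) ^ 2) :=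
        norm_integral_le_of_norm_le (hB.mono_set (Ioi_subset_Ioi hx)) (ae_of_all _ hbd)
    _ ≤ ∫ y in Ioi (0:ℝ), (t * k y ^ 2 + t⁻¹ * (k' y + c * mass k y * k y) ^ 2) :=
        setIntegral_mono_set hB (ae_of_all _ fun y => by
          simp only [Pi.zero_apply]; positivity) (Ioi_subset_Ioi hx).eventuallyLE
    _ = t * 1 + t⁻¹ * ∫ y in Ioi (0:ℝ), (k' y + c * mass k y * k y) ^ 2 := by
        rw [integral_add (H.int_sq.const_mul t) ((H.int_defect c).const_mul t⁻¹),
          integral_const_mul, integral_const_mul, H.norm_eq]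
    _ ≤ t * 1 + t⁻¹ * t ^ 2 := by gcongr
    _ = 2 * t := by field_simp; ring

end HalfTrial

/-! ### The hyperbolic tangent -/

lemma tanh_eq_one_sub (x : ℝ) : Real.tanh x = 1 - 2 / (Real.exp (2 * x) + 1) := by
  rw [Real.tanh_eq_sinh_div_cosh, Real.sinh_eq, Real.cosh_eq, Real.exp_neg,
    show 2 * x = x + x by ring, Real.exp_add]
  have := Real.exp_pos x
  field_simp
  ring

lemma tendsto_tanh_mul {c : ℝ} (hc : 0 < c) :
    Tendsto (fun x => Real.tanh (c * x)) atTop (𝓝 1) := by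
  have h1 : Tendsto (fun x : ℝ => Real.exp (2 * (c * x)) + 1) atTop atTop :=
    tendsto_atTop_add_const_right _ _ (Real.tendsto_exp_atTop.comp
      ((tendsto_id.const_mul_atTop hc).const_mul_atTop two_pos))
  have h2 := (h1.const_div_atTop 2).const_sub 1
  simp only [tanh_eq_one_sub]
  simpa using h2

lemma hasDerivAt_tanh_mul (c x : ℝ) :
    HasDerivAt (fun x => Real.tanh (c * x)) (c * (1 - Real.tanh (c * x) ^ 2)) x := by
  have h0 : HasDerivAt (fun x : ℝ => c * x) c x := by simpa using (hasDerivAt_id x).const_mul c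
  have hc : Real.cosh (c * x) ≠ 0 := (Real.cosh_pos _).ne'
  have h := h0.sinh.fun_div h0.cosh hc
  simp only [Real.tanh_eq_sinh_div_cosh]
  exact h.congr_deriv (by field_simp)

lemma sech_sq (x : ℝ) : sech x ^ 2 = 1 - Real.tanh x ^ 2 := by
  have h : sech x = 1 / Real.cosh x := by
    rw [sech, Real.cosh_eq]; field_simp
  rw [h, Real.tanh_eq_sinh_div_cosh]
  have hc := (Real.cosh_pos x).ne'
  have := Real.cosh_sq x
  field_simp
  linarith

lemma tanh_mul_nonneg {c x : ℝ} (hc : 0 ≤ c) (hx : 0 ≤ x) : 0 ≤ Real.tanh (c * x) := by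
  rw [Real.tanh_eq_sinh_div_cosh]
  exact div_nonneg (Real.sinh_nonneg_iff.2 (by positivity)) (Real.cosh_pos _).le

lemma tanh_sq_le_one (x : ℝ) : Real.tanh x ^ 2 ≤ 1 := by
  have := sech_sq x
  nlinarith [sq_nonneg (sech x)]

/-! ### Closeness to the soliton -/

/-- A linear differential inequality `f' + a f ≤ 0` propagates `f ≤ 0` forward from `0`, as
`f exp (∫ a)` is non-increasing. -/
lemma nonpos_of_deriv_add_mul_nonpos {f f' a : ℝ → ℝ} (hf : ∀ x, HasDerivAt f (f' x) x)
    (ha : Continuous a) (h : ∀ x, 0 ≤ x → f' x + a x * f x ≤ 0) (h0 : f 0 ≤ 0)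
    {x : ℝ} (hx : 0 ≤ x) : f x ≤ 0 := by
  have hA : ∀ x, HasDerivAt (fun x => ∫ s in (0 : ℝ)..x, a s) (a x) x := fun x =>
    (ha.integral_hasStrictDerivAt 0 x).hasDerivAt
  have hg : ∀ x, HasDerivAt (fun x => f x * Real.exp (∫ s in (0 : ℝ)..x, a s))
      ((f' x + a x * f x) * Real.exp (∫ s in (0 : ℝ)..x, a s)) x := fun x =>
    ((hf x).fun_mul (hA x).exp).congr_deriv (by ring)
  have hanti : AntitoneOn (fun x => f x * Real.exp (∫ s in (0 : ℝ)..x, a s)) (Ici 0) := by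
    refine antitoneOn_of_deriv_nonpos (convex_Ici 0)
      (fun y _ => (hg y).continuousAt.continuousWithinAt)
      (fun y _ => (hg y).differentiableAt.differentiableWithinAt) fun y hy => ?_
    rw [interior_Ici] at hy
    rw [(hg y).deriv]
    exact mul_nonpos_of_nonpos_of_nonneg (h y (le_of_lt hy)) (Real.exp_pos _).le
  have h1 := hanti self_mem_Ici hx hx
  simp only [intervalIntegral.integral_same, Real.exp_zero, mul_one] at h1
  exact nonpos_of_mul_nonpos_left (h1.trans h0) (Real.exp_pos _)

namespace HalfTrial

variable {k k' : ℝ → ℝ}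

/-- The mass `n` is uniformly close to `τ = tanh (c ·)`. With `P = 2 t / c`, both
`±(n - τ) - P τ` satisfy a differential inequality with coefficient `c (n + τ)`, since
`(n - τ)' + c (n + τ) (n - τ) = n' + c n² - c`. The barrier `P τ` stays bounded by `P`. -/
lemma abs_mass_sub_tanh_le (H : HalfTrial k k') {c t : ℝ} (hc : 0 < c) (ht : 0 < t)
    (hD : ∫ x in Ioi (0 : ℝ), (k' x + c * mass k x * k x) ^ 2 ≤ t ^ 2) {x : ℝ} (hx : 0 ≤ x) :
    |mass k x - Real.tanh (c * x)| ≤ 2 * t / c := by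
  have ha : Continuous fun x => c * (mass k x + Real.tanh (c * x)) :=
    continuous_const.mul (H.continuous_mass.add (continuous_iff_continuousAt.2 fun x =>
      (hasDerivAt_tanh_mul c x).continuousAt))
  have hc' : c * (2 * t / c) = 2 * t := by field_simp
  set P := 2 * t / c with hP
  have hP0 : 0 ≤ P := by positivity
  have hτ1 : Real.tanh (c * x) ≤ 1 := by
    nlinarith [tanh_sq_le_one (c * x), tanh_mul_nonneg hc.le hx]
  have up : mass k x - Real.tanh (c * x) - P * Real.tanh (c * x) ≤ 0 := by
    refine nonpos_of_deriv_add_mul_nonpos (f := fun x =>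
      mass k x - Real.tanh (c * x) - P * Real.tanh (c * x))
      (fun y => ((H.hasDerivAt_mass y).fun_sub (hasDerivAt_tanh_mul c y)).fun_sub
        ((hasDerivAt_tanh_mul c y).const_mul P)) ha (fun y hy => ?_) (by simp [mass_zero]) hx
    have h1 := (abs_le.1 (H.abs_riccati_le ht hD hy)).2
    have h2 := mul_nonneg (mass_nonneg (k := k) hy) (tanh_mul_nonneg hc.le hy)
    have h3 := mul_nonneg ht.le h2
    linear_combination h1 + 2 * h3 + (-1 - mass k y * Real.tanh (c * y)) * hc'
  have lo : Real.tanh (c * x) - mass k x - P * Real.tanh (c * x) ≤ 0 := by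
    refine nonpos_of_deriv_add_mul_nonpos (f := fun x =>
      Real.tanh (c * x) - mass k x - P * Real.tanh (c * x))
      (fun y => ((hasDerivAt_tanh_mul c y).fun_sub (H.hasDerivAt_mass y)).fun_sub
        ((hasDerivAt_tanh_mul c y).const_mul P)) ha (fun y hy => ?_) (by simp [mass_zero]) hx
    have h1 := (abs_le.1 (H.abs_riccati_le ht hD hy)).1
    have h2 := mul_nonneg (mass_nonneg (k := k) hy) (tanh_mul_nonneg hc.le hy)
    have h3 := mul_nonneg ht.le h2
    linear_combination h1 + 2 * h3 + (-1 - mass k y * Real.tanh (c * y)) * hc'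
  have := mul_le_mul_of_nonneg_left hτ1 hP0
  exact abs_le.2 ⟨by linarith, by linarith⟩

/-- Feeding the closeness of `n` to `tanh (c ·)` back into `n' ≈ c (1 - n²)` makes the density
`k² = n'` uniformly close to that of the soliton. -/
lemma abs_sq_sub_sech_le (H : HalfTrial k k') {c t : ℝ} (hc : 0 < c) (ht : 0 < t)
    (hD : ∫ x in Ioi (0 : ℝ), (k' x + c * mass k x * k x) ^ 2 ≤ t ^ 2) {x : ℝ} (hx : 0 ≤ x) :
    |k x ^ 2 - c * sech (c * x) ^ 2| ≤ 6 * t := by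
  have h1 := H.abs_riccati_le ht hD hx
  have h2 := H.abs_mass_sub_tanh_le hc ht hD hx
  have hτ1 : Real.tanh (c * x) ≤ 1 := by
    nlinarith [tanh_sq_le_one (c * x), tanh_mul_nonneg hc.le hx]
  have h3 : |mass k x + Real.tanh (c * x)| ≤ 2 := by
    rw [abs_of_nonneg (add_nonneg (mass_nonneg hx) (tanh_mul_nonneg hc.le hx))]
    linarith [H.mass_le_one hx]
  have h4 : k x ^ 2 - c * sech (c * x) ^ 2 = (k x ^ 2 + c * mass k x ^ 2 - c)
      - c * ((mass k x - Real.tanh (c * x)) * (mass k x + Real.tanh (c * x))) := by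
    rw [sech_sq]; ring
  rw [h4]
  refine (abs_sub _ _).trans ?_
  rw [abs_mul, abs_mul, abs_of_pos hc]
  calc _ ≤ 2 * t + c * (2 * t / c * 2) := by gcongr
    _ = 6 * t := by field_simp; ring

end HalfTrial

lemma integrableOn_sech_sq {c : ℝ} (hc : 0 < c) :
    IntegrableOn (fun x => c * sech (c * x) ^ 2) (Ioi 0) := by
  simp only [sech_sq]
  exact integrableOn_Ioi_deriv_of_nonneg' (fun x _ => hasDerivAt_tanh_mul c x)
    (fun x _ => mul_nonneg hc.le (sub_nonneg.2 (tanh_sq_le_one _))) (tendsto_tanh_mul hc)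

lemma integral_sech_sq {c : ℝ} (hc : 0 < c) :
    ∫ x in Ioi (0 : ℝ), c * sech (c * x) ^ 2 = 1 := by
  have hi := integrableOn_sech_sq hc
  simp only [sech_sq] at hi ⊢
  rw [integral_Ioi_of_hasDerivAt_of_tendsto' (fun x _ => hasDerivAt_tanh_mul c x) hi
    (tendsto_tanh_mul hc)]
  simp

/-- Stability on the half-line. Completing the square in `∫ ψ k²` and using
`HalfTrial.integral_deriv_sq`, the energy equals
`(1 / (2 c)) ∫ ψ² + c² / 6 - (1 / (2 c)) ‖ψ - c k²‖² - ½ ‖k' + c n k‖²`, and the first two terms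
add up to the optimum `c² / 2` because `c³ = 3 / 4`. So both squares are small; the first makes
`ψ` close to `c k²`, the second makes `k²` close to the soliton density. -/
lemma HalfTrial.integral_sub_sech_sq_le {k k' : ℝ → ℝ} (H : HalfTrial k k') {ψ : ℝ → ℝ} {c t : ℝ}
    (ht : 0 < t) (hc0 : 0 < c) (hc1 : c ≤ 1) (hc : c ^ 3 = 3 / 4) (hψm : Measurable ψ)
    (hψi : IntegrableOn (fun x => ψ x ^ 2) (Ioi 0))
    (hψ : ∫ x in Ioi (0 : ℝ), ψ x ^ 2 = 1 / 2)
    (hE : c ^ 2 / 2 - t ^ 2 / 2 ≤ ∫ x in Ioi (0 : ℝ), (ψ x * k x ^ 2 - 1 / 2 * k' x ^ 2)) :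
    ∫ x in Ioi (0 : ℝ), (ψ x - c ^ 2 * sech (c * x) ^ 2) ^ 2 ≤ 2 * t ^ 2 + 24 * t := by
  have hi : IntegrableOn (fun x => ψ x * k x ^ 2) (Ioi 0) := by
    refine Integrable.mono' (hψi.add H.int_fourth)
      (hψm.mul (H.continuous.measurable.pow_const 2)).aestronglyMeasurable
      (ae_of_all _ fun x => ?_)
    simp only [Pi.add_apply, Real.norm_eq_abs]
    rw [abs_le]
    constructor <;> nlinarith [sq_nonneg (ψ x + k x ^ 2), sq_nonneg (ψ x - k x ^ 2)]
  have hSe : (fun x => (ψ x - c * k x ^ 2) ^ 2)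
      = fun x => ψ x ^ 2 - 2 * c * (ψ x * k x ^ 2) + c ^ 2 * k x ^ 4 := by
    funext x; ring
  have hS0 : IntegrableOn (fun x => ψ x ^ 2 - 2 * c * (ψ x * k x ^ 2)) (Ioi 0) :=
    hψi.sub (hi.const_mul _)
  have hSi : IntegrableOn (fun x => (ψ x - c * k x ^ 2) ^ 2) (Ioi 0) := by
    rw [hSe]; exact hS0.add (H.int_fourth.const_mul _)
  have hS : ∫ x in Ioi (0 : ℝ), (ψ x - c * k x ^ 2) ^ 2 = 1 / 2
      - 2 * c * (∫ x in Ioi (0 : ℝ), ψ x * k x ^ 2) + c ^ 2 * ∫ x in Ioi (0 : ℝ), k x ^ 4 := by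
    rw [hSe, integral_add hS0 (H.int_fourth.const_mul _), integral_sub hψi (hi.const_mul _),
      integral_const_mul, integral_const_mul, hψ]
  rw [integral_sub hi (H.int_deriv_sq.const_mul _), integral_const_mul,
    H.integral_deriv_sq c] at hE
  have hSnn : 0 ≤ ∫ x in Ioi (0 : ℝ), (ψ x - c * k x ^ 2) ^ 2 :=
    integral_nonneg fun _ => sq_nonneg _
  have hDnn : 0 ≤ ∫ x in Ioi (0 : ℝ), (k' x + c * mass k x * k x) ^ 2 :=
    integral_nonneg fun _ => sq_nonneg _
  have key : (∫ x in Ioi (0 : ℝ), (ψ x - c * k x ^ 2) ^ 2)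
      + c * (∫ x in Ioi (0 : ℝ), (k' x + c * mass k x * k x) ^ 2) ≤ c * t ^ 2 := by
    rw [hS]
    have := mul_le_mul_of_nonneg_left hE hc0.le
    linear_combination 2 * this + (-2 / 3 : ℝ) * hc
  have hD : ∫ x in Ioi (0 : ℝ), (k' x + c * mass k x * k x) ^ 2 ≤ t ^ 2 :=
    le_of_mul_le_mul_left (by linarith) hc0
  have hSt : ∫ x in Ioi (0 : ℝ), (ψ x - c * k x ^ 2) ^ 2 ≤ t ^ 2 := by
    have := mul_nonneg hc0.le hDnn
    nlinarith [sq_nonneg t]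
  have hR : IntegrableOn (fun x => 2 * (ψ x - c * k x ^ 2) ^ 2
      + 12 * t * (k x ^ 2 + c * sech (c * x) ^ 2)) (Ioi 0) :=
    (hSi.const_mul 2).add ((H.int_sq.add (integrableOn_sech_sq hc0)).const_mul _)
  have hpt : ∀ x ∈ Ioi (0 : ℝ), (ψ x - c ^ 2 * sech (c * x) ^ 2) ^ 2 ≤
      2 * (ψ x - c * k x ^ 2) ^ 2 + 12 * t * (k x ^ 2 + c * sech (c * x) ^ 2) := by
    intro x hx
    have h1 := H.abs_sq_sub_sech_le hc0 ht hD (le_of_lt hx)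
    have hu : 0 ≤ k x ^ 2 := sq_nonneg _
    have hv : 0 ≤ c * sech (c * x) ^ 2 := by positivity
    have e1 : ψ x - c ^ 2 * sech (c * x) ^ 2 = (ψ x - c * k x ^ 2)
      + c * (k x ^ 2 - c * sech (c * x) ^ 2) := by ring
    rw [e1]
    generalize k x ^ 2 = u at *
    generalize c * sech (c * x) ^ 2 = v at *
    -- the sup bound is turned into an integrable one, both densities having mass `1`
    have h2 : (u - v) ^ 2 ≤ 6 * t * (u + v) := by
      have h3 : |u - v| ≤ u + v := abs_le.2 ⟨by linarith, by linarith⟩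
      calc (u - v) ^ 2 = |u - v| * |u - v| := by rw [← sq_abs]; ring
        _ ≤ 6 * t * (u + v) := by gcongr
    have h4 : (c * (u - v)) ^ 2 ≤ (u - v) ^ 2 := by
      have : c ^ 2 ≤ 1 := by nlinarith
      rw [mul_pow]
      nlinarith [sq_nonneg (u - v)]
    nlinarith [sq_nonneg ((ψ x - c * u) - c * (u - v))]
  calc ∫ x in Ioi (0 : ℝ), (ψ x - c ^ 2 * sech (c * x) ^ 2) ^ 2
      ≤ ∫ x in Ioi (0 : ℝ), (2 * (ψ x - c * k x ^ 2) ^ 2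
          + 12 * t * (k x ^ 2 + c * sech (c * x) ^ 2)) :=
        integral_mono_of_nonneg (ae_of_all _ fun _ => sq_nonneg _) hR
          ((ae_restrict_mem measurableSet_Ioi).mono hpt)
    _ = 2 * (∫ x in Ioi (0 : ℝ), (ψ x - c * k x ^ 2) ^ 2) + 12 * t * (1 + 1) := by
        have h5 := integral_add (hSi.const_mul 2)
          ((H.int_sq.add (integrableOn_sech_sq hc0)).const_mul (12 * t))
        simp only [Pi.add_apply] at h5
        rw [h5, integral_const_mul, integral_const_mul,
          integral_add H.int_sq (integrableOn_sech_sq hc0), H.norm_eq, integral_sech_sq hc0]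
    _ ≤ 2 * t ^ 2 + 24 * t := by linarith

/-! ### Reduction to the half-line -/

/-- For even `φ`, cutting a trial function on the line at `0` leaves a half (reflected if it is the
left one) whose Rayleigh quotient on `(0, ∞)` is at least as large. -/
lemma exists_half_trial {φ g g' : ℝ → ℝ} (hφ : ∀ x, φ |x| = φ x) {l : ℝ} (hl : 0 ≤ l)
    (hg : ∀ x, HasDerivAt g (g' x) x) (hi : Integrable fun x => g x ^ 2)
    (hi' : Integrable fun x => g' x ^ 2) (h1 : ∫ x, g x ^ 2 = 1)
    (hE : l < ∫ x, (φ x * g x ^ 2 - 1 / 2 * g' x ^ 2)) :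
    ∃ G G' : ℝ → ℝ, (∀ x, HasDerivAt G (G' x) x) ∧ IntegrableOn (fun x => G x ^ 2) (Ioi 0) ∧
      IntegrableOn (fun x => G' x ^ 2) (Ioi 0) ∧
      l * (∫ x in Ioi (0 : ℝ), G x ^ 2) <
        ∫ x in Ioi (0 : ℝ), (φ x * G x ^ 2 - 1 / 2 * G' x ^ 2) := by
  -- a non-integrable energy density would have Bochner integral `0`, which is not above `l ≥ 0`
  have hint : Integrable fun x => φ x * g x ^ 2 - 1 / 2 * g' x ^ 2 := by
    by_contra h
    rw [integral_undef h] at hE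
    linarith
  have e1 := intervalIntegral.integral_Iic_add_Ioi (b := 0) hint.integrableOn hint.integrableOn
  have e2 := intervalIntegral.integral_Iic_add_Ioi (b := 0) hi.integrableOn hi.integrableOn
  have e0 : ∀ f : ℝ → ℝ, ∫ x in Iic (0 : ℝ), f x = ∫ x in Ioi (0 : ℝ), f (-x) := fun f => by
    rw [integral_comp_neg_Ioi, neg_zero]
  rw [e0] at e1 e2
  by_cases hr : l * (∫ x in Ioi (0 : ℝ), g x ^ 2) <
      ∫ x in Ioi (0 : ℝ), (φ x * g x ^ 2 - 1 / 2 * g' x ^ 2)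
  · exact ⟨g, g', hg, hi.integrableOn, hi'.integrableOn, hr⟩
  · refine ⟨fun x => g (-x), fun x => -g' (-x), fun x => ?_, hi.comp_neg.integrableOn, ?_, ?_⟩
    · exact ((hg (-x)).comp x (hasDerivAt_neg x)).congr_deriv (by ring)
    · simpa using hi'.comp_neg.integrableOn
    · have e3 : ∀ x, φ (-x) = φ x := fun x => by rw [← hφ, abs_neg, hφ]
      simp only [e3] at e1
      simp only [neg_sq]
      rw [h1] at e2
      rw [← e1] at hE
      have e4 := congrArg (fun z => l * z) e2
      linarith

/-- A half-line Rayleigh quotient above `l` becomes, after dilating by `α` and normalizing the trial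
function, an energy of at least `α² l` for the potential `α² φ(α ·)`. -/
lemma exists_normalized {φ G G' : ℝ → ℝ} {l α : ℝ} (hα : 0 < α)
    (hG : ∀ x, HasDerivAt G (G' x) x) (hi : IntegrableOn (fun x => G x ^ 2) (Ioi 0))
    (hi' : IntegrableOn (fun x => G' x ^ 2) (Ioi 0))
    (hE : l * (∫ x in Ioi (0 : ℝ), G x ^ 2) <
        ∫ x in Ioi (0 : ℝ), (φ x * G x ^ 2 - 1 / 2 * G' x ^ 2)) :
    ∃ K K' : ℝ → ℝ, HalfTrial K K' ∧
      α ^ 2 * l ≤ ∫ x in Ioi (0 : ℝ), (α ^ 2 * φ (α * x) * K x ^ 2 - 1 / 2 * K' x ^ 2) := by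
  have hm0 : 0 ≤ ∫ x in Ioi (0 : ℝ), G x ^ 2 := integral_nonneg fun _ => sq_nonneg _
  have hm : 0 < ∫ x in Ioi (0 : ℝ), G x ^ 2 := by
    refine hm0.lt_of_ne fun h0 => ?_
    have hz := (integral_eq_zero_iff_of_nonneg (fun _ => sq_nonneg _) hi).1 h0.symm
    have hle : ∫ x in Ioi (0 : ℝ), (φ x * G x ^ 2 - 1 / 2 * G' x ^ 2) ≤ 0 := by
      refine integral_nonpos_of_ae ?_
      filter_upwards [hz] with x hx
      simp only [Pi.zero_apply] at hx ⊢
      rw [hx]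
      nlinarith [sq_nonneg (G' x)]
    rw [← h0] at hE
    linarith
  set m := ∫ x in Ioi (0 : ℝ), G x ^ 2 with hmdef
  have hs : √(α / m) ^ 2 = α / m := Real.sq_sqrt (by positivity)
  set s := √(α / m)
  have hiα : IntegrableOn (fun x => G (α * x) ^ 2) (Ioi 0) :=
    (integrableOn_Ioi_comp_mul_left_iff (fun x => G x ^ 2) 0 hα).2 (by simpa using hi)
  have hi'α : IntegrableOn (fun x => G' (α * x) ^ 2) (Ioi 0) :=
    (integrableOn_Ioi_comp_mul_left_iff (fun x => G' x ^ 2) 0 hα).2 (by simpa using hi')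
  refine ⟨fun x => s * G (α * x), fun x => s * (α * G' (α * x)), ⟨fun x => ?_, ?_, ?_, ?_⟩, ?_⟩
  · have h0 : HasDerivAt (fun x : ℝ => α * x) α x := by simpa using (hasDerivAt_id x).const_mul α
    exact (((hG (α * x)).comp x h0).const_mul s).congr_deriv (by ring)
  · simp only [mul_pow]
    exact hiα.const_mul _
  · simp only [mul_pow]
    exact (hi'α.const_mul _).const_mul _
  · simp only [mul_pow]
    rw [integral_const_mul, integral_comp_mul_left_Ioi (fun x => G x ^ 2) 0 hα, mul_zero, hs,
      smul_eq_mul, ← hmdef]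
    field_simp
  · have e : (fun x => α ^ 2 * φ (α * x) * (s * G (α * x)) ^ 2
        - 1 / 2 * (s * (α * G' (α * x))) ^ 2) = fun x => (α ^ 2 * s ^ 2) *
          (fun y => φ y * G y ^ 2 - 1 / 2 * G' y ^ 2) (α * x) := by
      funext x; ring
    rw [e, integral_const_mul, integral_comp_mul_left_Ioi
      (fun y => φ y * G y ^ 2 - 1 / 2 * G' y ^ 2) 0 hα, mul_zero, hs, smul_eq_mul]
    calc α ^ 2 * l = α ^ 2 * (α / m) * (α⁻¹ * (l * m)) := by field_simp
      _ ≤ _ := by gcongr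

/-- Since `l ≥ 0`, this also covers the cases where `sSup` takes its default value `0`. -/
lemma exists_of_lt_Ffun {φ : ℝ → ℝ} {l : ℝ} (hl : 0 ≤ l) (h : l < Ffun φ) :
    ∃ g g' : ℝ → ℝ, (∀ x, HasDerivAt g (g' x) x) ∧ (Integrable fun x => g x ^ 2) ∧
      (Integrable fun x => g' x ^ 2) ∧ ∫ x, g x ^ 2 = 1 ∧
      l < ∫ x, (φ x * g x ^ 2 - 1 / 2 * g' x ^ 2) := by
  by_contra! hcon
  refine absurd h (not_lt.2 (Real.sSup_le ?_ hl))
  rintro _ ⟨g, g', h1, h2, h3, h4, rfl⟩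
  exact hcon g g' h1 h2 h3 h4

/-- Quantitative stability for an even potential: an energy deficit `t² / 2` (relative to the optimum)
forces the squared `L²` distance to `r⋆` to be at most `52 t`. -/
lemma near_optimal_even {φ : ℝ → ℝ} (hφm : Measurable φ) (hev : ∀ x, φ |x| = φ x)
    (hφ : InL2R φ) (hN : 0 < ∫ x, φ x ^ 2) {t : ℝ} (ht : 0 < t) (ht1 : t ≤ 1)
    (hF : Ffun φ ≥ (1 / 2) * (3 / 4 : ℝ) ^ ((2 : ℝ) / 3) *
          (∫ x : ℝ, φ x ^ 2) ^ ((2 : ℝ) / 3) * (1 - t ^ 2 / 2)) :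
    ∫ x : ℝ, (((∫ y : ℝ, φ y ^ 2) ^ (-(1 : ℝ) / 3)) ^ 2 *
              φ ((∫ y : ℝ, φ y ^ 2) ^ (-(1 : ℝ) / 3) * x) - rstar x) ^ 2 ≤ 52 * t := by
  unfold InL2R at hφ
  have hc0 : (0 : ℝ) < (3 / 4 : ℝ) ^ ((1 : ℝ) / 3) := by positivity
  have hc1 : (3 / 4 : ℝ) ^ ((1 : ℝ) / 3) ≤ 1 :=
    Real.rpow_le_one (by norm_num) (by norm_num) (by norm_num)
  have hc2 : (3 / 4 : ℝ) ^ ((2 : ℝ) / 3) = ((3 / 4 : ℝ) ^ ((1 : ℝ) / 3)) ^ 2 := by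
    rw [← Real.rpow_mul_natCast (by norm_num)]; norm_num
  have hc3 : ((3 / 4 : ℝ) ^ ((1 : ℝ) / 3)) ^ 3 = 3 / 4 := by
    rw [← Real.rpow_mul_natCast (by norm_num)]; norm_num
  simp only [rstar]
  rw [hc2] at hF ⊢
  clear hc2
  generalize (3 / 4 : ℝ) ^ ((1 : ℝ) / 3) = c at *
  have hhalf : ∫ x, φ x ^ 2 = 2 * ∫ x in Ioi (0 : ℝ), φ x ^ 2 := by
    rw [← integral_comp_abs (f := fun x => φ x ^ 2)]
    simp only [hev]
  set N := ∫ x, φ x ^ 2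
  have hα : 0 < N ^ (-(1 : ℝ) / 3) := by positivity
  have hα2 : (N ^ (-(1 : ℝ) / 3)) ^ 2 * N ^ ((2 : ℝ) / 3) = 1 := by
    rw [← Real.rpow_mul_natCast hN.le, ← Real.rpow_add hN]; norm_num
  have hα3 : (N ^ (-(1 : ℝ) / 3)) ^ 3 * N = 1 := by
    rw [← Real.rpow_mul_natCast hN.le, ← Real.rpow_add_one hN.ne']; norm_num
  generalize N ^ (-(1 : ℝ) / 3) = α at *
  have hM : 0 < N ^ ((2 : ℝ) / 3) := by positivity
  generalize N ^ ((2 : ℝ) / 3) = M at *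
  have ht2 : t ^ 2 ≤ 1 := by nlinarith
  -- the deficit is doubled from `t² / 2` to `t²`, so that a trial function strictly above it exists
  have hl0 : 0 ≤ 1 / 2 * c ^ 2 * M * (1 - t ^ 2) := by
    have : 0 ≤ 1 - t ^ 2 := by linarith
    positivity
  have hlF : 1 / 2 * c ^ 2 * M * (1 - t ^ 2) < Ffun φ := by
    refine lt_of_lt_of_le ?_ hF
    gcongr
    nlinarith
  obtain ⟨g, g', h1, h2, h3, h4, h5⟩ := exists_of_lt_Ffun hl0 hlF
  obtain ⟨G, G', k1, k2, k3, k4⟩ := exists_half_trial hev hl0 h1 h2 h3 h4 h5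
  obtain ⟨K, K', H, hE⟩ := exists_normalized hα k1 k2 k3 k4
  have hψi : IntegrableOn (fun x => (α ^ 2 * φ (α * x)) ^ 2) (Ioi 0) := by
    simp only [mul_pow]
    exact ((integrableOn_Ioi_comp_mul_left_iff (fun x => φ x ^ 2) 0 hα).2
      hφ.integrableOn).const_mul _
  have hψ : ∫ x in Ioi (0 : ℝ), (α ^ 2 * φ (α * x)) ^ 2 = 1 / 2 := by
    simp only [mul_pow]
    rw [integral_const_mul, integral_comp_mul_left_Ioi (fun x => φ x ^ 2) 0 hα, mul_zero,
      smul_eq_mul]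
    rw [hhalf] at hα3
    field_simp
    linarith
  have hb := H.integral_sub_sech_sq_le ht hc0 hc1 hc3
    (ψ := fun x => α ^ 2 * φ (α * x)) ((hφm.comp (measurable_const_mul α)).const_mul _) hψi hψ (by
      refine le_trans ?_ hE
      have : c ^ 2 * t ^ 2 ≤ 1 * t ^ 2 := by gcongr; nlinarith
      linear_combination (1 / 2 : ℝ) * this - 1 / 2 * c ^ 2 * (1 - t ^ 2) * hα2)
  have hsech : ∀ x, sech (c * |x|) = sech (c * x) := by
    intro x
    rcases abs_choice x with h | h <;> rw [h]
    rw [sech, sech, mul_neg, neg_neg, add_comm]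
  have hφa : ∀ x, φ (α * |x|) = φ (α * x) := by
    intro x
    rw [← hev (α * x), abs_mul, abs_of_pos hα]
  have hdouble := integral_comp_abs
    (f := fun x => (α ^ 2 * φ (α * x) - c ^ 2 * sech (c * x) ^ 2) ^ 2)
  simp only [hsech, hφa] at hdouble
  rw [hdouble]
  nlinarith

/-- Quantitative stability: if `φ` is symmetric decreasing and `F(φ)` is within factor
`(1−δ)` of the optimal bound, then the normalization of `φ` is `L²`-close to `r⋆`. -/
theorem near_optimal_implies_close_to_rstar :
    ∀ ζ > (0 : ℝ), ∃ δ > (0 : ℝ), ∀ φ : ℝ → ℝ, InL2R φ → SymmDecr φ →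
      ¬ (∀ᵐ x : ℝ ∂MeasureTheory.volume, φ x = 0) →
      Ffun φ ≥ (1 / 2) * (3 / 4 : ℝ) ^ ((2 : ℝ) / 3) *
          (∫ x : ℝ, φ x ^ 2) ^ ((2 : ℝ) / 3) * (1 - δ) →
      Real.sqrt (∫ x : ℝ,
          (((∫ y : ℝ, φ y ^ 2) ^ (-(1 : ℝ) / 3)) ^ 2 *
              φ ((∫ y : ℝ, φ y ^ 2) ^ (-(1 : ℝ) / 3) * x) - rstar x) ^ 2) < ζ := by
  intro ζ hζ
  set t := min 1 (ζ ^ 2 / 53) with htdef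
  have ht : 0 < t := by positivity
  refine ⟨t ^ 2 / 2, by positivity, fun φ hφ hsd hne hF => ?_⟩
  obtain ⟨g, hg, -, hae⟩ := hsd
  -- `φ` itself is only a.e. measurable; from here on it is replaced by the exactly even, Borel
  -- function `x ↦ g |x|`
  have hm : Measurable fun x : ℝ => g |x| := by
    have hanti : Antitone fun x : ℝ => g (max x 0) := fun x y hxy =>
      hg (mem_Ici.2 (le_max_right _ _)) (mem_Ici.2 (le_max_right _ _)) (max_le_max_right 0 hxy)
    have := hanti.measurable.comp (measurable_id.abs : Measurable fun x : ℝ => |x|)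
    convert this using 2 with x
    simp
  have hsq : (fun x => φ x ^ 2) =ᵐ[volume] fun x => g |x| ^ 2 := by
    filter_upwards [hae] with x hx
    rw [hx]
  have hN : 0 < ∫ x, φ x ^ 2 := by
    refine (integral_nonneg fun _ => sq_nonneg _).lt_of_ne fun h0 => hne ?_
    filter_upwards [(integral_eq_zero_iff_of_nonneg (fun _ => sq_nonneg _) hφ).1 h0.symm]
      with x hx
    simpa using hx
  have hNeq : ∫ x, φ x ^ 2 = ∫ x, g |x| ^ 2 := integral_congr_ae hsq
  have hFeq : Ffun φ = Ffun fun x => g |x| := by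
    have : ∀ k k' : ℝ → ℝ, ∫ x, (φ x * k x ^ 2 - 1 / 2 * k' x ^ 2)
        = ∫ x, (g |x| * k x ^ 2 - 1 / 2 * k' x ^ 2) := fun k k' => by
      refine integral_congr_ae ?_
      filter_upwards [hae] with x hx
      rw [hx]
    simp only [Ffun, this]
  have hα : 0 < (∫ x, φ x ^ 2) ^ (-(1 : ℝ) / 3) := by positivity
  have hIeq : ∀ α : ℝ, 0 < α → ∫ x, (α ^ 2 * φ (α * x) - rstar x) ^ 2
      = ∫ x, (α ^ 2 * g |α * x| - rstar x) ^ 2 := by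
    -- substituting `y = α x` avoids pulling null sets back along the dilation
    intro α hα
    have e : ∀ f : ℝ → ℝ, ∫ x, (α ^ 2 * f (α * x) - rstar x) ^ 2
        = |α⁻¹| * ∫ y, (α ^ 2 * f y - rstar (α⁻¹ * y)) ^ 2 := fun f => by
      have := Measure.integral_comp_mul_left (fun y => (α ^ 2 * f y - rstar (α⁻¹ * y)) ^ 2) α
      rw [smul_eq_mul] at this
      rw [← this]
      simp only [inv_mul_cancel_left₀ hα.ne']
    rw [e φ, e fun x => g |x|]
    congr 1
    refine integral_congr_ae ?_
    filter_upwards [hae] with x hx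
    rw [hx]
  rw [hIeq _ hα]
  rw [hFeq, hNeq] at hF
  rw [hNeq] at hN ⊢
  have hb := near_optimal_even hm (by simp) (hφ.congr hsq) hN ht (min_le_left _ _) hF
  refine (Real.sqrt_lt' hζ).2 (hb.trans_lt ?_)
  have : t ≤ ζ ^ 2 / 53 := min_le_right _ _
  nlinarith [sq_pos_of_pos hζ]
end

section
/- Let ρ*(t,x) := sech²(x) on [0,2λ]×ℝ, and let h*(t,x) := −|x| + t/2 when |x| ≤ t and h*(t,x) := −x²/(2t) when |x| ≥ t. Then for every δ ∈ (0,1), lim_{λ→∞} sup_{(t,x) ∈ [δ,2]×[−δ^{-1}, δ^{-1}]} | λ^{-1} log( λ^{1/2} Z(ρ*; λt, λx) ) − h*(t,x) | = 0. -/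
open MeasureTheory Real Filter

/-- The limit shape `h*`. -/
noncomputable def hstar (t x : ℝ) : ℝ :=
  if |x| ≤ t then -|x| + t / 2 else -(x ^ 2) / (2 * t)

lemma heatK_comm (t x y : ℝ) : heatK t (x - y) = heatK t (y - x) := by
  rw [← heatK_neg, neg_sub]

lemma measurable_heatK : Measurable (fun q : ℝ × ℝ => heatK q.1 q.2) := by
  unfold heatK; fun_prop

lemma heatK_le {t : ℝ} (ht : 0 < t) (x : ℝ) : heatK t x ≤ (Real.sqrt t)⁻¹ := by
  have h1 : Real.sqrt t ≤ Real.sqrt (2 * Real.pi * t) :=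
    Real.sqrt_le_sqrt (by nlinarith [Real.pi_gt_three])
  have h2 : Real.exp (-(x ^ 2) / (2 * t)) ≤ 1 := by
    rw [Real.exp_le_one_iff, neg_div]
    have : 0 ≤ x ^ 2 / (2 * t) := by positivity
    linarith
  have h3 : 0 < Real.sqrt t := Real.sqrt_pos.2 ht
  calc heatK t x ≤ (Real.sqrt (2 * Real.pi * t))⁻¹ * 1 := by unfold heatK; gcongr
    _ ≤ (Real.sqrt t)⁻¹ := by rw [mul_one]; gcongr

lemma hasDerivAt_heatK_space {t : ℝ} (ht : 0 < t) (x : ℝ) :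
    HasDerivAt (fun y => heatK t y) (-(x / t) * heatK t x) x := by
  unfold heatK
  have h : HasDerivAt (fun y : ℝ => -(y ^ 2) / (2 * t)) (-(x / t)) x := by
    refine (((hasDerivAt_pow 2 x).neg).div_const (2 * t)).congr_deriv ?_
    field_simp
    norm_num
  refine (h.exp.const_mul (Real.sqrt (2 * Real.pi * t))⁻¹).congr_deriv ?_
  ring

lemma hasDerivAt_heatK_time {t : ℝ} (ht : 0 < t) (x : ℝ) :
    HasDerivAt (fun r => heatK r x) ((x ^ 2 / (2 * t ^ 2) - 1 / (2 * t)) * heatK t x) t := by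
  have hp := Real.pi_pos
  unfold heatK
  have h0 : HasDerivAt (fun r : ℝ => 2 * Real.pi * r) (2 * Real.pi) t := by
    simpa using (hasDerivAt_id t).const_mul (2 * Real.pi)
  have h1 := (h0.sqrt (by positivity)).inv (by positivity)
  have h2 : HasDerivAt (fun r : ℝ => -(x ^ 2) / (2 * r)) (x ^ 2 / (2 * t ^ 2)) t := by
    refine ((hasDerivAt_const t (-(x ^ 2))).div ((hasDerivAt_id t).const_mul 2)
      (by simp; positivity)).congr_deriv ?_
    simp
    field_simp
  refine (h1.mul h2.exp).congr_deriv ?_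
  have hs : Real.sqrt (2 * Real.pi * t) ^ 2 = 2 * Real.pi * t := Real.sq_sqrt (by positivity)
  have hs0 : Real.sqrt (2 * Real.pi * t) ≠ 0 := by positivity
  rw [hs, Pi.inv_apply]
  field_simp
  ring

lemma integrable_heatK {t : ℝ} (ht : 0 < t) : Integrable (fun x => heatK t x) := by
  unfold heatK
  refine Integrable.const_mul ?_ _
  convert integrable_exp_neg_mul_sq (b := 1 / (2 * t)) (by positivity) using 3
  ring

lemma integral_heatK {t : ℝ} (ht : 0 < t) : ∫ x, heatK t x = 1 := by
  unfold heatK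
  rw [integral_const_mul]
  have : (fun x : ℝ => Real.exp (-(x ^ 2) / (2 * t)))
      = fun x => Real.exp (-(1 / (2 * t)) * x ^ 2) := by
    funext x; congr 1; ring
  have hp := Real.pi_pos
  rw [this, integral_gaussian]
  have h : Real.pi / (1 / (2 * t)) = 2 * Real.pi * t := by field_simp
  rw [h, inv_mul_cancel₀ (by positivity)]

lemma integrable_heatK_sub {t : ℝ} (ht : 0 < t) (y : ℝ) :
    Integrable (fun z => heatK t (y - z)) := (integrable_heatK ht).comp_sub_left y

lemma integral_heatK_sub {t : ℝ} (ht : 0 < t) (y : ℝ) : ∫ z, heatK t (y - z) = 1 := by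
  rw [integral_sub_left_eq_self (fun z => heatK t z), integral_heatK ht]

lemma sech_eq (x : ℝ) : sech x = (Real.cosh x)⁻¹ := by
  rw [sech, Real.cosh_eq, inv_div]

lemma sech_pos (x : ℝ) : 0 < sech x := by
  rw [sech_eq]; have := Real.cosh_pos x; positivity

lemma sech_le_one (x : ℝ) : sech x ≤ 1 := by
  rw [sech_eq]; exact inv_le_one_of_one_le₀ (Real.one_le_cosh x)

lemma sech_sq_le_one (x : ℝ) : sech x ^ 2 ≤ 1 :=
  pow_le_one₀ (sech_pos x).le (sech_le_one x)

lemma continuous_sech : Continuous sech := by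
  have : sech = fun x => (Real.cosh x)⁻¹ := funext sech_eq
  rw [this]
  exact Real.continuous_cosh.inv₀ fun x => (Real.cosh_pos x).ne'

/-! ### The Duhamel operator -/

/-- The Duhamel operator with potential `sech²`:
`(L f)(t, y) = ∫₀ᵗ ∫ f(r, z) sech²(z) p(t - r, y - z) dz dr`. -/
noncomputable def duhamel (f : ℝ → ℝ → ℝ) (t y : ℝ) : ℝ :=
  ∫ r in Set.Ioo 0 t, ∫ z : ℝ, f r z * sech z ^ 2 * heatK (t - r) (y - z)

lemma measurable_duhamel {f : ℝ → ℝ → ℝ} (hf : Measurable (fun q : ℝ × ℝ => f q.1 q.2)) :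
    Measurable (fun q : ℝ × ℝ => duhamel f q.1 q.2) := by
  have h1 : Measurable (fun q : ((ℝ × ℝ) × ℝ) × ℝ =>
      f q.1.2 q.2 * sech q.2 ^ 2 * heatK (q.1.1.1 - q.1.2) (q.1.1.2 - q.2)) := by
    refine Measurable.mul (Measurable.mul ?_ ?_) ?_
    · exact hf.comp (by fun_prop : Measurable (fun q : ((ℝ × ℝ) × ℝ) × ℝ => (q.1.2, q.2)))
    · exact (continuous_sech.measurable.comp measurable_snd).pow_const 2
    · exact measurable_heatK.comp (by fun_prop : Measurable
        (fun q : ((ℝ × ℝ) × ℝ) × ℝ => (q.1.1.1 - q.1.2, q.1.1.2 - q.2)))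
  have h2 : Measurable (fun q : (ℝ × ℝ) × ℝ =>
      ∫ z, f q.2 z * sech z ^ 2 * heatK (q.1.1 - q.2) (q.1.2 - z)) :=
    (h1.stronglyMeasurable.integral_prod_right' (ν := volume)).measurable
  have hS : MeasurableSet {q : (ℝ × ℝ) × ℝ | 0 < q.2 ∧ q.2 < q.1.1} :=
    (measurableSet_lt measurable_const measurable_snd).inter
      (measurableSet_lt measurable_snd (measurable_fst.comp measurable_fst))
  have h3 := h2.indicator hS
  have h4 := (h3.stronglyMeasurable.integral_prod_right' (ν := volume)).measurable
  convert h4 using 1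
  funext q
  rw [duhamel, ← integral_indicator measurableSet_Ioo]
  rfl

lemma duhamel_nonneg {f : ℝ → ℝ → ℝ} {t : ℝ} (hf : ∀ r z, 0 < r → r < t → 0 ≤ f r z) (y : ℝ) :
    0 ≤ duhamel f t y := by
  refine setIntegral_nonneg measurableSet_Ioo fun r hr => integral_nonneg fun z => ?_
  exact mul_nonneg (mul_nonneg (hf r z hr.1 hr.2) (sq_nonneg _)) (heatK_nonneg _ _)

lemma duhamel_congr {f g : ℝ → ℝ → ℝ} {t : ℝ} (h : ∀ r z, 0 < r → r < t → f r z = g r z) (y : ℝ) :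
    duhamel f t y = duhamel g t y := by
  refine setIntegral_congr_fun measurableSet_Ioo fun r hr => ?_
  simp only [h r _ hr.1 hr.2]

section Bounds
variable {f : ℝ → ℝ → ℝ} {t : ℝ} {B : ℝ → ℝ}

/-- Since `sech² ≤ 1` and the heat kernel has unit mass, a time-dependent sup bound `B` on `f` is
inherited by the spatial integrals in `duhamel f`. -/
lemma norm_slice_le (hb : ∀ r z, 0 < r → r < t → |f r z| ≤ B r)
    {r : ℝ} (hr : r ∈ Set.Ioo 0 t) (y z : ℝ) :
    ‖f r z * sech z ^ 2 * heatK (t - r) (y - z)‖ ≤ B r * heatK (t - r) (y - z) := by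
  have h1 := hb r z hr.1 hr.2
  have h2 := sech_sq_le_one z
  have h3 := heatK_nonneg (t - r) (y - z)
  have h4 : 0 ≤ sech z ^ 2 := sq_nonneg _
  rw [norm_mul, norm_mul, Real.norm_eq_abs, Real.norm_eq_abs, Real.norm_eq_abs, abs_of_nonneg h3,
    abs_of_nonneg h4]
  refine mul_le_mul_of_nonneg_right ?_ h3
  nlinarith [abs_nonneg (f r z)]

lemma integrable_slice (hf : Measurable (fun q : ℝ × ℝ => f q.1 q.2))
    (hb : ∀ r z, 0 < r → r < t → |f r z| ≤ B r) {r : ℝ} (hr : r ∈ Set.Ioo 0 t) (y : ℝ) :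
    Integrable (fun z => f r z * sech z ^ 2 * heatK (t - r) (y - z)) := by
  refine Integrable.mono' ((integrable_heatK_sub (sub_pos.2 hr.2) y).const_mul (B r)) ?_
    (Eventually.of_forall (norm_slice_le hb hr y))
  refine Measurable.aestronglyMeasurable (Measurable.mul (Measurable.mul ?_ ?_) ?_)
  · exact hf.comp (by fun_prop : Measurable (fun z : ℝ => (r, z)))
  · exact continuous_sech.measurable.pow_const 2
  · exact measurable_heatK.comp (by fun_prop : Measurable (fun z : ℝ => (t - r, y - z)))

lemma abs_integral_slice_le (hb : ∀ r z, 0 < r → r < t → |f r z| ≤ B r)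
    {r : ℝ} (hr : r ∈ Set.Ioo 0 t) (y : ℝ) :
    ‖∫ z, f r z * sech z ^ 2 * heatK (t - r) (y - z)‖ ≤ B r := by
  have h := norm_integral_le_of_norm_le
    ((integrable_heatK_sub (sub_pos.2 hr.2) y).const_mul (B r))
    (Eventually.of_forall (norm_slice_le hb hr y))
  rwa [integral_const_mul, integral_heatK_sub (sub_pos.2 hr.2), mul_one] at h

lemma integrableOn_slice_integral (hf : Measurable (fun q : ℝ × ℝ => f q.1 q.2))
    (hb : ∀ r z, 0 < r → r < t → |f r z| ≤ B r) (hB : IntegrableOn B (Set.Ioo 0 t)) (y : ℝ) :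
    IntegrableOn (fun r => ∫ z, f r z * sech z ^ 2 * heatK (t - r) (y - z)) (Set.Ioo 0 t) := by
  have h1 : Measurable (fun q : ℝ × ℝ => f q.1 q.2 * sech q.2 ^ 2 * heatK (t - q.1) (y - q.2)) := by
    refine Measurable.mul (Measurable.mul hf ?_) ?_
    · exact (continuous_sech.measurable.comp measurable_snd).pow_const 2
    · exact measurable_heatK.comp (by fun_prop : Measurable
        (fun q : ℝ × ℝ => (t - q.1, y - q.2)))
  refine Integrable.mono' hB
    (h1.stronglyMeasurable.integral_prod_right' (ν := volume)).aestronglyMeasurable ?_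
  exact (ae_restrict_iff' measurableSet_Ioo).2
    (Eventually.of_forall fun r hr => abs_integral_slice_le hb hr y)

lemma abs_duhamel_le (hb : ∀ r z, 0 < r → r < t → |f r z| ≤ B r)
    (hB : IntegrableOn B (Set.Ioo 0 t)) (y : ℝ) :
    |duhamel f t y| ≤ ∫ r in Set.Ioo 0 t, B r :=
  norm_integral_le_of_norm_le hB ((ae_restrict_iff' measurableSet_Ioo).2
    (Eventually.of_forall fun _ hr => abs_integral_slice_le hb hr y))

lemma duhamel_add {g : ℝ → ℝ → ℝ} {B' : ℝ → ℝ} (hf : Measurable (fun q : ℝ × ℝ => f q.1 q.2))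
    (hb : ∀ r z, 0 < r → r < t → |f r z| ≤ B r) (hB : IntegrableOn B (Set.Ioo 0 t))
    (hg : Measurable (fun q : ℝ × ℝ => g q.1 q.2))
    (hb' : ∀ r z, 0 < r → r < t → |g r z| ≤ B' r) (hB' : IntegrableOn B' (Set.Ioo 0 t)) (y : ℝ) :
    duhamel (fun r z => f r z + g r z) t y = duhamel f t y + duhamel g t y := by
  unfold duhamel
  rw [← integral_add (integrableOn_slice_integral hf hb hB y)
    (integrableOn_slice_integral hg hb' hB' y)]
  refine setIntegral_congr_fun measurableSet_Ioo fun r hr => ?_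
  simp only
  rw [← integral_add (integrable_slice hf hb hr y) (integrable_slice hg hb' hr y)]
  congr 1; funext z; ring

end Bounds

/-! ### The closed form and its derivatives -/

/-- An antiderivative of the standard Gaussian density. -/
noncomputable def gaussPrim (s : ℝ) : ℝ := ∫ u in (0 : ℝ)..s, heatK 1 u

lemma continuous_heatK_one : Continuous (heatK 1) := by
  unfold heatK; fun_prop

lemma hasDerivAt_gaussPrim (s : ℝ) : HasDerivAt gaussPrim (heatK 1 s) s :=
  intervalIntegral.integral_hasDerivAt_right (continuous_heatK_one.intervalIntegrable _ _)
    (continuous_heatK_one.stronglyMeasurableAtFilter _ _) continuous_heatK_one.continuousAt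

lemma continuous_gaussPrim : Continuous gaussPrim :=
  continuous_iff_continuousAt.2 fun s => (hasDerivAt_gaussPrim s).continuousAt

lemma gaussPrim_sub (a b : ℝ) : gaussPrim b - gaussPrim a = ∫ u in a..b, heatK 1 u :=
  intervalIntegral.integral_interval_sub_left (continuous_heatK_one.intervalIntegrable _ _)
    (continuous_heatK_one.intervalIntegrable _ _)

lemma heatK_one_le (u : ℝ) : heatK 1 u ≤ 1 := by
  simpa using heatK_le one_pos u

/-- The Gaussian mass `∫_{z-r}^{z+r} p(r, w) dw`, written after rescaling by `√r`. -/
noncomputable def gaussMass (r z : ℝ) : ℝ :=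
  gaussPrim ((z + r) / Real.sqrt r) - gaussPrim ((z - r) / Real.sqrt r)

/-- The correction `Z - p` produced by the reflectionless potential `sech²`. -/
noncomputable def corr (r z : ℝ) : ℝ := sech z * (Real.exp (r / 2) * gaussMass r z) / 2

lemma gaussMass_nonneg {r : ℝ} (hr : 0 < r) (z : ℝ) : 0 ≤ gaussMass r z := by
  rw [gaussMass, gaussPrim_sub]
  refine intervalIntegral.integral_nonneg ?_ fun u _ => heatK_nonneg _ _
  gcongr; linarith

lemma gaussMass_le {r : ℝ} (hr : 0 < r) (z : ℝ) : gaussMass r z ≤ 2 * Real.sqrt r := by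
  have hs : 0 < Real.sqrt r := Real.sqrt_pos.2 hr
  have hab : (z - r) / Real.sqrt r ≤ (z + r) / Real.sqrt r := by gcongr; linarith
  rw [gaussMass, gaussPrim_sub]
  calc _ ≤ ∫ u in ((z - r) / Real.sqrt r)..((z + r) / Real.sqrt r), (1 : ℝ) :=
        intervalIntegral.integral_mono_on hab (continuous_heatK_one.intervalIntegrable _ _)
          (continuous_const.intervalIntegrable _ _) fun u _ => heatK_one_le u
    _ = 2 * Real.sqrt r := by
        rw [intervalIntegral.integral_const, smul_eq_mul, mul_one]
        have := Real.mul_self_sqrt hr.le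
        field_simp
        nlinarith

lemma corr_nonneg {r : ℝ} (hr : 0 < r) (z : ℝ) : 0 ≤ corr r z := by
  have := gaussMass_nonneg hr z
  have := sech_pos z
  unfold corr; positivity

lemma corr_le {r : ℝ} (hr : 0 < r) (z : ℝ) : corr r z ≤ Real.exp (r / 2) * Real.sqrt r := by
  have h1 := gaussMass_nonneg hr z
  have h2 := gaussMass_le hr z
  have h3 := sech_le_one z
  have h4 := sech_pos z
  unfold corr
  have : sech z * (Real.exp (r / 2) * gaussMass r z) ≤ 1 * (Real.exp (r / 2) * (2 * Real.sqrt r)) := by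
    gcongr
  linarith

lemma measurable_corr : Measurable (fun q : ℝ × ℝ => corr q.1 q.2) := by
  unfold corr gaussMass
  have h1 := continuous_gaussPrim.measurable
  have h2 := continuous_sech.measurable
  fun_prop

lemma continuousOn_corr : ContinuousOn (fun q : ℝ × ℝ => corr q.1 q.2) {q | 0 < q.1} := by
  unfold corr gaussMass
  have h1 := continuous_gaussPrim
  have h2 := continuous_sech
  have h3 : ∀ q ∈ {q : ℝ × ℝ | 0 < q.1}, Real.sqrt q.1 ≠ 0 :=
    fun q hq => (Real.sqrt_pos.2 hq).ne'
  refine ContinuousOn.div_const (ContinuousOn.mul (by fun_prop) (ContinuousOn.mul (by fun_prop)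
    (ContinuousOn.sub ?_ ?_))) _
  · exact h1.comp_continuousOn (ContinuousOn.div (by fun_prop) (by fun_prop) h3)
  · exact h1.comp_continuousOn (ContinuousOn.div (by fun_prop) (by fun_prop) h3)

lemma heatK_one_div_sqrt {r : ℝ} (hr : 0 < r) (y : ℝ) :
    heatK 1 (y / Real.sqrt r) = Real.sqrt r * heatK r y := by
  have hp := Real.pi_pos
  have hs : 0 < Real.sqrt r := Real.sqrt_pos.2 hr
  unfold heatK
  rw [div_pow, Real.sq_sqrt hr.le, Real.sqrt_mul (by positivity) r, mul_one]
  have : -(y ^ 2 / r) / 2 = -(y ^ 2) / (2 * r) := by field_simp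
  rw [mul_one, this]
  field_simp

lemma heatK_add_self {r : ℝ} (hr : 0 < r) (z : ℝ) :
    Real.exp (r / 2) * heatK r (z + r) = heatK r z * Real.exp (-z) := by
  unfold heatK
  rw [mul_left_comm, ← Real.exp_add, mul_assoc (Real.sqrt (2 * Real.pi * r))⁻¹, ← Real.exp_add]
  congr 2
  field_simp; ring

lemma heatK_sub_self {r : ℝ} (hr : 0 < r) (z : ℝ) :
    Real.exp (r / 2) * heatK r (z - r) = heatK r z * Real.exp z := by
  unfold heatK
  rw [mul_left_comm, ← Real.exp_add, mul_assoc (Real.sqrt (2 * Real.pi * r))⁻¹, ← Real.exp_add]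
  congr 2
  field_simp; ring

lemma hasDerivAt_gaussMass_space {r : ℝ} (hr : 0 < r) (z : ℝ) :
    HasDerivAt (fun y => gaussMass r y) (heatK r (z + r) - heatK r (z - r)) z := by
  have hs : 0 < Real.sqrt r := Real.sqrt_pos.2 hr
  have h1 := (hasDerivAt_gaussPrim ((z + r) / Real.sqrt r)).comp z
    (((hasDerivAt_id z).add_const r).div_const (Real.sqrt r))
  have h2 := (hasDerivAt_gaussPrim ((z - r) / Real.sqrt r)).comp z
    (((hasDerivAt_id z).sub_const r).div_const (Real.sqrt r))
  refine (h1.sub h2).congr_deriv ?_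
  rw [heatK_one_div_sqrt hr, heatK_one_div_sqrt hr]
  field_simp

lemma hasDerivAt_gaussMass_time {r : ℝ} (hr : 0 < r) (z : ℝ) :
    HasDerivAt (fun r => gaussMass r z)
      ((1 - z / r) / 2 * heatK r (z + r) + (1 + z / r) / 2 * heatK r (z - r)) r := by
  have hs : 0 < Real.sqrt r := Real.sqrt_pos.2 hr
  have h1 := (hasDerivAt_gaussPrim ((z + r) / Real.sqrt r)).comp r
    (((hasDerivAt_id r).const_add z).div (Real.hasDerivAt_sqrt hr.ne') hs.ne')
  have h2 := (hasDerivAt_gaussPrim ((z - r) / Real.sqrt r)).comp r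
    (((hasDerivAt_id r).const_sub z).div (Real.hasDerivAt_sqrt hr.ne') hs.ne')
  refine (h1.sub h2).congr_deriv ?_
  rw [heatK_one_div_sqrt hr, heatK_one_div_sqrt hr]
  have h3 : Real.sqrt r ^ 2 = r := Real.sq_sqrt hr.le
  simp only [id]
  rw [h3]
  field_simp
  rw [h3]
  ring

lemma hasDerivAt_sech (z : ℝ) : HasDerivAt sech (-(sech z * Real.tanh z)) z := by
  have h : sech = fun x => (Real.cosh x)⁻¹ := funext sech_eq
  rw [h]
  refine ((Real.hasDerivAt_cosh z).inv (Real.cosh_pos z).ne').congr_deriv ?_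
  rw [Real.tanh_eq_sinh_div_cosh]
  have := (Real.cosh_pos z).ne'
  field_simp

lemma hasDerivAt_tanh' (z : ℝ) : HasDerivAt Real.tanh (sech z ^ 2) z := by
  have h : Real.tanh = fun x => Real.sinh x / Real.cosh x :=
    funext Real.tanh_eq_sinh_div_cosh
  rw [h]
  have hc := (Real.cosh_pos z).ne'
  refine ((Real.hasDerivAt_sinh z).div (Real.hasDerivAt_cosh z) hc).congr_deriv ?_
  rw [sech_eq]
  have := Real.cosh_sq z
  field_simp
  linarith

lemma tanh_sq_add_sech_sq (z : ℝ) : Real.tanh z ^ 2 + sech z ^ 2 = 1 := by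
  rw [sech_eq, Real.tanh_eq_sinh_div_cosh]
  have hc := (Real.cosh_pos z).ne'
  have := Real.cosh_sq z
  field_simp
  linarith

lemma abs_tanh_le_one (z : ℝ) : |Real.tanh z| ≤ 1 := by
  rw [← sq_le_one_iff_abs_le_one]
  nlinarith [tanh_sq_add_sech_sq z, sq_nonneg (sech z)]

/-- The candidate solution in closed form. -/
noncomputable def sol (r z : ℝ) : ℝ := heatK r z + corr r z

/-- Intertwining of `sech²` with the free Laplacian: `(∂_z + tanh z) (Z - p) = -tanh z · p`. -/
lemma hasDerivAt_corr_space {r : ℝ} (hr : 0 < r) (z : ℝ) :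
    HasDerivAt (fun y => corr r y) (-(Real.tanh z * sol r z)) z := by
  have h := (((hasDerivAt_sech z).mul
    ((hasDerivAt_gaussMass_space hr z).const_mul (Real.exp (r / 2)))).div_const 2)
  refine h.congr_deriv ?_
  have e1 := heatK_add_self hr z
  have e2 := heatK_sub_self hr z
  have e3 : Real.exp (r / 2) * (heatK r (z + r) - heatK r (z - r))
      = -2 * Real.sinh z * heatK r z := by
    rw [mul_sub, e1, e2, Real.sinh_eq]; ring
  rw [e3, sol, corr, sech_eq, Real.tanh_eq_sinh_div_cosh]
  ring

/-- Equivalently `∂_r corr = ½ (sol - tanh z · ∂_z p)`. -/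
lemma hasDerivAt_corr_time {r : ℝ} (hr : 0 < r) (z : ℝ) :
    HasDerivAt (fun r => corr r z)
      ((sol r z + Real.tanh z * (z / r * heatK r z)) / 2) r := by
  have h0 : HasDerivAt (fun r : ℝ => Real.exp (r / 2)) (Real.exp (r / 2) * (1 / 2)) r :=
    ((hasDerivAt_id r).div_const 2).exp
  have h := (((h0.mul (hasDerivAt_gaussMass_time hr z)).const_mul (sech z)).div_const 2)
  refine h.congr_deriv ?_
  have e1 := heatK_add_self hr z
  have e2 := heatK_sub_self hr z
  have e3 : Real.exp (r / 2) * ((1 - z / r) / 2 * heatK r (z + r) + (1 + z / r) / 2 * heatK r (z - r))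
      = Real.cosh z * heatK r z + z / r * Real.sinh z * heatK r z := by
    have : Real.exp (r / 2) * ((1 - z / r) / 2 * heatK r (z + r)
        + (1 + z / r) / 2 * heatK r (z - r))
      = (1 - z / r) / 2 * (Real.exp (r / 2) * heatK r (z + r))
        + (1 + z / r) / 2 * (Real.exp (r / 2) * heatK r (z - r)) := by ring
    rw [this, e1, e2, Real.sinh_eq, Real.cosh_eq]; ring
  rw [e3, sol, corr, sech_eq, Real.tanh_eq_sinh_div_cosh]
  have hc := (Real.cosh_pos z).ne'
  field_simp
  ring

/-! ### Duhamel's equation for the closed form -/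

lemma heatK_le_gauss {c t τ : ℝ} (hc : 0 < c) (h1 : c ≤ τ) (h2 : τ ≤ t) (y : ℝ) :
    heatK τ y ≤ (Real.sqrt c)⁻¹ * Real.exp (-(1 / (2 * t)) * y ^ 2) := by
  have hτ : 0 < τ := hc.trans_le h1
  have ht : 0 < t := hτ.trans_le h2
  have hs : 0 < Real.sqrt c := Real.sqrt_pos.2 hc
  have h3 : Real.sqrt c ≤ Real.sqrt (2 * Real.pi * τ) :=
    Real.sqrt_le_sqrt (by nlinarith [Real.pi_gt_three])
  unfold heatK
  gcongr
  have : y ^ 2 / (2 * t) ≤ y ^ 2 / (2 * τ) := by gcongr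
  have e1 : -(1 / (2 * t)) * y ^ 2 = -(y ^ 2 / (2 * t)) := by ring
  rw [e1, neg_div]
  linarith

lemma integrable_poly_gauss {t : ℝ} (ht : 0 < t) (x : ℝ) :
    Integrable (fun z : ℝ => (1 + (x - z) ^ 2) * Real.exp (-(1 / (2 * t)) * (x - z) ^ 2)) := by
  have hb : 0 < 1 / (2 * t) := by positivity
  have h1 := integrable_exp_neg_mul_sq hb
  have h2 := integrable_rpow_mul_exp_neg_mul_sq hb (s := 2) (by norm_num)
  have h3 : Integrable (fun y : ℝ => (1 + y ^ 2) * Real.exp (-(1 / (2 * t)) * y ^ 2)) := by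
    refine (h1.add h2).congr (Eventually.of_forall fun y => ?_)
    simp only [Pi.add_apply, Real.rpow_two]
    ring
  exact h3.comp_sub_left x

lemma abs_mul_heatK_le {a t r : ℝ} (ha : 0 < a) (h1 : a ≤ r) (h2 : r ≤ t) (z : ℝ) :
    |z / r * heatK r z| ≤ 2 * (1 + t) / a * (Real.sqrt a)⁻¹ := by
  have hr : 0 < r := ha.trans_le h1
  have ht : 0 < t := hr.trans_le h2
  have hs : 0 < Real.sqrt a := Real.sqrt_pos.2 ha
  have h3 := heatK_le_gauss ha h1 h2 z
  rw [abs_mul, abs_of_nonneg (heatK_nonneg r z), abs_div, abs_of_pos hr]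
  have h4 : |z| * Real.exp (-(1 / (2 * t)) * z ^ 2) ≤ 2 * (1 + t) := by
    have e : -(1 / (2 * t)) * z ^ 2 = -(z ^ 2 / (2 * t)) := by ring
    rw [e, Real.exp_neg, ← div_eq_mul_inv, div_le_iff₀ (Real.exp_pos _)]
    have h5 := Real.add_one_le_exp (z ^ 2 / (2 * t))
    have h6 : 0 ≤ z ^ 2 / (2 * t) := by positivity
    have h7 : 2 * (1 + t) * (z ^ 2 / (2 * t) + 1) = z ^ 2 / t + z ^ 2 + 2 * (1 + t) := by
      field_simp
    have h8 : 0 ≤ z ^ 2 / t := by positivity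
    have h9 : |z| ≤ z ^ 2 + 2 := by
      nlinarith [sq_abs z, sq_nonneg (|z| - 1), abs_nonneg z]
    nlinarith
  calc |z| / r * heatK r z ≤ |z| / a * ((Real.sqrt a)⁻¹ * Real.exp (-(1 / (2 * t)) * z ^ 2)) := by
        have := heatK_nonneg r z
        gcongr
    _ = (|z| * Real.exp (-(1 / (2 * t)) * z ^ 2)) / a * (Real.sqrt a)⁻¹ := by ring
    _ ≤ _ := by gcongr

lemma abs_corr_le {t r : ℝ} (hr : 0 < r) (h2 : r ≤ t) (z : ℝ) :
    |corr r z| ≤ Real.exp (t / 2) * Real.sqrt t := by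
  rw [abs_of_nonneg (corr_nonneg hr z)]
  refine (corr_le hr z).trans ?_
  gcongr

lemma abs_sol_le {t r : ℝ} (hr : 0 < r) (h2 : r ≤ t) (z : ℝ) :
    |sol r z| ≤ (Real.sqrt r)⁻¹ + Real.exp (t / 2) * Real.sqrt t := by
  refine (abs_add_le _ _).trans (add_le_add ?_ (abs_corr_le hr h2 z))
  rw [abs_of_nonneg (heatK_nonneg r z)]
  exact heatK_le hr z

lemma exists_bound {a t : ℝ} (ha : 0 < a) : ∃ K, 0 ≤ K ∧ ∀ r, a ≤ r → r ≤ t → ∀ z,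
    |sol r z| ≤ K ∧ |corr r z| ≤ K ∧ |z / r * heatK r z| ≤ K := by
  refine ⟨(Real.sqrt a)⁻¹ + Real.exp (t / 2) * Real.sqrt t
    + |2 * (1 + t) / a * (Real.sqrt a)⁻¹|, by positivity, fun r h1 h2 z => ?_⟩
  have hr := ha.trans_le h1
  have hs : 0 < Real.sqrt a := Real.sqrt_pos.2 ha
  have e1 := abs_sol_le hr h2 z
  have e2 := abs_corr_le hr h2 z
  have e3 := (abs_mul_heatK_le ha h1 h2 z).trans (le_abs_self _)
  have e4 : (Real.sqrt r)⁻¹ ≤ (Real.sqrt a)⁻¹ := by gcongr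
  have e5 : 0 ≤ (Real.sqrt a)⁻¹ := by positivity
  have e6 : 0 ≤ Real.exp (t / 2) * Real.sqrt t := by positivity
  have e7 := abs_nonneg (2 * (1 + t) / a * (Real.sqrt a)⁻¹)
  exact ⟨by linarith, by linarith, by linarith⟩

lemma measurable_sol : Measurable (fun q : ℝ × ℝ => sol q.1 q.2) :=
  measurable_heatK.add measurable_corr

lemma hasDerivAt_heatK_shift {τ : ℝ} (hτ : 0 < τ) (x z : ℝ) :
    HasDerivAt (fun z => heatK τ (x - z)) ((x - z) / τ * heatK τ (x - z)) z := by
  refine ((hasDerivAt_heatK_space hτ (x - z)).comp z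
    ((hasDerivAt_id z).const_sub x)).congr_deriv ?_
  ring

lemma hasDerivAt_sol_space {r : ℝ} (hr : 0 < r) (z : ℝ) :
    HasDerivAt (fun y => sol r y) (-(z / r) * heatK r z - Real.tanh z * sol r z) z :=
  ((hasDerivAt_heatK_space hr z).add (hasDerivAt_corr_space hr z)).congr_deriv (by ring)

/-- The time derivative of `corr r z * p(t - r, x - z)`. -/
noncomputable def dIntegrand (t x r z : ℝ) : ℝ :=
  (sol r z + Real.tanh z * (z / r * heatK r z)) / 2 * heatK (t - r) (x - z)
    + corr r z * (-((x - z) ^ 2 / (2 * (t - r) ^ 2) - 1 / (2 * (t - r))) * heatK (t - r) (x - z))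

/-- Half the Wronskian of `corr r ·` and `p(t - r, x - ·)`. -/
noncomputable def wronsk (t x r z : ℝ) : ℝ :=
  (-(Real.tanh z * sol r z) * heatK (t - r) (x - z)
    - corr r z * ((x - z) / (t - r) * heatK (t - r) (x - z))) / 2

lemma hasDerivAt_integrand {t r : ℝ} (hr : 0 < r) (hrt : r < t) (x z : ℝ) :
    HasDerivAt (fun r => corr r z * heatK (t - r) (x - z)) (dIntegrand t x r z) r := by
  have h1 := (hasDerivAt_heatK_time (sub_pos.2 hrt) (x - z)).comp r
    ((hasDerivAt_id r).const_sub t)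
  refine ((hasDerivAt_corr_time hr z).mul h1).congr_deriv ?_
  simp only [dIntegrand, Function.comp_def]
  ring

/-- The PDE in divergence form: since `corr` solves the heat equation with source `sech² · sol` and
`p(t - r, x - ·)` the backward heat equation, `∂_r (corr · p) - sech² · sol · p` is a total
`z`-derivative. -/
lemma hasDerivAt_wronsk {t r : ℝ} (hr : 0 < r) (hrt : r < t) (x z : ℝ) :
    HasDerivAt (wronsk t x r)
      (dIntegrand t x r z - sol r z * sech z ^ 2 * heatK (t - r) (x - z)) z := by
  have hτ := sub_pos.2 hrt
  have hq := hasDerivAt_heatK_shift hτ x z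
  have h1 := (((hasDerivAt_tanh' z).mul (hasDerivAt_sol_space hr z)).neg).mul hq
  have hy : HasDerivAt (fun z => (x - z) / (t - r)) (-1 / (t - r)) z :=
    ((hasDerivAt_id z).const_sub x).div_const _
  have h2 := (hasDerivAt_corr_space hr z).mul (hy.mul hq)
  refine ((h1.sub h2).div_const 2).congr_deriv ?_
  have ht := tanh_sq_add_sech_sq z
  simp only [dIntegrand, Pi.mul_apply, Pi.neg_apply]
  have hτ' := hτ.ne'
  have ht' : sech z ^ 2 = 1 - Real.tanh z ^ 2 := by linarith
  rw [ht']
  generalize Real.tanh z = T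
  generalize heatK (t - r) (x - z) = q
  generalize heatK r z = p
  generalize sol r z = S
  generalize corr r z = G
  field_simp
  ring

/-- A bound uniform in `r` away from `0` and `t`, which justifies differentiating under the
integral in `interpol`. -/
lemma abs_dIntegrand_le {K c t r : ℝ} (hc : 0 < c) (hr : 0 < r) (hcr : c ≤ t - r) (x z : ℝ)
    (h1 : |sol r z| ≤ K) (h2 : |corr r z| ≤ K) (h3 : |z / r * heatK r z| ≤ K) :
    |dIntegrand t x r z| ≤ K * (1 + (1 / (2 * c ^ 2) + 1 / (2 * c))) * (Real.sqrt c)⁻¹ *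
      ((1 + (x - z) ^ 2) * Real.exp (-(1 / (2 * t)) * (x - z) ^ 2)) := by
  have hτ : 0 < t - r := hc.trans_le hcr
  have hK : 0 ≤ K := (abs_nonneg _).trans h1
  have hq := heatK_le_gauss (t := t) hc hcr (by linarith) (x - z)
  have hq0 := heatK_nonneg (t - r) (x - z)
  have hT := abs_tanh_le_one z
  have e1 : |(sol r z + Real.tanh z * (z / r * heatK r z)) / 2| ≤ K := by
    rw [abs_div, abs_two, div_le_iff₀ two_pos]
    refine (abs_add_le _ _).trans ?_
    rw [abs_mul]
    nlinarith [abs_nonneg (Real.tanh z), abs_nonneg (z / r * heatK r z)]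
  have e2 : |-((x - z) ^ 2 / (2 * (t - r) ^ 2) - 1 / (2 * (t - r)))|
      ≤ (1 / (2 * c ^ 2) + 1 / (2 * c)) * (1 + (x - z) ^ 2) := by
    rw [abs_neg]
    refine (abs_sub _ _).trans ?_
    rw [abs_of_nonneg (by positivity), abs_of_nonneg (by positivity)]
    have f1 : (x - z) ^ 2 / (2 * (t - r) ^ 2) ≤ (x - z) ^ 2 / (2 * c ^ 2) := by gcongr
    have f2 : 1 / (2 * (t - r)) ≤ 1 / (2 * c) := by gcongr
    have f3 : 0 ≤ 1 / (2 * c ^ 2) := by positivity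
    have f4 : 0 ≤ 1 / (2 * c) * (x - z) ^ 2 := by positivity
    have f5 : (x - z) ^ 2 / (2 * c ^ 2) = 1 / (2 * c ^ 2) * (x - z) ^ 2 := by ring
    nlinarith
  unfold dIntegrand
  set A := (sol r z + Real.tanh z * (z / r * heatK r z)) / 2
  set D := -((x - z) ^ 2 / (2 * (t - r) ^ 2) - 1 / (2 * (t - r)))
  set q := heatK (t - r) (x - z)
  set Y := 1 + (x - z) ^ 2
  set L := 1 / (2 * c ^ 2) + 1 / (2 * c)
  set W := Real.exp (-(1 / (2 * t)) * (x - z) ^ 2)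
  have hY : 1 ≤ Y := by simp only [Y]; nlinarith [sq_nonneg (x - z)]
  have hL : 0 ≤ L := by positivity
  calc |A * q + corr r z * (D * q)| ≤ |A| * q + |corr r z| * (|D| * q) := by
        refine (abs_add_le _ _).trans ?_
        rw [abs_mul, abs_mul, abs_mul, abs_of_nonneg hq0]
    _ ≤ K * ((Real.sqrt c)⁻¹ * W) + K * (L * Y * ((Real.sqrt c)⁻¹ * W)) := by gcongr
    _ ≤ K * (Y * ((Real.sqrt c)⁻¹ * W)) + K * (L * Y * ((Real.sqrt c)⁻¹ * W)) := by
        have : 0 ≤ (Real.sqrt c)⁻¹ * W := by positivity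
        exact add_le_add (mul_le_mul_of_nonneg_left (le_mul_of_one_le_left this hY) hK) le_rfl
    _ = _ := by ring

lemma abs_wronsk_le {K c t r : ℝ} (hc : 0 < c) (hr : 0 < r) (hcr : c ≤ t - r) (x z : ℝ)
    (h1 : |sol r z| ≤ K) (h2 : |corr r z| ≤ K) :
    |wronsk t x r z| ≤ K * (1 + 1 / c) * (Real.sqrt c)⁻¹ *
      ((1 + (x - z) ^ 2) * Real.exp (-(1 / (2 * t)) * (x - z) ^ 2)) := by
  have hτ : 0 < t - r := hc.trans_le hcr
  have hK : 0 ≤ K := (abs_nonneg _).trans h1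
  have hq := heatK_le_gauss (t := t) hc hcr (by linarith) (x - z)
  have hq0 := heatK_nonneg (t - r) (x - z)
  have hT := abs_tanh_le_one z
  have e1 : |-(Real.tanh z * sol r z)| ≤ K := by
    rw [abs_neg, abs_mul]
    nlinarith [abs_nonneg (Real.tanh z), abs_nonneg (sol r z)]
  have e2 : |(x - z) / (t - r)| ≤ 1 / c * (1 + (x - z) ^ 2) := by
    rw [abs_div, abs_of_pos hτ]
    have f1 : |x - z| ≤ 1 + (x - z) ^ 2 := by
      nlinarith [sq_abs (x - z), sq_nonneg (|x - z| - 1), abs_nonneg (x - z)]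
    calc |x - z| / (t - r) ≤ (1 + (x - z) ^ 2) / c := by gcongr
      _ = _ := by ring
  unfold wronsk
  set A := -(Real.tanh z * sol r z)
  set D := (x - z) / (t - r)
  set q := heatK (t - r) (x - z)
  set Y := 1 + (x - z) ^ 2
  set W := Real.exp (-(1 / (2 * t)) * (x - z) ^ 2)
  have hY : 1 ≤ Y := by simp only [Y]; nlinarith [sq_nonneg (x - z)]
  calc |(A * q - corr r z * (D * q)) / 2| ≤ |A * q - corr r z * (D * q)| := by
        rw [abs_div, abs_two]; linarith [abs_nonneg (A * q - corr r z * (D * q))]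
    _ ≤ |A| * q + |corr r z| * (|D| * q) := by
        refine (abs_sub _ _).trans ?_
        rw [abs_mul, abs_mul, abs_mul, abs_of_nonneg hq0]
    _ ≤ K * ((Real.sqrt c)⁻¹ * W) + K * (1 / c * Y * ((Real.sqrt c)⁻¹ * W)) := by gcongr
    _ ≤ K * (Y * ((Real.sqrt c)⁻¹ * W)) + K * (1 / c * Y * ((Real.sqrt c)⁻¹ * W)) := by
        have : 0 ≤ (Real.sqrt c)⁻¹ * W := by positivity
        exact add_le_add (mul_le_mul_of_nonneg_left (le_mul_of_one_le_left this hY) hK) le_rfl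
    _ = _ := by ring

/-- `∫ corr(r, z) p(t - r, x - z) dz`, which interpolates between `0` at `r = 0` and
`corr(t, x)` at `r = t`. -/
noncomputable def interpol (t x r : ℝ) : ℝ := ∫ z, corr r z * heatK (t - r) (x - z)

lemma measurable_corr_slice (r : ℝ) : Measurable (corr r) :=
  measurable_corr.comp (by fun_prop : Measurable (fun z : ℝ => (r, z)))

lemma measurable_heatK_slice (τ x : ℝ) : Measurable (fun z => heatK τ (x - z)) :=
  measurable_heatK.comp (by fun_prop : Measurable (fun z : ℝ => (τ, x - z)))

lemma hasDerivAt_interpol {t r : ℝ} (hr : 0 < r) (hrt : r < t) (x : ℝ) :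
    HasDerivAt (interpol t x) (∫ z, sol r z * sech z ^ 2 * heatK (t - r) (x - z)) r := by
  have ht : 0 < t := hr.trans hrt
  obtain ⟨K, hK0, hK⟩ := exists_bound (a := r / 2) (t := t) (by linarith)
  have hc : 0 < (t - r) / 2 := by linarith
  have hs : Set.Ioo (r / 2) ((r + t) / 2) ∈ nhds r := Ioo_mem_nhds (by linarith) (by linarith)
  have hder := hasDerivAt_integral_of_dominated_loc_of_deriv_le (μ := volume) hs
    (F := fun r z => corr r z * heatK (t - r) (x - z)) (F' := fun r z => dIntegrand t x r z)
    (bound := fun z => K * (1 + (1 / (2 * ((t - r) / 2) ^ 2) + 1 / (2 * ((t - r) / 2)))) *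
      (Real.sqrt ((t - r) / 2))⁻¹ *
      ((1 + (x - z) ^ 2) * Real.exp (-(1 / (2 * t)) * (x - z) ^ 2)))
    (Eventually.of_forall fun s =>
      ((measurable_corr_slice s).mul (measurable_heatK_slice _ x)).aestronglyMeasurable)
    ?_ ?_ ?_ ((integrable_poly_gauss ht x).const_mul _) ?_
  · have hsl : Integrable (fun z => sol r z * sech z ^ 2 * heatK (t - r) (x - z)) :=
      integrable_slice measurable_sol (fun s z hs1 hs2 => abs_sol_le hs1 hs2.le z) ⟨hr, hrt⟩ x
    have hW : Integrable (wronsk t x r) := by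
      refine Integrable.mono' ((integrable_poly_gauss ht x).const_mul
        (K * (1 + 1 / ((t - r) / 2)) * (Real.sqrt ((t - r) / 2))⁻¹)) ?_
        (Eventually.of_forall fun z => abs_wronsk_le hc hr (by linarith) x z
          (hK r (by linarith) hrt.le z).1 (hK r (by linarith) hrt.le z).2.1)
      exact (continuous_iff_continuousAt.2 fun z =>
        (hasDerivAt_wronsk hr hrt x z).continuousAt).aestronglyMeasurable
    have h0 := integral_eq_zero_of_hasDerivAt_of_integrable (hasDerivAt_wronsk hr hrt x)
      (hder.1.sub hsl) hW
    rw [integral_sub hder.1 hsl, sub_eq_zero] at h0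
    rw [← h0]
    exact hder.2
  · refine Integrable.mono' ((integrable_heatK_sub (sub_pos.2 hrt) x).const_mul K)
      ((measurable_corr_slice r).mul (measurable_heatK_slice _ x)).aestronglyMeasurable
      (Eventually.of_forall fun z => ?_)
    rw [norm_mul, Real.norm_eq_abs, Real.norm_eq_abs, abs_of_nonneg (heatK_nonneg _ _)]
    exact mul_le_mul_of_nonneg_right (hK r (by linarith) hrt.le z).2.1 (heatK_nonneg _ _)
  · have hm : Measurable (fun z => dIntegrand t x r z) := by
      unfold dIntegrand
      have m1 : Measurable (fun z => sol r z) :=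
        measurable_sol.comp (by fun_prop : Measurable (fun z : ℝ => (r, z)))
      have m2 := measurable_corr_slice r
      have m3 := measurable_heatK_slice (t - r) x
      have m4 : Measurable (fun z => heatK r z) :=
        measurable_heatK.comp (by fun_prop : Measurable (fun z : ℝ => (r, z)))
      have m5 : Measurable Real.tanh := (continuous_iff_continuousAt.2 fun z =>
        (hasDerivAt_tanh' z).continuousAt).measurable
      fun_prop
    exact hm.aestronglyMeasurable
  · refine Eventually.of_forall fun z s hs => ?_
    obtain ⟨b1, b2, b3⟩ := hK s hs.1.le (by linarith [hs.2]) z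
    exact abs_dIntegrand_le hc (by linarith [hs.1]) (by linarith [hs.2]) x z b1 b2 b3
  · exact Eventually.of_forall fun z s hs =>
      hasDerivAt_integrand (by linarith [hs.1]) (by linarith [hs.2]) x z

lemma tendsto_interpol_zero {t : ℝ} (ht : 0 < t) (x : ℝ) :
    Tendsto (interpol t x) (nhdsWithin 0 (Set.Ioi 0)) (nhds 0) := by
  have hB : Tendsto (fun r : ℝ => Real.exp (r / 2) * Real.sqrt r) (nhdsWithin 0 (Set.Ioi 0))
      (nhds 0) := by
    have : Continuous (fun r : ℝ => Real.exp (r / 2) * Real.sqrt r) := by fun_prop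
    simpa using (this.tendsto 0).mono_left nhdsWithin_le_nhds
  refine squeeze_zero_norm' ?_ hB
  filter_upwards [Ioo_mem_nhdsGT ht] with r hr
  have h := norm_integral_le_of_norm_le (f := fun z => corr r z * heatK (t - r) (x - z))
    ((integrable_heatK_sub (sub_pos.2 hr.2) x).const_mul (Real.exp (r / 2) * Real.sqrt r))
    (Eventually.of_forall fun z => ?_)
  · rwa [integral_const_mul, integral_heatK_sub (sub_pos.2 hr.2), mul_one] at h
  · rw [norm_mul, Real.norm_eq_abs, Real.norm_eq_abs, abs_of_nonneg (heatK_nonneg _ _)]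
    exact mul_le_mul_of_nonneg_right (abs_corr_le hr.1 le_rfl z) (heatK_nonneg _ _)

/-- Parabolic rescaling of the integration variable, which removes the singularity of the heat
kernel at `r = t`. -/
lemma interpol_eq {t r : ℝ} (hrt : r < t) (x : ℝ) :
    interpol t x r = ∫ u, corr r (x - Real.sqrt (t - r) * u) * heatK 1 u := by
  have hτ := sub_pos.2 hrt
  have hs : 0 < Real.sqrt (t - r) := Real.sqrt_pos.2 hτ
  have h1 : interpol t x r = ∫ w, corr r (x - w) * heatK (t - r) w := by
    rw [interpol, ← integral_sub_left_eq_self (fun w => corr r (x - w) * heatK (t - r) w) _ x]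
    simp
  have h2 := Measure.integral_comp_mul_left
    (fun w => corr r (x - w) * heatK (t - r) w) (Real.sqrt (t - r))
  rw [h1]
  have h3 : (fun u => corr r (x - Real.sqrt (t - r) * u) * heatK 1 u)
      = fun u => Real.sqrt (t - r) *
        (corr r (x - Real.sqrt (t - r) * u) * heatK (t - r) (Real.sqrt (t - r) * u)) := by
    funext u
    have := heatK_one_div_sqrt hτ (Real.sqrt (t - r) * u)
    rw [mul_div_cancel_left₀ u hs.ne'] at this
    rw [this]; ring
  rw [h3, integral_const_mul, h2, abs_of_pos (inv_pos.2 hs), smul_eq_mul,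
    mul_inv_cancel_left₀ hs.ne']

lemma tendsto_interpol_end {t : ℝ} (ht : 0 < t) (x : ℝ) :
    Tendsto (interpol t x) (nhdsWithin t (Set.Iio t)) (nhds (corr t x)) := by
  have h : Tendsto (fun r => ∫ u, corr r (x - Real.sqrt (t - r) * u) * heatK 1 u)
      (nhdsWithin t (Set.Iio t)) (nhds (∫ u, corr t x * heatK 1 u)) := by
    refine tendsto_integral_filter_of_dominated_convergence
      (fun u => Real.exp (t / 2) * Real.sqrt t * heatK 1 u) ?_ ?_
      ((integrable_heatK one_pos).const_mul _) ?_
    · refine Eventually.of_forall fun r => Measurable.aestronglyMeasurable ?_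
      exact ((measurable_corr_slice r).comp (by fun_prop)).mul continuous_heatK_one.measurable
    · filter_upwards [Ioo_mem_nhdsLT ht] with r hr
      refine Eventually.of_forall fun u => ?_
      rw [norm_mul, Real.norm_eq_abs, Real.norm_eq_abs, abs_of_nonneg (heatK_nonneg _ _)]
      exact mul_le_mul_of_nonneg_right (abs_corr_le hr.1 hr.2.le _) (heatK_nonneg _ _)
    · refine Eventually.of_forall fun u => Tendsto.mul_const _ ?_
      have hc : ContinuousAt (fun q : ℝ × ℝ => corr q.1 q.2) (t, x) :=
        continuousOn_corr.continuousAt ((isOpen_lt continuous_const continuous_fst).mem_nhds ht)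
      have hp : Tendsto (fun r : ℝ => (r, x - Real.sqrt (t - r) * u)) (nhds t) (nhds (t, x)) := by
        have : Continuous (fun r : ℝ => (r, x - Real.sqrt (t - r) * u)) := by fun_prop
        simpa using this.tendsto t
      exact (hc.tendsto.comp hp).mono_left nhdsWithin_le_nhds
  rw [integral_const_mul, integral_heatK one_pos, mul_one] at h
  refine h.congr' ?_
  filter_upwards [self_mem_nhdsWithin] with r hr
  exact (interpol_eq hr x).symm

lemma integrableOn_inv_sqrt (t : ℝ) : IntegrableOn (fun r => (Real.sqrt r)⁻¹) (Set.Ioo 0 t) := by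
  rcases le_or_gt t 0 with ht | ht
  · simp [Set.Ioo_eq_empty_of_le ht]
  have h := (intervalIntegral.intervalIntegrable_rpow' (a := 0) (b := t) (r := -(1 / 2))
    (by norm_num))
  rw [intervalIntegrable_iff_integrableOn_Ioo_of_le ht.le] at h
  refine h.congr_fun (fun r hr => ?_) measurableSet_Ioo
  simp only
  rw [Real.rpow_neg hr.1.le, Real.sqrt_eq_rpow]

lemma integrableOn_solBound (t C : ℝ) :
    IntegrableOn (fun r => (Real.sqrt r)⁻¹ + C) (Set.Ioo 0 t) :=
  (integrableOn_inv_sqrt t).add (by simp [integrableOn_const_iff])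

/-- Duhamel's equation for the closed form: `Z = p + L Z`. -/
lemma duhamel_sol {t : ℝ} (ht : 0 < t) (x : ℝ) : duhamel sol t x = corr t x := by
  have hb : ∀ r z, 0 < r → r < t → |sol r z| ≤ (Real.sqrt r)⁻¹ + Real.exp (t / 2) * Real.sqrt t :=
    fun r z h1 h2 => abs_sol_le h1 h2.le z
  have hint := integrableOn_slice_integral measurable_sol hb (integrableOn_solBound t _) x
  have h := intervalIntegral.integral_eq_sub_of_hasDerivAt_of_tendsto ht
    (fun r hr => hasDerivAt_interpol hr.1 hr.2 x)
    ((intervalIntegrable_iff_integrableOn_Ioo_of_le ht.le).2 hint)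
    (tendsto_interpol_zero ht x) (tendsto_interpol_end ht x)
  rw [sub_zero, intervalIntegral.integral_of_le ht.le, integral_Ioc_eq_integral_Ioo] at h
  exact h

/-! ### Summation of the Duhamel series -/

/-- The terms of the Duhamel series for `Z(ρ*)`. -/
noncomputable def seriesTerm (n : ℕ) (t y : ℝ) : ℝ := kernelTerm (fun _ z => sech z ^ 2) 0 0 n t y

lemma seriesTerm_zero (t y : ℝ) : seriesTerm 0 t y = heatK t y := by
  simp [seriesTerm, kernelTerm, heatK_neg]

lemma seriesTerm_succ (n : ℕ) (t y : ℝ) : seriesTerm (n + 1) t y = duhamel (seriesTerm n) t y := rfl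

/-- The remainders `Lⁿ (Z - p)` of the Duhamel series. -/
noncomputable def seriesRem : ℕ → ℝ → ℝ → ℝ
  | 0 => corr
  | n + 1 => duhamel (seriesRem n)

lemma measurable_seriesTerm (n : ℕ) : Measurable (fun q : ℝ × ℝ => seriesTerm n q.1 q.2) := by
  induction n with
  | zero => simpa only [seriesTerm_zero] using measurable_heatK
  | succ n ih => exact measurable_duhamel ih

lemma measurable_seriesRem (n : ℕ) : Measurable (fun q : ℝ × ℝ => seriesRem n q.1 q.2) := by
  induction n with
  | zero => exact measurable_corr
  | succ n ih => exact measurable_duhamel ih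

lemma seriesTerm_nonneg (n : ℕ) (t y : ℝ) : 0 ≤ seriesTerm n t y := by
  induction n generalizing t y with
  | zero => rw [seriesTerm_zero]; exact heatK_nonneg _ _
  | succ n ih => exact duhamel_nonneg (fun r z _ _ => ih r z) y

lemma integrableOn_pow (C t : ℝ) (n : ℕ) :
    IntegrableOn (fun r : ℝ => C * (r ^ n / n.factorial)) (Set.Ioo 0 t) :=
  (Continuous.integrableOn_Icc (by fun_prop)).mono_set Set.Ioo_subset_Icc_self

lemma abs_seriesRem_le {T : ℝ} (n : ℕ) {t : ℝ} (ht : 0 < t) (htT : t ≤ T) (y : ℝ) :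
    |seriesRem n t y| ≤ Real.exp (T / 2) * Real.sqrt T * (t ^ n / n.factorial) := by
  induction n generalizing t y with
  | zero => simpa [seriesRem] using abs_corr_le ht htT y
  | succ n ih =>
    refine (abs_duhamel_le (fun r z h1 h2 => ih h1 (h2.le.trans htT) z)
      (integrableOn_pow _ t n) y).trans (le_of_eq ?_)
    rw [← integral_Ioc_eq_integral_Ioo, ← intervalIntegral.integral_of_le ht.le,
      intervalIntegral.integral_const_mul, intervalIntegral.integral_div, integral_pow,
      Nat.factorial_succ]
    rw [zero_pow n.succ_ne_zero, sub_zero]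
    push_cast
    have : (n.factorial : ℝ) ≠ 0 := by positivity
    field_simp

/-- `Lⁿ` applied to `corr = L p + L corr`. -/
lemma seriesRem_eq (n : ℕ) {t : ℝ} (ht : 0 < t) (y : ℝ) :
    seriesRem n t y = seriesTerm (n + 1) t y + seriesRem (n + 1) t y := by
  induction n generalizing t y with
  | zero =>
    have h := duhamel_add (measurable_seriesTerm 0)
      (fun r z (h1 : 0 < r) (h2 : r < t) => by
        rw [seriesTerm_zero, abs_of_nonneg (heatK_nonneg _ _)]; exact heatK_le h1 z)
      (integrableOn_inv_sqrt t) measurable_corr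
      (fun r z h1 h2 => abs_seriesRem_le 0 h1 h2.le z) (integrableOn_pow _ t 0) y
    simp only [seriesTerm_zero] at h
    exact (duhamel_sol ht y).symm.trans h
  | succ n ih =>
    set C := Real.exp (t / 2) * Real.sqrt t
    have hb : ∀ m : ℕ, ∀ r z, 0 < r → r < t → |seriesRem m r z| ≤ C * (r ^ m / m.factorial) :=
      fun m r z h1 h2 => abs_seriesRem_le m h1 h2.le z
    have hb' : ∀ r z, 0 < r → r < t → |seriesTerm (n + 1) r z| ≤
        C * (r ^ n / n.factorial) + C * (r ^ (n + 1) / (n + 1).factorial) := fun r z h1 h2 => by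
      rw [eq_sub_of_add_eq (ih h1 z).symm]
      exact (abs_sub _ _).trans (add_le_add (hb n r z h1 h2) (hb (n + 1) r z h1 h2))
    have h := duhamel_add (measurable_seriesTerm (n + 1)) hb'
      ((integrableOn_pow _ t n).add (integrableOn_pow _ t (n + 1)))
      (measurable_seriesRem (n + 1)) (hb (n + 1)) (integrableOn_pow _ t (n + 1)) y
    exact (duhamel_congr (fun r z h1 _ => ih h1 z) y).trans h

/-- The Duhamel series sums to the closed form. -/
lemma Zsol_eq_s18 {t : ℝ} (ht : 0 < t) (y : ℝ) :
    Zsol (fun _ z => sech z ^ 2) t y = sol t y := by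
  have hsum : ∀ n, ∑ k ∈ Finset.range (n + 1), seriesTerm k t y = sol t y - seriesRem n t y := by
    intro n
    induction n with
    | zero => simp [seriesTerm_zero, sol, seriesRem]
    | succ n ih => rw [Finset.sum_range_succ, ih, seriesRem_eq n ht y]; ring
  have hrem : Tendsto (fun n => seriesRem n t y) atTop (nhds 0) := by
    refine squeeze_zero_norm (fun n => abs_seriesRem_le n ht le_rfl y) ?_
    simpa using (FloorSemiring.tendsto_pow_div_factorial_atTop t).const_mul
      (Real.exp (t / 2) * Real.sqrt t)
  have h : HasSum (fun n => seriesTerm n t y) (sol t y) := by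
    rw [hasSum_iff_tendsto_nat_of_nonneg (fun n => seriesTerm_nonneg n t y),
      ← tendsto_add_atTop_iff_nat 1]
    simp only [hsum]
    simpa using hrem.const_sub (sol t y)
  exact h.tsum_eq

/-! ### Comparison with the limit shape -/

lemma hstar_smul {l : ℝ} (hl : 0 < l) (t x : ℝ) : hstar (l * t) (l * x) = l * hstar t x := by
  have h : |l * x| ≤ l * t ↔ |x| ≤ t := by
    rw [abs_mul, abs_of_pos hl, mul_le_mul_iff_right₀ hl]
  unfold hstar
  simp only [h]
  split_ifs
  · rw [abs_mul, abs_of_pos hl]; ring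
  · rcases eq_or_ne t 0 with rfl | ht
    · simp
    · field_simp

/-- Completing the square inside the cone. -/
lemma neg_sq_div_le_hstar {r : ℝ} (hr : 0 < r) (z : ℝ) : -(z ^ 2) / (2 * r) ≤ hstar r z := by
  unfold hstar
  split_ifs
  · rw [div_le_iff₀ (by positivity)]
    nlinarith [sq_nonneg (|z| - r), sq_abs z]
  · exact le_rfl

lemma sech_le_exp (z : ℝ) : sech z ≤ 2 * Real.exp (-|z|) := by
  rw [Real.exp_neg, ← div_eq_mul_inv, sech]
  have h1 := Real.exp_pos z
  have h2 := Real.exp_pos (-z)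
  gcongr
  rcases abs_cases z with ⟨h, _⟩ | ⟨h, _⟩ <;> rw [h] <;> linarith

lemma exp_le_sech (z : ℝ) : Real.exp (-|z|) ≤ sech z := by
  rw [Real.exp_neg, sech_eq]
  have := Real.cosh_pos z
  gcongr
  rw [Real.cosh_eq]
  have h1 : Real.exp z ≤ Real.exp |z| := Real.exp_le_exp.2 (le_abs_self z)
  have h2 : Real.exp (-z) ≤ Real.exp |z| := Real.exp_le_exp.2 (neg_le_abs z)
  linarith

/-- Outside the cone every point of `[z - r, z + r]` has modulus at least `|z| - r`. -/
lemma gaussMass_le_of_le {r z : ℝ} (hr : 0 < r) (hz : r ≤ |z|) :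
    gaussMass r z ≤ 2 * Real.sqrt r * Real.exp (-((|z| - r) ^ 2 / (2 * r))) := by
  have hs : 0 < Real.sqrt r := Real.sqrt_pos.2 hr
  have hab : (z - r) / Real.sqrt r ≤ (z + r) / Real.sqrt r := by gcongr; linarith
  have hss := Real.mul_self_sqrt hr.le
  rw [gaussMass, gaussPrim_sub]
  calc _ ≤ ∫ u in ((z - r) / Real.sqrt r)..((z + r) / Real.sqrt r),
          Real.exp (-((|z| - r) ^ 2 / (2 * r))) := by
        refine intervalIntegral.integral_mono_on hab (continuous_heatK_one.intervalIntegrable _ _)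
          (continuous_const.intervalIntegrable _ _) fun u hu => ?_
        have h1 := hu.1
        have h2 := hu.2
        rw [div_le_iff₀ hs] at h1
        rw [le_div_iff₀ hs] at h2
        have key : (|z| - r) ^ 2 ≤ r * u ^ 2 := by
          have e : r * u ^ 2 = (u * Real.sqrt r) ^ 2 := by rw [mul_pow, Real.sq_sqrt hr.le]; ring
          rw [e]
          rcases abs_cases z with ⟨h, _⟩ | ⟨h, _⟩ <;> rw [h] at hz ⊢ <;> nlinarith
        have h3 := heatK_le_gauss one_pos le_rfl (le_refl 1) u
        rw [Real.sqrt_one, inv_one, one_mul] at h3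
        refine h3.trans (Real.exp_le_exp.2 ?_)
        have : (|z| - r) ^ 2 / (2 * r) ≤ u ^ 2 / 2 := by
          rw [div_le_div_iff₀ (by positivity) two_pos]; nlinarith
        linarith
    _ = _ := by
        rw [intervalIntegral.integral_const, smul_eq_mul]
        have : (z + r) / Real.sqrt r - (z - r) / Real.sqrt r = 2 * Real.sqrt r := by
          field_simp
          nlinarith
        rw [this]

lemma corr_le_exp_hstar {r : ℝ} (hr : 0 < r) (z : ℝ) :
    corr r z ≤ 2 * Real.sqrt r * Real.exp (hstar r z) := by
  have h0 := gaussMass_nonneg hr z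
  have hsech := sech_le_exp z
  have hs0 := (sech_pos z).le
  by_cases hz : |z| ≤ r
  · rw [hstar, if_pos hz, corr, Real.exp_add]
    have : sech z * (Real.exp (r / 2) * gaussMass r z)
        ≤ (2 * Real.exp (-|z|)) * (Real.exp (r / 2) * (2 * Real.sqrt r)) := by
      have := gaussMass_le hr z
      gcongr
    linarith
  · rw [hstar, if_neg hz, corr]
    have : sech z * (Real.exp (r / 2) * gaussMass r z)
        ≤ (2 * Real.exp (-|z|)) * (Real.exp (r / 2) *
          (2 * Real.sqrt r * Real.exp (-((|z| - r) ^ 2 / (2 * r))))) := by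
      have := gaussMass_le_of_le hr (not_le.1 hz).le
      gcongr
    have e : Real.exp (-(z ^ 2) / (2 * r))
        = Real.exp (-|z|) * (Real.exp (r / 2) * Real.exp (-((|z| - r) ^ 2 / (2 * r)))) := by
      rw [← Real.exp_add, ← Real.exp_add, ← sq_abs z]
      congr 1
      field_simp
      ring
    rw [e]
    linarith

lemma sol_le_exp_hstar {r : ℝ} (hr : 0 < r) (z : ℝ) :
    sol r z ≤ ((Real.sqrt r)⁻¹ + 2 * Real.sqrt r) * Real.exp (hstar r z) := by
  have hs : 0 < Real.sqrt r := Real.sqrt_pos.2 hr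
  have h1 : heatK r z ≤ (Real.sqrt r)⁻¹ * Real.exp (hstar r z) := by
    refine (heatK_le_gauss hr le_rfl le_rfl z).trans ?_
    gcongr
    refine le_trans (le_of_eq ?_) (neg_sq_div_le_hstar hr z)
    ring
  rw [sol, add_mul]
  exact add_le_add h1 (corr_le_exp_hstar hr z)

/-- Inside the cone, and for `r ≥ 1`, the rescaled interval contains `[0, 1]` or `[-1, 0]`. -/
lemma le_gaussMass {r z : ℝ} (hr : 1 ≤ r) (hz : |z| ≤ r) : heatK 1 1 ≤ gaussMass r z := by
  have hr0 : 0 < r := one_pos.trans_le hr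
  have hs : 0 < Real.sqrt r := Real.sqrt_pos.2 hr0
  have hs1 : 1 ≤ Real.sqrt r := Real.one_le_sqrt.2 hr
  have hss := Real.mul_self_sqrt hr0.le
  obtain ⟨hz1, hz2⟩ := abs_le.1 hz
  have hmin : ∀ u : ℝ, |u| ≤ 1 → heatK 1 1 ≤ heatK 1 u := fun u hu => by
    have h : u ^ 2 ≤ 1 ^ 2 := by simpa using hu
    unfold heatK
    gcongr
  have hint : ∀ a b : ℝ, IntervalIntegrable (heatK 1) volume a b :=
    fun a b => continuous_heatK_one.intervalIntegrable _ _
  have hunit : ∀ a b : ℝ, b - a = 1 → -1 ≤ a → b ≤ 1 →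
      (z - r) / Real.sqrt r ≤ a → b ≤ (z + r) / Real.sqrt r → heatK 1 1 ≤ gaussMass r z := by
    intro a b h1 h2 h3 h4 h5
    rw [gaussMass, gaussPrim_sub]
    calc heatK 1 1 = ∫ u in a..b, heatK 1 1 := by
          rw [intervalIntegral.integral_const, h1, one_smul]
      _ ≤ ∫ u in a..b, heatK 1 u :=
          intervalIntegral.integral_mono_on (by linarith)
            (continuous_const.intervalIntegrable _ _) (hint a b)
            fun u hu => hmin u (abs_le.2 ⟨by linarith [hu.1], by linarith [hu.2]⟩)
      _ ≤ _ := intervalIntegral.integral_mono_interval h4 (by linarith) h5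
          (Eventually.of_forall fun u => heatK_nonneg 1 u) (hint _ _)
  rcases le_total 0 z with h | h
  · refine hunit 0 1 (by norm_num) (by norm_num) le_rfl ?_ ?_
    · rw [div_le_iff₀ hs]; linarith
    · rw [le_div_iff₀ hs]; nlinarith
  · refine hunit (-1) 0 (by norm_num) le_rfl (by norm_num) ?_ ?_
    · rw [div_le_iff₀ hs]; nlinarith
    · rw [le_div_iff₀ hs]; linarith

lemma exp_hstar_le_corr {r z : ℝ} (hr : 1 ≤ r) (hz : |z| ≤ r) :
    heatK 1 1 / 2 * Real.exp (hstar r z) ≤ corr r z := by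
  have h1 := le_gaussMass hr hz
  have h2 := exp_le_sech z
  have h3 := heatK_nonneg 1 1
  rw [hstar, if_pos hz, corr, Real.exp_add]
  have : Real.exp (-|z|) * (Real.exp (r / 2) * heatK 1 1)
      ≤ sech z * (Real.exp (r / 2) * gaussMass r z) := by
    have := (sech_pos z).le
    gcongr
  linarith

lemma sqrt_mul_sol_le {δ l t : ℝ} (hδ : 0 < δ) (hl : 0 < l) (h1 : δ ≤ t) (h2 : t ≤ 2) (x : ℝ) :
    Real.sqrt l * sol (l * t) (l * x)
      ≤ (4 * l + (Real.sqrt δ)⁻¹) * Real.exp (l * hstar t x) := by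
  have ht : 0 < t := hδ.trans_le h1
  have hsl : 0 < Real.sqrt l := Real.sqrt_pos.2 hl
  have hst : 0 < Real.sqrt t := Real.sqrt_pos.2 ht
  have hsδ : 0 < Real.sqrt δ := Real.sqrt_pos.2 hδ
  have h := sol_le_exp_hstar (mul_pos hl ht) (l * x)
  rw [hstar_smul hl, Real.sqrt_mul hl.le] at h
  have e : Real.sqrt l * ((Real.sqrt l * Real.sqrt t)⁻¹ + 2 * (Real.sqrt l * Real.sqrt t))
      = 2 * l * Real.sqrt t + (Real.sqrt t)⁻¹ := by
    have := Real.mul_self_sqrt hl.le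
    have e1 : Real.sqrt l * (Real.sqrt l * Real.sqrt t)⁻¹ = (Real.sqrt t)⁻¹ := by field_simp
    rw [mul_add, e1]
    linear_combination 2 * Real.sqrt t * this
  have ht2 : Real.sqrt t ≤ 2 := Real.sqrt_le_iff.2 ⟨by norm_num, by linarith⟩
  have hle : (Real.sqrt t)⁻¹ ≤ (Real.sqrt δ)⁻¹ := by gcongr
  calc _ ≤ Real.sqrt l * (((Real.sqrt l * Real.sqrt t)⁻¹ + 2 * (Real.sqrt l * Real.sqrt t))
          * Real.exp (l * hstar t x)) := by gcongr
    _ = (2 * l * Real.sqrt t + (Real.sqrt t)⁻¹) * Real.exp (l * hstar t x) := by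
        rw [← mul_assoc, e]
    _ ≤ _ := by
        have : 2 * l * Real.sqrt t ≤ 2 * l * 2 := by gcongr
        exact mul_le_mul_of_nonneg_right (by linarith) (Real.exp_pos _).le

lemma le_sqrt_mul_sol {l t : ℝ} (hl : 1 ≤ l) (ht : 0 < t) (hlt : 1 ≤ l * t) (h2 : t ≤ 2)
    (x : ℝ) :
    min (1 / 4) (heatK 1 1 / 2) * Real.exp (l * hstar t x)
      ≤ Real.sqrt l * sol (l * t) (l * x) := by
  have hl0 : 0 < l := one_pos.trans_le hl
  have hsl : 1 ≤ Real.sqrt l := Real.one_le_sqrt.2 hl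
  have hr : 0 < l * t := by linarith
  rw [← hstar_smul hl0]
  by_cases hz : |l * x| ≤ l * t
  · have h := exp_hstar_le_corr hlt hz
    have h3 := heatK_nonneg (l * t) (l * x)
    have h4 := corr_nonneg hr (l * x)
    calc _ ≤ heatK 1 1 / 2 * Real.exp (hstar (l * t) (l * x)) := by
          gcongr; exact min_le_right _ _
      _ ≤ sol (l * t) (l * x) := by unfold sol; linarith
      _ ≤ _ := le_mul_of_one_le_left (add_nonneg h3 h4) hsl
  · have h4 := corr_nonneg hr (l * x)
    have hpi := Real.pi_pos
    have e : Real.sqrt l * heatK (l * t) (l * x)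
        = (Real.sqrt (2 * Real.pi * t))⁻¹ * Real.exp (hstar (l * t) (l * x)) := by
      rw [hstar, if_neg hz, heatK, show 2 * Real.pi * (l * t) = l * (2 * Real.pi * t) by ring,
        Real.sqrt_mul hl0.le]
      have : Real.sqrt (2 * Real.pi * t) ≠ 0 := by positivity
      field_simp
    have h5 : Real.sqrt (2 * Real.pi * t) ≤ 4 :=
      Real.sqrt_le_iff.2 ⟨by norm_num, by nlinarith [Real.pi_lt_four]⟩
    have h6 : 1 / 4 ≤ (Real.sqrt (2 * Real.pi * t))⁻¹ := by
      rw [← one_div]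
      have : 0 < Real.sqrt (2 * Real.pi * t) := by positivity
      gcongr
    calc _ ≤ (Real.sqrt (2 * Real.pi * t))⁻¹ * Real.exp (hstar (l * t) (l * x)) := by
          gcongr; exact (min_le_left _ _).trans h6
      _ = Real.sqrt l * heatK (l * t) (l * x) := e.symm
      _ ≤ _ := by
        unfold sol
        gcongr
        linarith

/-- With `ρ*(t,x) = sech² x`, the scaled log of `Z(ρ*)` converges uniformly on
`[δ,2] × [−δ⁻¹, δ⁻¹]` to the limit shape `h*`. -/
theorem limit_shape_of_sech_potential (δ : ℝ) (hδ : δ ∈ Set.Ioo (0 : ℝ) 1) :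
    ∀ ζ > (0 : ℝ), ∃ M : ℝ, ∀ l > M, ∀ t x : ℝ,
      t ∈ Set.Icc δ 2 → |x| ≤ δ⁻¹ →
      |l⁻¹ * Real.log (Real.sqrt l * Zsol (fun _ z => sech z ^ 2) (l * t) (l * x)) -
          hstar t x| < ζ := by
  obtain ⟨hδ0, -⟩ := hδ
  intro ζ hζ
  set A : ℝ := (Real.sqrt δ)⁻¹
  set m : ℝ := min (1 / 4) (heatK 1 1 / 2)
  have hA : 0 ≤ A := by positivity
  have hm : 0 < m := lt_min (by norm_num) (half_pos (heatK_pos one_pos 1))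
  have hlim : Tendsto (fun l : ℝ => |Real.log m| / l + |Real.log (4 * l + A) / l|) atTop
      (nhds 0) := by
    have h1 := Real.tendsto_pow_log_div_mul_add_atTop (1 / 4) (-(A / 4)) 1 (by norm_num)
    have h2 : Tendsto (fun l : ℝ => 4 * l + A) atTop atTop :=
      tendsto_atTop_add_const_right _ _ (tendsto_id.const_mul_atTop (by norm_num))
    have h3 : Tendsto (fun l : ℝ => Real.log (4 * l + A) / l) atTop (nhds 0) := by
      refine (h1.comp h2).congr fun l => ?_
      simp only [Function.comp, pow_one]
      congr 1
      ring
    simpa using (tendsto_const_nhds.div_atTop tendsto_id).add h3.abs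
  obtain ⟨M, hM⟩ := eventually_atTop.1 ((hlim.eventually_lt_const hζ).and
    ((eventually_ge_atTop 1).and (eventually_ge_atTop δ⁻¹)))
  refine ⟨M, fun l hl t x ht _ => ?_⟩
  obtain ⟨hbound, hl1, hlδ⟩ := hM l hl.le
  have hl0 : 0 < l := one_pos.trans_le hl1
  have ht0 : 0 < t := hδ0.trans_le ht.1
  have hlt : 1 ≤ l * t := by
    calc (1 : ℝ) = δ⁻¹ * δ := (inv_mul_cancel₀ hδ0.ne').symm
      _ ≤ l * t := mul_le_mul hlδ ht.1 hδ0.le hl0.le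
  rw [Zsol_eq_s18 (mul_pos hl0 ht0)]
  have hup := sqrt_mul_sol_le hδ0 hl0 ht.1 ht.2 x
  have hlo := le_sqrt_mul_sol hl1 ht0 hlt ht.2 x
  set Y := Real.sqrt l * sol (l * t) (l * x)
  have hE := Real.exp_pos (l * hstar t x)
  have hY : 0 < Y := (mul_pos hm hE).trans_le hlo
  have hup' := Real.log_le_log hY hup
  have hlo' := Real.log_le_log (mul_pos hm hE) hlo
  rw [Real.log_mul (by positivity) hE.ne', Real.log_exp] at hup'
  rw [Real.log_mul hm.ne' hE.ne', Real.log_exp] at hlo'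
  have e : l⁻¹ * Real.log Y - hstar t x = (Real.log Y - l * hstar t x) / l := by
    field_simp
  refine lt_of_le_of_lt ?_ hbound
  rw [e, abs_div, abs_div, abs_of_pos hl0, ← add_div]
  gcongr
  rw [abs_le]
  constructor
  · linarith [neg_abs_le (Real.log m), abs_nonneg (Real.log (4 * l + A))]
  · linarith [le_abs_self (Real.log (4 * l + A)), abs_nonneg (Real.log m)]
end
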